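/- arXiv:1411.4196 — 5 statements merged into one kernel-verified Lean document; each statement's English description precedes it below -/
import Mathlib

section
/- Let n ≥ 2 and let d be a real number. If 𝒜 and ℬ are families of subsets of [n] with |𝒜|·|ℬ| = n^d·2^n, then c(𝒜,ℬ) ≤ 2^{−d/300}·|𝒜|·|ℬ|. -/
open Finset

/-- `crossComp 𝒜 ℬ` is the number of pairs `(A, B) ∈ 𝒜 × ℬ` with `A ⊊ B`. -/
def crossComp {n : ℕ} (𝒜 ℬ : Finset (Finset (Fin n))) : ℕ :=
  ((𝒜 ×ˢ ℬ).filter (fun p => p.1 ⊂ p.2)).card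

lemma pow_two_term (q s : ℝ) (hq : 0 ≤ q) (hq1 : q ≤ 1) (hs : 0 ≤ s) :
    1 + s ^ q ≤ (2:ℝ) ^ (1 - q) * (1 + s) ^ q := by
  have h := (Real.concaveOn_rpow hq hq1).2 (show (1:ℝ) ∈ Set.Ici 0 by simp) (show s ∈ Set.Ici 0 by simpa using hs)
    (show (0:ℝ) ≤ 1/2 by norm_num) (show (0:ℝ) ≤ 1/2 by norm_num) (by norm_num)
  simp only [smul_eq_mul, Real.one_rpow] at h
  have e : (1/2 * 1 + 1/2 * s : ℝ) = (1 + s) / 2 := by ring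
  rw [e, Real.div_rpow (by linarith) (by norm_num)] at h
  rw [Real.rpow_sub (by norm_num), Real.rpow_one]
  have h2 : (0:ℝ) < 2 ^ q := by positivity
  calc 1 + s ^ q = 2 * (1/2 * 1 + 1/2 * s ^ q) := by ring
    _ ≤ 2 * ((1 + s) ^ q / 2 ^ q) := by linarith
    _ = _ := by ring

lemma rpow_lower (δ x : ℝ) (hδ : 0 ≤ δ) (hx : 0 ≤ x) :
    (1 + x) * (1 - δ * x) ≤ (1 + x) ^ (1 - δ) := by
  have h1 : 0 < 1 + x := by linarith
  have h2 : (1 + x) ^ (1 - δ) = (1 + x) * (1 + x) ^ (-δ) := by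
    rw [show (1 - δ) = 1 + -δ by ring, Real.rpow_add h1, Real.rpow_one]
  rw [h2]
  apply mul_le_mul_of_nonneg_left _ h1.le
  rw [Real.rpow_def_of_pos h1]
  have h3 := Real.add_one_le_exp (Real.log (1 + x) * -δ)
  have h4 := Real.log_le_sub_one_of_pos h1
  nlinarith

lemma tangent_bd (δ s : ℝ) (hδ : 0 ≤ δ) (hδ1 : δ ≤ 1) (hs : 0 ≤ s) :
    s ^ (1 - δ) ≤ (16:ℝ) ^ δ * (s + δ / 16) := by
  have h := Real.geom_mean_le_arith_mean2_weighted (w₁ := 1 - δ) (w₂ := δ) (p₁ := s) (p₂ := 1/16)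
    (by linarith) hδ hs (by norm_num) (by ring)
  rw [Real.div_rpow (by norm_num) (by norm_num), Real.one_rpow] at h
  have h16 : (0:ℝ) < 16 ^ δ := by positivity
  calc s ^ (1 - δ) = 16 ^ δ * (s ^ (1 - δ) * (1 / 16 ^ δ)) := by field_simp
    _ ≤ 16 ^ δ * ((1 - δ) * s + δ * (1/16)) := by gcongr
    _ ≤ _ := by
      apply mul_le_mul_of_nonneg_left _ h16.le
      nlinarith

set_option maxHeartbeats 1000000 in
lemma core (δ s t θ η : ℝ) (hδ : 0 < δ) (hδ1 : δ ≤ 1/200) (ht : 0 ≤ t) (hts : t ≤ s)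
    (hη : 0 ≤ η) (h1 : θ ≤ t ^ (1 - δ)) (h2 : θ ≤ 1.05 * t + η) :
    1 + s ^ (1 - δ) + θ ≤ 2 ^ δ * ((1 + s) * (1 + t)) ^ (1 - δ) + η := by
  have hs : 0 ≤ s := ht.trans hts
  have h2δ : 1 + 0.69 * δ ≤ (2:ℝ) ^ δ := by
    rw [Real.rpow_def_of_pos (by norm_num)]
    have := Real.add_one_le_exp (Real.log 2 * δ)
    have := Real.log_two_gt_d9
    nlinarith
  have htwo := pow_two_term (1 - δ) s (by linarith) (by linarith) hs
  rw [show 1 - (1 - δ) = δ by ring] at htwo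
  rcases le_total s (1/16) with hs16 | hs16
  · have h16 : (16:ℝ) ^ δ ≤ 1 + 2.85 * δ := by
      rw [Real.rpow_def_of_pos (by norm_num)]
      have hl : Real.log 16 = 4 * Real.log 2 := by
        rw [show (16:ℝ) = 2 ^ (4:ℕ) by norm_num, Real.log_pow]; norm_num
      have a := Real.log_two_lt_d9
      have a' := Real.log_two_gt_d9
      rw [hl]
      have hx : 4 * Real.log 2 * δ ≤ 2.7726 * δ := by nlinarith
      have b := Real.add_one_le_exp (-(4 * Real.log 2 * δ))
      rw [Real.exp_neg] at b
      have c := Real.exp_pos (4 * Real.log 2 * δ)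
      have d : (1 - 2.7726 * δ) * Real.exp (4 * Real.log 2 * δ) ≤ 1 := by
        have : (1 - 2.7726 * δ) ≤ (Real.exp (4 * Real.log 2 * δ))⁻¹ := by linarith
        calc _ ≤ (Real.exp (4 * Real.log 2 * δ))⁻¹ * Real.exp (4 * Real.log 2 * δ) := by gcongr
          _ = 1 := by field_simp
      have e : 1 ≤ (1 - 2.7726 * δ) * (1 + 2.85 * δ) := by nlinarith
      have f : 0 < 1 - 2.7726 * δ := by linarith
      exact le_of_mul_le_mul_left (d.trans e) f
    have ts := tangent_bd δ s hδ.le (by linarith) hs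
    have tt := tangent_bd δ t hδ.le (by linarith) ht
    have hP := rpow_lower δ (s + t + s * t) hδ.le (by positivity)
    rw [show 1 + (s + t + s * t) = (1 + s) * (1 + t) by ring] at hP
    have hst : s * t ≤ 1/256 := by nlinarith
    have hst0 : 0 ≤ s * t := by positivity
    have hA : (1 + s + t) * (1 - 0.13 * δ) ≤ ((1 + s) * (1 + t)) ^ (1 - δ) := by
      refine le_trans ?_ hP
      apply mul_le_mul
      · nlinarith
      · nlinarith
      · nlinarith
      · positivity
    have hB : (1 + 0.55 * δ) ≤ 2 ^ δ * (1 - 0.13 * δ) := by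
      have : (1 + 0.69 * δ) * (1 - 0.13 * δ) ≤ 2 ^ δ * (1 - 0.13 * δ) := by
        apply mul_le_mul_of_nonneg_right h2δ; linarith
      nlinarith
    have hC : (1 + s + t) * (1 + 0.55 * δ) ≤ 2 ^ δ * ((1 + s) * (1 + t)) ^ (1 - δ) := by
      calc (1 + s + t) * (1 + 0.55 * δ) ≤ (1 + s + t) * (2 ^ δ * (1 - 0.13 * δ)) := by gcongr
        _ = 2 ^ δ * ((1 + s + t) * (1 - 0.13 * δ)) := by ring
        _ ≤ _ := by gcongr
    have hD : (16:ℝ) ^ δ * (s + t + δ / 8) ≤ (1 + 2.85 * δ) * (s + t + δ / 8) := by gcongr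
    have hsd : s * δ ≤ δ / 16 := by nlinarith
    have htd : t * δ ≤ δ / 16 := by nlinarith
    have hs0 : 0 ≤ s * δ := by positivity
    have ht0 : 0 ≤ t * δ := by positivity
    nlinarith
  · have hPm : ((1 + s) * (1 + t)) ^ (1 - δ) = (1 + s) ^ (1 - δ) * (1 + t) ^ (1 - δ) :=
      Real.mul_rpow (by linarith) (by linarith)
    rw [hPm]
    set R := 2 ^ δ * (1 + s) ^ (1 - δ) with hR
    rw [← mul_assoc, ← hR]
    rcases le_total t 1 with ht1 | ht1
    · have hT := rpow_lower δ t hδ.le ht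
      have hT2 : 1 + 0.99 * t ≤ (1 + t) ^ (1 - δ) := by
        have : t * t ≤ t := by nlinarith
        have : t * δ ≤ t / 200 := by nlinarith
        have : t * t * δ ≤ t / 200 := by nlinarith
        nlinarith
      have hR1 : 1.0621 ≤ R := by
        have a := rpow_lower δ (1/16) hδ.le (by norm_num)
        have b : (1 + 1/16 : ℝ) ^ (1 - δ) ≤ (1 + s) ^ (1 - δ) := by
          apply Real.rpow_le_rpow <;> linarith
        have c : (1.0621:ℝ) ≤ (1 + s) ^ (1 - δ) := by nlinarith
        nlinarith
      nlinarith
    · have hT := pow_two_term (1 - δ) t (by linarith) (by linarith) ht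
      rw [show 1 - (1 - δ) = δ by ring] at hT
      have htq : 1 ≤ t ^ (1 - δ) := Real.one_le_rpow ht1 (by linarith)
      have hsq : (2:ℝ) ^ (1 - δ) ≤ (1 + s) ^ (1 - δ) := by
        apply Real.rpow_le_rpow <;> linarith
      have h22 : (2:ℝ) ^ δ * 2 ^ (1 - δ) = 2 := by
        rw [← Real.rpow_add (by norm_num)]; norm_num
      have h2p : (0:ℝ) < 2 ^ δ := by positivity
      have hR2 : 2 ≤ R := by
        rw [← h22, hR]; gcongr
      have hq2 : 1.98 ≤ (2:ℝ) ^ (1 - δ) := by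
        have := rpow_lower δ 1 hδ.le (by norm_num)
        norm_num at this
        linarith
      set T := (1 + t) ^ (1 - δ)
      have hT' : 2 ^ (1 - δ) * (1 + t ^ (1 - δ)) ≤ 2 * T := by
        calc 2 ^ (1 - δ) * (1 + t ^ (1 - δ)) ≤ 2 ^ (1 - δ) * (2 ^ δ * T) := by gcongr
          _ = (2 ^ δ * 2 ^ (1 - δ)) * T := by ring
          _ = _ := by rw [h22]
      have hT3 : 1.98 * (1 + t ^ (1 - δ)) ≤ 2 * T := by nlinarith
      have hT1 : 1 ≤ T := by linarith
      have : 2 * (T - 1) ≤ R * (T - 1) := by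
        apply mul_le_mul_of_nonneg_right hR2; linarith
      linarith

lemma coreU (δ s t W x y z η : ℝ) (hδ : 0 < δ) (hδ1 : δ ≤ 1/200) (ht : 0 ≤ t) (hs : 0 ≤ s)
    (hη : 0 ≤ η) (hW : 0 < W) (hx : x ≤ W)
    (hy : y ≤ W * s ^ (1 - δ)) (hy2 : y ≤ W * (1.05 * s + η))
    (hz : z ≤ W * t ^ (1 - δ)) (hz2 : z ≤ W * (1.05 * t + η)) :
    x + y + z ≤ W * (2 ^ δ * ((1 + s) * (1 + t)) ^ (1 - δ) + η) := by
  rcases le_total t s with h | h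
  · have c := core δ s t (z / W) η hδ hδ1 ht h hη (by rw [div_le_iff₀ hW]; linarith)
      (by rw [div_le_iff₀ hW]; linarith)
    have := mul_le_mul_of_nonneg_left c hW.le
    have e : W * (z / W) = z := by field_simp
    nlinarith
  · have c := core δ t s (y / W) η hδ hδ1 hs h hη (by rw [div_le_iff₀ hW]; linarith)
      (by rw [div_le_iff₀ hW]; linarith)
    rw [mul_comm (1 + t)] at c
    have := mul_le_mul_of_nonneg_left c hW.le
    have e : W * (y / W) = y := by field_simp
    nlinarith

/-- The four-variable form. -/
lemma core4 (δ a0 a1 b0 b1 V c00 c01 c11 η : ℝ) (hδ : 0 < δ) (hδ1 : δ ≤ 1/200)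
    (ha0 : 0 ≤ a0) (ha1 : 0 ≤ a1) (hb0 : 0 ≤ b0) (hb1 : 0 ≤ b1) (hη : 0 ≤ η) (hV : 0 < V)
    (h00 : c00 ≤ V * (a0 * b0) ^ (1 - δ)) (h01 : c01 ≤ V * (a0 * b1) ^ (1 - δ))
    (h11 : c11 ≤ V * (a1 * b1) ^ (1 - δ))
    (h00' : 0 < a0 → 0 < b1 → c00 ≤ V * (a0 * b1) ^ (1 - δ) * (1.05 * (b0 / b1) + η))
    (h11' : 0 < a0 → 0 < b1 → c11 ≤ V * (a0 * b1) ^ (1 - δ) * (1.05 * (a1 / a0) + η)) :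
    c00 + c01 + c11 ≤ V * ((1 + η) * 2 ^ δ * ((a0 + a1) * (b0 + b1)) ^ (1 - δ)) := by
  have hq : 0 < 1 - δ := by linarith
  have h2 : (1:ℝ) ≤ 2 ^ δ := Real.one_le_rpow (by norm_num) hδ.le
  have hz : (0:ℝ) ^ (1 - δ) = 0 := Real.zero_rpow hq.ne'
  have big : ∀ u : ℝ, 0 ≤ u → u ≤ (1 + η) * 2 ^ δ * u := by
    intro u hu
    have : 1 ≤ (1 + η) * 2 ^ δ := by nlinarith
    nlinarith
  rcases ha0.eq_or_lt with h | ha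
  · subst h
    simp only [zero_mul, hz, mul_zero, zero_add] at *
    have m : (a1 * b1) ^ (1 - δ) ≤ (a1 * (b0 + b1)) ^ (1 - δ) := by
      apply Real.rpow_le_rpow (by positivity) _ hq.le
      nlinarith [mul_nonneg ha1 hb0]
    have := big _ (Real.rpow_nonneg (mul_nonneg ha1 (add_nonneg hb0 hb1)) (1 - δ))
    have := mul_le_mul_of_nonneg_left (m.trans this) hV.le
    linarith
  rcases hb1.eq_or_lt with h | hb
  · subst h
    simp only [zero_mul, hz, mul_zero, add_zero] at *
    have m : (a0 * b0) ^ (1 - δ) ≤ ((a0 + a1) * b0) ^ (1 - δ) := by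
      apply Real.rpow_le_rpow (by positivity) _ hq.le
      nlinarith [mul_nonneg ha1 hb0]
    have := big _ (Real.rpow_nonneg (mul_nonneg (add_nonneg ha0 ha1) hb0) (1 - δ))
    have := mul_le_mul_of_nonneg_left (m.trans this) hV.le
    linarith
  have hs : 0 ≤ a1 / a0 := by positivity
  have ht : 0 ≤ b0 / b1 := by positivity
  have key := coreU δ (a1 / a0) (b0 / b1) (V * (a0 * b1) ^ (1 - δ)) c01 c11 c00 η hδ hδ1 ht hs hη
    (by positivity) h01
    (by
      rw [mul_assoc, ← Real.mul_rpow (by positivity) hs]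
      rwa [show a0 * b1 * (a1 / a0) = a1 * b1 by field_simp]) (h11' ha hb)
    (by
      rw [mul_assoc, ← Real.mul_rpow (by positivity) ht]
      rwa [show a0 * b1 * (b0 / b1) = a0 * b0 by field_simp]) (h00' ha hb)
  have e : ((a0 + a1) * (b0 + b1)) ^ (1 - δ)
      = (a0 * b1) ^ (1 - δ) * ((1 + a1 / a0) * (1 + b0 / b1)) ^ (1 - δ) := by
    rw [← Real.mul_rpow (by positivity) (by positivity)]
    congr 1
    field_simp
    ring
  have hP : 1 ≤ ((1 + a1 / a0) * (1 + b0 / b1)) ^ (1 - δ) := by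
    apply Real.one_le_rpow _ hq.le
    nlinarith [mul_nonneg hs ht]
  set P := ((1 + a1 / a0) * (1 + b0 / b1)) ^ (1 - δ)
  have f : 2 ^ δ * P + η ≤ (1 + η) * 2 ^ δ * P := by
    have : 1 ≤ 2 ^ δ * P := by nlinarith
    nlinarith
  rw [e]
  have : V * (a0 * b1) ^ (1 - δ) * (2 ^ δ * P + η) ≤
      V * (a0 * b1) ^ (1 - δ) * ((1 + η) * 2 ^ δ * P) := by gcongr
  calc _ = c01 + c11 + c00 := by ring
    _ ≤ _ := key
    _ ≤ _ := this
    _ = _ := by ring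

section counting
variable {α : Type*} [DecidableEq α]

def csub (A B : Finset (Finset α)) : ℕ :=
  ∑ x ∈ A, ∑ y ∈ B, if x ⊆ y then 1 else 0

lemma csub_le (A B : Finset (Finset α)) : csub A B ≤ A.card * B.card := by
  unfold csub
  calc _ ≤ ∑ x ∈ A, ∑ y ∈ B, 1 := by
        gcongr with x _ y _; split_ifs <;> simp
    _ = _ := by simp

lemma sum_split (a : α) (A : Finset (Finset α)) (f : Finset α → ℕ) :
    ∑ x ∈ A, f x = ∑ x ∈ A.nonMemberSubfamily a, f x
      + ∑ x ∈ A.memberSubfamily a, f (insert a x) := by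
  rw [← Finset.sum_filter_add_sum_filter_not A (fun x => a ∉ x)]
  congr 1
  unfold Finset.memberSubfamily
  rw [Finset.sum_image]
  · apply Finset.sum_congr
    · ext x; simp
    · intro x hx
      rw [Finset.insert_erase]
      simpa using (Finset.mem_filter.1 hx).2
  · intro x hx y hy hxy
    have h1 : a ∈ x := (Finset.mem_filter.1 hx).2
    have h2 : a ∈ y := (Finset.mem_filter.1 hy).2
    rw [← Finset.insert_erase h1, ← Finset.insert_erase h2]
    simp only at hxy
    rw [hxy]

lemma csub_split (a : α) (A B : Finset (Finset α)) :
    csub A B = csub (A.nonMemberSubfamily a) (B.nonMemberSubfamily a)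
      + csub (A.nonMemberSubfamily a) (B.memberSubfamily a)
      + csub (A.memberSubfamily a) (B.memberSubfamily a) := by
  unfold csub
  rw [sum_split a A]
  congr 1
  · rw [← Finset.sum_add_distrib]
    apply Finset.sum_congr rfl
    intro x hx
    rw [sum_split a B]
    congr 1
    apply Finset.sum_congr rfl
    intro y hy
    have : a ∉ x := (Finset.mem_nonMemberSubfamily.1 hx).2
    simp [Finset.subset_insert_iff_of_notMem this]
  · apply Finset.sum_congr rfl
    intro x hx
    have hax : a ∉ x := (Finset.mem_memberSubfamily.1 hx).2
    rw [sum_split a B]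
    have : ∑ y ∈ B.nonMemberSubfamily a, (if insert a x ⊆ y then 1 else 0) = 0 := by
      apply Finset.sum_eq_zero
      intro y hy
      have : a ∉ y := (Finset.mem_nonMemberSubfamily.1 hy).2
      rw [if_neg]
      intro h
      exact this (h (Finset.mem_insert_self _ _))
    rw [this, zero_add]
    apply Finset.sum_congr rfl
    intro y hy
    simp [Finset.insert_subset_insert_iff hax]

lemma sub_non (a : α) (s : Finset α) (A : Finset (Finset α)) (h : A ⊆ (insert a s).powerset) :
    A.nonMemberSubfamily a ⊆ s.powerset := by
  intro x hx
  rw [Finset.mem_nonMemberSubfamily] at hx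
  have := Finset.mem_powerset.1 (h hx.1)
  rw [Finset.mem_powerset]
  exact (Finset.subset_insert_iff_of_notMem hx.2).1 this

lemma sub_memb (a : α) (s : Finset α) (A : Finset (Finset α)) (h : A ⊆ (insert a s).powerset) :
    A.memberSubfamily a ⊆ s.powerset := by
  intro x hx
  rw [Finset.mem_memberSubfamily] at hx
  have := Finset.mem_powerset.1 (h hx.1)
  rw [Finset.mem_powerset]
  exact (Finset.insert_subset_insert_iff hx.2).1 this

lemma card_le_base (A : Finset (Finset α)) (h : A ⊆ (∅ : Finset α).powerset) : A.card ≤ 1 := by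
  simpa using Finset.card_le_card h

lemma triv (A B : Finset (Finset α)) (δ M : ℝ) (hδ : 0 ≤ δ) (hM : 0 < M)
    (h : (A.card : ℝ) * B.card ≤ M) :
    (csub A B : ℝ) ≤ M ^ δ * ((A.card : ℝ) * B.card) ^ (1 - δ) := by
  have h1 : (csub A B : ℝ) ≤ (A.card : ℝ) * B.card := by exact_mod_cast csub_le A B
  refine h1.trans ?_
  set y := (A.card : ℝ) * B.card
  have hy : 0 ≤ y := by positivity
  rcases hy.eq_or_lt with h0 | h0
  · rw [← h0]; positivity
  calc y = y ^ δ * y ^ (1 - δ) := by rw [← Real.rpow_add h0]; simp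
    _ ≤ _ := by gcongr

lemma cards (a : α) (A : Finset (Finset α)) : (A.card : ℝ) =
    (A.nonMemberSubfamily a).card + (A.memberSubfamily a).card := by
  have := Finset.card_memberSubfamily_add_card_nonMemberSubfamily a A
  rw [← this]; push_cast; ring

lemma lossy (δ η : ℝ) (hδ : 0 < δ) (hδ1 : δ ≤ 1/200) (hη : 0 ≤ η)
    (H : ∀ t : ℝ, 0 ≤ t → t ^ (1 - δ) ≤ 1.05 * t + η) (s : Finset α) :
    ∀ A B : Finset (Finset α), A ⊆ s.powerset → B ⊆ s.powerset →
    (csub A B : ℝ) ≤ ((1 + η) ^ s.card * (2 ^ δ) ^ s.card) *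
      ((A.card : ℝ) * B.card) ^ (1 - δ) := by
  induction s using Finset.induction_on with
  | empty =>
    intro A B hA hB
    have h1 := card_le_base A hA
    have h2 := card_le_base B hB
    have := triv A B δ 1 hδ.le one_pos (by exact_mod_cast Nat.mul_le_mul h1 h2)
    simpa using this
  | insert a s ha ih =>
    intro A B hA hB
    rw [csub_split a A B, Finset.card_insert_of_notMem ha, cards a A, cards a B]
    set V := ((1 + η) ^ s.card * ((2:ℝ) ^ δ) ^ s.card) with hV
    have h00 := ih _ _ (sub_non a s A hA) (sub_non a s B hB)
    have h01 := ih _ _ (sub_non a s A hA) (sub_memb a s B hB)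
    have h11 := ih _ _ (sub_memb a s A hA) (sub_memb a s B hB)
    have hVp : 0 < V := by positivity
    clear_value V
    have := core4 δ _ _ _ _ V _ _ _ η hδ hδ1 (Nat.cast_nonneg _) (Nat.cast_nonneg _)
      (Nat.cast_nonneg _) (Nat.cast_nonneg _) hη hVp h00 h01 h11
      (by
        intro p1 p2
        refine h00.trans ?_
        rw [mul_assoc]
        apply mul_le_mul_of_nonneg_left _ hVp.le
        refine le_trans (le_of_eq ?_) (mul_le_mul_of_nonneg_left (H _ (by positivity))
          (by positivity))
        rw [← Real.mul_rpow (by positivity) (by positivity)]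
        congr 1
        field_simp)
      (by
        intro p1 p2
        refine h11.trans ?_
        rw [mul_assoc]
        apply mul_le_mul_of_nonneg_left _ hVp.le
        refine le_trans (le_of_eq ?_) (mul_le_mul_of_nonneg_left (H _ (by positivity))
          (by positivity))
        rw [← Real.mul_rpow (by positivity) (by positivity)]
        congr 1
        field_simp)
    push_cast
    refine this.trans (le_of_eq ?_)
    rw [hV, pow_succ, pow_succ]
    ring

lemma exact_ind (δ X : ℝ) (n : ℕ) (hδ : 0 < δ) (hδ1 : δ ≤ 1/200) (hX : (2 * X) ^ δ ≤ 1.05)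
    (hX0 : 0 < X)
    (H : ∀ (s : Finset α), s.card ≤ n → ∀ A B : Finset (Finset α), A ⊆ s.powerset →
      B ⊆ s.powerset → X * 2 ^ s.card ≤ (A.card : ℝ) * B.card →
      (csub A B : ℝ) ≤ (2 ^ δ) ^ s.card * ((A.card : ℝ) * B.card) ^ (1 - δ)) (s : Finset α) :
    s.card ≤ n → ∀ A B : Finset (Finset α), A ⊆ s.powerset → B ⊆ s.powerset →
    (csub A B : ℝ) ≤ (2 ^ δ) ^ s.card * ((A.card : ℝ) * B.card) ^ (1 - δ) := by
  induction s using Finset.induction_on with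
  | empty =>
    intro _ A B hA hB
    have h1 := card_le_base A hA
    have h2 := card_le_base B hB
    have := triv A B δ 1 hδ.le one_pos (by exact_mod_cast Nat.mul_le_mul h1 h2)
    simpa using this
  | insert a s ha ih =>
    intro hn A B hA hB
    rcases le_total (X * 2 ^ (insert a s).card) ((A.card : ℝ) * B.card) with hbig | hsm
    · exact H _ hn A B hA hB hbig
    have hc := Finset.card_insert_of_notMem ha
    rw [hc] at hn hsm
    have ih' := ih (by omega)
    rw [csub_split a A B, hc]
    rw [cards a A, cards a B] at hsm
    rw [cards a A, cards a B]
    set V := ((2:ℝ) ^ δ) ^ s.card with hV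
    have h00 := ih' _ _ (sub_non a s A hA) (sub_non a s B hB)
    have h01 := ih' _ _ (sub_non a s A hA) (sub_memb a s B hB)
    have h11 := ih' _ _ (sub_memb a s A hA) (sub_memb a s B hB)
    have hVp : 0 < V := by positivity
    have t00 : (csub (A.nonMemberSubfamily a) (B.nonMemberSubfamily a) : ℝ) ≤
      (A.nonMemberSubfamily a).card * (B.nonMemberSubfamily a).card := by exact_mod_cast csub_le _ _
    have t11 : (csub (A.memberSubfamily a) (B.memberSubfamily a) : ℝ) ≤
      (A.memberSubfamily a).card * (B.memberSubfamily a).card := by exact_mod_cast csub_le _ _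
    have hVe : V = ((2:ℝ) ^ s.card) ^ δ := by
      rw [hV, ← Real.rpow_natCast, ← Real.rpow_mul (by norm_num), mul_comm,
        Real.rpow_mul (by norm_num), Real.rpow_natCast]
    set a0 : ℝ := ((A.nonMemberSubfamily a).card : ℝ)
    set a1 : ℝ := ((A.memberSubfamily a).card : ℝ)
    set b0 : ℝ := ((B.nonMemberSubfamily a).card : ℝ)
    set b1 : ℝ := ((B.memberSubfamily a).card : ℝ)
    have ha0 : 0 ≤ a0 := Nat.cast_nonneg _
    have ha1 : 0 ≤ a1 := Nat.cast_nonneg _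
    have hb0 : 0 ≤ b0 := Nat.cast_nonneg _
    have hb1 : 0 ≤ b1 := Nat.cast_nonneg _
    have hm : 0 < a0 → 0 < b1 → a0 * b1 ≤ V * (a0 * b1) ^ (1 - δ) * 1.05 := by
      intro p1 p2
      have hp : 0 < a0 * b1 := mul_pos p1 p2
      have l1 : a0 * b1 ≤ 2 ^ s.card * (2 * X) := by
        rw [pow_succ] at hsm
        nlinarith [mul_nonneg ha0 hb0, mul_nonneg ha1 hb0, mul_nonneg ha1 hb1]
      have l2 : (a0 * b1) ^ δ ≤ V * 1.05 := by
        calc (a0 * b1) ^ δ ≤ (2 ^ s.card * (2 * X)) ^ δ := by gcongr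
          _ = V * (2 * X) ^ δ := by rw [Real.mul_rpow (by positivity) (by positivity), hVe]
          _ ≤ _ := by gcongr
      calc a0 * b1 = (a0 * b1) ^ δ * (a0 * b1) ^ (1 - δ) := by rw [← Real.rpow_add hp]; simp
        _ ≤ (V * 1.05) * (a0 * b1) ^ (1 - δ) := by gcongr
        _ = _ := by ring
    have := core4 δ a0 a1 b0 b1 V _ _ _ 0 hδ hδ1 ha0 ha1 hb0 hb1 le_rfl hVp h00 h01 h11
      (by
        intro p1 p2
        refine t00.trans ?_
        have := mul_le_mul_of_nonneg_right (hm p1 p2) (show 0 ≤ b0 / b1 by positivity)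
        rw [show a0 * b1 * (b0 / b1) = a0 * b0 by field_simp] at this
        linarith)
      (by
        intro p1 p2
        refine t11.trans ?_
        have := mul_le_mul_of_nonneg_right (hm p1 p2) (show 0 ≤ a1 / a0 by positivity)
        rw [show a0 * b1 * (a1 / a0) = a1 * b1 by field_simp] at this
        linarith)
    push_cast
    refine this.trans (le_of_eq ?_)
    rw [hV, pow_succ]
    ring

end counting

lemma eta_bd (n : ℕ) (hn : 2 ≤ n) (δ : ℝ) (hδ : 0 < δ) (hδ1 : δ ≤ 1/200)
    (hδn : (n:ℝ) ^ δ = 2 ^ (1/200 : ℝ)) (t : ℝ) (ht : 0 ≤ t) :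
    t ^ (1 - δ) ≤ 1.05 * t + ((n:ℝ) ^ 12)⁻¹ := by
  have hn2 : (2:ℝ) ≤ n := by exact_mod_cast hn
  have hn0 : (0:ℝ) < n := by linarith
  rcases le_total t (((n:ℝ) ^ 14)⁻¹) with h | h
  · have h1 : t ^ (1 - δ) ≤ (((n:ℝ) ^ 14)⁻¹) ^ (1 - δ) := by
      apply Real.rpow_le_rpow ht h; linarith
    have h2 : (((n:ℝ) ^ 14)⁻¹) ^ (1 - δ) ≤ ((n:ℝ) ^ 12)⁻¹ := by
      rw [Real.inv_rpow (by positivity)]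
      apply inv_anti₀ (by positivity)
      rw [← Real.rpow_natCast, ← Real.rpow_natCast, ← Real.rpow_mul hn0.le]
      apply Real.rpow_le_rpow_of_exponent_le (by linarith)
      push_cast
      linarith
    linarith
  · have hinv : (0:ℝ) < ((n:ℝ) ^ 14)⁻¹ := by positivity
    have ht0 : 0 < t := hinv.trans_le h
    have h3 : t ^ (-δ) ≤ 1.05 := by
      calc t ^ (-δ) ≤ (((n:ℝ) ^ 14)⁻¹) ^ (-δ) :=
            Real.rpow_le_rpow_of_nonpos hinv h (by linarith)
        _ = ((n:ℝ) ^ δ) ^ 14 := by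
            rw [Real.rpow_neg hinv.le, Real.inv_rpow (by positivity), inv_inv,
              ← Real.rpow_natCast, ← Real.rpow_natCast, ← Real.rpow_mul hn0.le,
              ← Real.rpow_mul hn0.le, mul_comm]
        _ = 2 ^ (14/200 : ℝ) := by
            rw [hδn, ← Real.rpow_natCast, ← Real.rpow_mul (by norm_num)]; norm_num
        _ ≤ 1.05 := by
            rw [show (14/200 : ℝ) = ((14 : ℕ):ℝ) * (200:ℝ)⁻¹ by norm_num,
              Real.rpow_mul (by norm_num), Real.rpow_natCast]
            rw [Real.rpow_inv_le_iff_of_pos (by norm_num) (by norm_num) (by norm_num)]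
            rw [show (200:ℝ) = ((200:ℕ):ℝ) by norm_num, Real.rpow_natCast]
            norm_num
    have h4 : t ^ (1 - δ) = t * t ^ (-δ) := by
      rw [show 1 - δ = 1 + -δ by ring, Real.rpow_add ht0, Real.rpow_one]
    rw [h4]
    nlinarith [inv_pos.2 (pow_pos hn0 12)]

lemma crossComp_le_csub {n : ℕ} (A B : Finset (Finset (Fin n))) : crossComp A B ≤ csub A B := by
  unfold crossComp csub
  rw [Finset.card_filter, Finset.sum_product]
  gcongr with x _ y _
  by_cases h : x ⊂ y
  · simp [h, h.subset]
  · simp [h]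

lemma large_case (n k : ℕ) (hn : 2 ≤ n) (hk : k ≤ n) (δ : ℝ) (hδ : 0 < δ)
    (hδn : (n:ℝ) ^ δ = 2 ^ (1/300 : ℝ)) (y c : ℝ) (hy : (n:ℝ) * 2 ^ k ≤ y)
    (hc : c ≤ ((1 + ((n:ℝ) ^ 12)⁻¹) ^ k * (2 ^ (3/2 * δ)) ^ k) * y ^ (1 - 3/2 * δ)) :
    c ≤ (2 ^ δ) ^ k * y ^ (1 - δ) := by
  refine hc.trans ?_
  have hn2 : (2:ℝ) ≤ n := by exact_mod_cast hn
  have hn0 : (0:ℝ) < n := by linarith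
  have hy0 : 0 < y := lt_of_lt_of_le (by positivity) hy
  set η := ((n:ℝ) ^ 12)⁻¹ with hη
  have hη0 : 0 < η := by positivity
  have e1 : (2 ^ (3/2 * δ) : ℝ) = 2 ^ δ * 2 ^ (δ / 2) := by
    rw [← Real.rpow_add (by norm_num)]; congr 1; ring
  have e2 : y ^ (1 - δ) = y ^ (1 - 3/2 * δ) * y ^ (δ / 2) := by
    rw [← Real.rpow_add hy0]; congr 1; ring
  have e3 : ((2:ℝ) ^ (δ/2)) ^ k = ((2:ℝ) ^ k) ^ (δ/2) := by
    rw [← Real.rpow_natCast, ← Real.rpow_mul (by norm_num), mul_comm,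
        Real.rpow_mul (by norm_num), Real.rpow_natCast]
  have e4 : (n:ℝ) ^ (δ/2) = 2 ^ (1/600 : ℝ) := by
    rw [show δ / 2 = δ * (1/2) by ring, Real.rpow_mul hn0.le, hδn, ← Real.rpow_mul (by norm_num)]
    norm_num
  have hK : (1 + η) ^ k ≤ 2 ^ (1/600 : ℝ) := by
    have h1 : (1 + η) ^ k ≤ (1 + η) ^ n := pow_le_pow_right₀ (by linarith) hk
    have h2 : (1 + η) ^ n ≤ Real.exp η ^ n := by
      gcongr
      linarith [Real.add_one_le_exp η]
    rw [← Real.exp_nat_mul] at h2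
    have h3 : n * η ≤ 1/2048 := by
      have : (n:ℝ) * η = ((n:ℝ) ^ 11)⁻¹ := by rw [hη]; field_simp
      rw [this, one_div]
      apply inv_anti₀ (by norm_num)
      calc (2048:ℝ) = 2 ^ 11 := by norm_num
        _ ≤ _ := by gcongr
    refine h1.trans (h2.trans ?_)
    rw [Real.rpow_def_of_pos (by norm_num)]
    apply Real.exp_le_exp.2
    have := Real.log_two_gt_d9
    linarith
  have hmain : (1 + η) ^ k * (2 ^ (δ / 2)) ^ k ≤ y ^ (δ / 2) := by
    calc (1 + η) ^ k * (2 ^ (δ / 2)) ^ k ≤ (n:ℝ) ^ (δ/2) * ((2:ℝ) ^ k) ^ (δ/2) := by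
          rw [e3, e4]; gcongr
      _ = (n * 2 ^ k) ^ (δ/2) := by rw [Real.mul_rpow (by positivity) (by positivity)]
      _ ≤ _ := by gcongr
  rw [e1, e2, mul_pow]
  calc _ = (2 ^ δ) ^ k * (y ^ (1 - 3/2 * δ) * ((1 + η) ^ k * (2 ^ (δ / 2)) ^ k)) := by ring
    _ ≤ _ := by gcongr

theorem stmt0 (n : ℕ) (hn : 2 ≤ n) (d : ℝ) (𝒜 ℬ : Finset (Finset (Fin n)))
    (h : (𝒜.card : ℝ) * ℬ.card = (n : ℝ) ^ d * 2 ^ n) :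
    (crossComp 𝒜 ℬ : ℝ) ≤ (2 : ℝ) ^ (-d / 300) * ((𝒜.card : ℝ) * ℬ.card) := by
  have hn2 : (2:ℝ) ≤ n := by exact_mod_cast hn
  have hn0 : (0:ℝ) < n := by linarith
  have hl2 : 0 < Real.log 2 := Real.log_pos (by norm_num)
  have hln : Real.log 2 ≤ Real.log n := Real.log_le_log (by norm_num) hn2
  have hln0 : 0 < Real.log n := hl2.trans_le hln
  obtain ⟨δ, hδd⟩ : ∃ δ, δ = Real.log 2 / (300 * Real.log n) := ⟨_, rfl⟩
  have hδ : 0 < δ := by rw [hδd]; positivity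
  have hδ1 : δ ≤ 1/300 := by
    rw [hδd, div_le_div_iff₀ (by positivity) (by norm_num)]; linarith
  have hpow : ∀ c : ℝ, (n:ℝ) ^ (c * δ) = 2 ^ (c / 300) := by
    intro c
    rw [Real.rpow_def_of_pos hn0, Real.rpow_def_of_pos (by norm_num), hδd]
    congr 1
    field_simp
  have hδn : (n:ℝ) ^ δ = 2 ^ (1/300 : ℝ) := by simpa using hpow 1
  have hδn' : (n:ℝ) ^ (3/2 * δ) = 2 ^ (1/200 : ℝ) := by rw [hpow]; norm_num
  have hX : (2 * (n:ℝ)) ^ δ ≤ 1.05 := by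
    calc (2 * (n:ℝ)) ^ δ = 2 ^ δ * n ^ δ := Real.mul_rpow (by norm_num) hn0.le
      _ ≤ 2 ^ (1/300 : ℝ) * 2 ^ (1/300 : ℝ) := by
          rw [hδn]; gcongr; norm_num
      _ = 2 ^ ((150:ℝ)⁻¹) := by rw [← Real.rpow_add (by norm_num)]; norm_num
      _ ≤ 1.05 := by
          rw [Real.rpow_inv_le_iff_of_pos (by norm_num) (by norm_num) (by norm_num)]
          rw [show (150:ℝ) = ((150:ℕ):ℝ) by norm_num, Real.rpow_natCast]
          norm_num
  have key := exact_ind (α := Fin n) δ n n hδ (by linarith) hX hn0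
    (by
      intro s hs A B hA hB hbig
      refine large_case n s.card hn hs δ hδ hδn _ _ hbig ?_
      exact lossy (3/2 * δ) _ (by linarith) (by linarith) (by positivity)
        (eta_bd n hn (3/2 * δ) (by linarith) (by linarith) hδn') s A B hA hB)
    Finset.univ (by simp) 𝒜 ℬ (by simp) (by simp)
  have h0 : (crossComp 𝒜 ℬ : ℝ) ≤ csub 𝒜 ℬ := by exact_mod_cast crossComp_le_csub 𝒜 ℬ
  refine h0.trans (key.trans (le_of_eq ?_))
  rw [h, Finset.card_univ, Fintype.card_fin]
  have hp : (0:ℝ) < (n:ℝ) ^ d * 2 ^ n := by positivity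
  have e3 : ((2:ℝ) ^ δ) ^ n = ((2:ℝ) ^ n) ^ δ := by
    rw [← Real.rpow_natCast, ← Real.rpow_mul (by norm_num), mul_comm,
        Real.rpow_mul (by norm_num), Real.rpow_natCast]
  have e5 : ((n:ℝ) ^ d) ^ (-δ) = 2 ^ (-d / 300) := by
    rw [← Real.rpow_mul hn0.le, show d * -δ = (-d) * δ by ring, hpow]
  have e6 : ((2:ℝ) ^ n) ^ δ * ((2:ℝ) ^ n) ^ (-δ) = 1 := by
    rw [← Real.rpow_add (by positivity)]; simp
  rw [show 1 - δ = -δ + 1 by ring, Real.rpow_add hp, Real.rpow_one,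
    Real.mul_rpow (by positivity) (by positivity), e3, e5]
  calc _ = (((2:ℝ) ^ n) ^ δ * ((2:ℝ) ^ n) ^ (-δ)) * (2 ^ (-d / 300) * ((n:ℝ) ^ d * 2 ^ n)) := by
        ring
    _ = _ := by rw [e6, one_mul]
end

section
/- Let n ≥ 2 and let d be a real number. If ℱ is a family of subsets of [n] with |ℱ|² = n^d·2^n, then c(ℱ) ≤ 2^{−d/300}·|ℱ|². -/
open Finset

/-- `compCount ℱ` is the number of comparable pairs in `ℱ`, i.e. the number of unordered
pairs `{A, B}` of distinct sets in `ℱ` with `A ⊆ B` or `B ⊆ A`.  This equals the number of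
ordered pairs `(A, B) ∈ ℱ × ℱ` with `A ⊊ B`. -/
def compCount {n : ℕ} (ℱ : Finset (Finset (Fin n))) : ℕ := crossComp ℱ ℱ

lemma aux_entropy {n : ℕ} (F : Finset (Finset (Fin n))) (hF : F.Nonempty) (q : Fin n → ℝ)
    (h0 : ∀ x, 0 < q x) (h1 : ∀ x, q x < 1) :
    (F.card : ℝ) * Real.log F.card ≤
      ∑ x, -(((F.filter (fun A => x ∈ A)).card : ℝ) * Real.log (q x)
        + ((F.card : ℝ) - (F.filter (fun A => x ∈ A)).card) * Real.log (1 - q x)) := by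
  have hM : (0:ℝ) < F.card := by exact_mod_cast hF.card_pos
  set w : Finset (Fin n) → ℝ := fun A => ∏ x, if x ∈ A then q x else 1 - q x with hw
  have wpos : ∀ A, 0 < w A := by
    intro A
    apply Finset.prod_pos
    intro x _
    split_ifs
    · exact h0 x
    · linarith [h1 x]
  have wsum : ∑ A : Finset (Fin n), w A = 1 := by
    have := Finset.prod_add q (fun x => 1 - q x) (univ : Finset (Fin n))
    simp only [add_sub_cancel, prod_const_one, powerset_univ] at this
    rw [this]
    apply Finset.sum_congr rfl
    intro A _
    rw [hw]
    simp only [Finset.prod_ite]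
    congr 1
    · congr 1; ext; simp
    · congr 1; ext; simp
  have wle : ∑ A ∈ F, w A ≤ 1 := by
    rw [← wsum]
    exact Finset.sum_le_sum_of_subset_of_nonneg (subset_univ _) (fun A _ _ => (wpos A).le)
  have key : ∑ A ∈ F, (Real.log F.card + Real.log (w A)) ≤ ∑ A ∈ F, (F.card * w A - 1) := by
    apply Finset.sum_le_sum
    intro A _
    rw [← Real.log_mul hM.ne' (wpos A).ne']
    exact Real.log_le_sub_one_of_pos (mul_pos hM (wpos A))
  rw [Finset.sum_add_distrib, Finset.sum_sub_distrib, ← Finset.mul_sum] at key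
  simp only [sum_const, nsmul_eq_mul, mul_one] at key
  have hlog : ∑ A ∈ F, Real.log (w A) =
      ∑ x, (((F.filter (fun A => x ∈ A)).card : ℝ) * Real.log (q x)
        + ((F.card : ℝ) - (F.filter (fun A => x ∈ A)).card) * Real.log (1 - q x)) := by
    have : ∀ A ∈ F, Real.log (w A) = ∑ x, if x ∈ A then Real.log (q x) else Real.log (1 - q x) := by
      intro A _
      rw [hw]
      simp only
      rw [Real.log_prod]
      · apply Finset.sum_congr rfl
        intro x _
        split_ifs <;> rfl
      · intro x _
        split_ifs
        · exact (h0 x).ne'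
        · linarith [h1 x]
    rw [Finset.sum_congr rfl this, Finset.sum_comm]
    apply Finset.sum_congr rfl
    intro x _
    rw [Finset.sum_ite]
    simp only [sum_const, nsmul_eq_mul]
    congr 2
    have := Finset.card_filter_add_card_filter_not (s := F) (fun A => x ∈ A)
    rw [← this]; push_cast; ring
  rw [hlog] at key
  rw [Finset.sum_neg_distrib]
  nlinarith

lemma aux_pow (p : ℝ) (h0 : 0 ≤ p) (h1 : p ≤ 1) (t : ℕ) : (1 - p)^t * (1 + t * p) ≤ 1 := by
  have h2 : 1 + t * p ≤ (1 + p)^t := one_add_mul_le_pow (by linarith) t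
  have h3 : 0 ≤ (1-p)^t := pow_nonneg (by linarith) t
  calc (1 - p)^t * (1 + t * p) ≤ (1-p)^t * (1+p)^t := by gcongr
    _ = (1 - p^2)^t := by rw [← mul_pow]; ring
    _ ≤ 1 := pow_le_one₀ (by nlinarith) (by nlinarith)

lemma aux_coord (n k : ℕ) (hn : 1 ≤ n) (hk1 : 1 ≤ k) (hk : n + 1 ≤ 2^k) (p : ℝ) (h0 : 0 ≤ p)
    (h1 : p ≤ 1) : ∃ q : ℝ, 0 < q ∧ q < 1 ∧
      -(p * Real.log q + (1 - p) * Real.log (1 - q)) ≤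
        Real.log 2 * (1 - (1 - p)^(32 * k) + 2 / n) := by
  have l1 := Real.log_two_gt_d9
  have l2 := Real.log_two_lt_d9
  have hn' : (1:ℝ) ≤ n := by exact_mod_cast hn
  have hk1' : (1:ℝ) ≤ k := by exact_mod_cast hk1
  have hk' : (n:ℝ) + 1 ≤ 2^k := by exact_mod_cast hk
  have hinv : (0:ℝ) < 1 / n := by positivity
  have h2n : (2:ℝ) / n = 2 * (1 / n) := by ring
  have hb := aux_pow p h0 h1 (32 * k)
  push_cast at hb
  have hP : 0 ≤ (1-p)^(32*k) := pow_nonneg (by linarith) _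
  have hP1 : (1-p)^(32*k) ≤ 1 := pow_le_one₀ (by linarith) (by linarith)
  rcases le_or_gt (1/16) p with hp | hp
  · refine ⟨1/2, by norm_num, by norm_num, ?_⟩
    have e1 : Real.log (1/2) = - Real.log 2 := by simp
    have e2 : (1:ℝ) - 1/2 = 1/2 := by norm_num
    rw [e2, e1]
    have : (1-p)^(32*k) ≤ 1 / n := by
      calc (1-p)^(32*k) ≤ (15/16 : ℝ)^(32*k) := by
            apply pow_le_pow_left₀ <;> linarith
        _ = ((15/16 : ℝ)^32)^k := by rw [pow_mul]
        _ ≤ (1/2)^k := by apply pow_le_pow_left₀ <;> norm_num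
        _ = 1 / 2^k := by simp
        _ ≤ 1 / n := by apply one_div_le_one_div_of_le <;> linarith
    rw [h2n]
    nlinarith
  · rcases le_or_gt (1/2) (p * k) with hpk | hpk
    · refine ⟨1/16, by norm_num, by norm_num, ?_⟩
      have e1 : Real.log (1/16) = - (4 * Real.log 2) := by
        rw [one_div, Real.log_inv, show (16:ℝ) = 2^4 by norm_num, Real.log_pow]; norm_num
      have e2 : -(1/15) ≤ Real.log (1 - 1/16) := by
        have := Real.one_sub_inv_le_log_of_pos (show (0:ℝ) < 1 - 1/16 by norm_num)
        norm_num at this ⊢; linarith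
      rw [e1]
      have hP2 : (1-p)^(32*k) ≤ 1/17 := by nlinarith
      have : -((1 - p) * Real.log (1 - 1/16)) ≤ 1/15 := by nlinarith
      have h5 : Real.log 2 * (16/17) ≤ Real.log 2 * (1 - (1 - p)^(32 * k) + 2 / n) := by
        gcongr; rw [h2n]; linarith
      nlinarith
    · have h2k : (2:ℝ) ≤ 2^k := by
        calc (2:ℝ) = 2^1 := by norm_num
          _ ≤ 2^k := pow_le_pow_right₀ (by norm_num) hk1
      have hq : (1:ℝ)/2^k ≤ 1/2 := one_div_le_one_div_of_le (by norm_num) h2k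
      refine ⟨1/2^k, by positivity, by linarith, ?_⟩
      have e1 : Real.log (1/2^k) = - (k * Real.log 2) := by
        rw [one_div, Real.log_inv, Real.log_pow]
      have e2 : -(1/n) ≤ Real.log (1 - 1/2^k) := by
        have := Real.one_sub_inv_le_log_of_pos (show (0:ℝ) < 1 - 1/2^k by linarith)
        refine le_trans ?_ this
        have : (1 - (1:ℝ)/2^k)⁻¹ = 1 + 1 / (2^k - 1) := by
          have : (2:ℝ)^k - 1 ≠ 0 := by linarith
          field_simp
          ring
        rw [this]
        have : (1:ℝ) / (2^k-1) ≤ 1 / n := one_div_le_one_div_of_le (by linarith) (by linarith)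
        linarith
      rw [e1]
      have h4 : -((1 - p) * Real.log (1 - 1/2^k)) ≤ 1/n := by nlinarith
      have h5 : p * k ≤ 1 - (1-p)^(32*k) := by
        have hy : 0 ≤ p * k := by positivity
        have hb' : (1-p)^(32*k) * (1 + 32 * (p * k)) ≤ 1 := by linarith
        generalize (1-p)^(32*k) = P at *
        generalize p * k = y at *
        by_contra hc
        push Not at hc
        nlinarith
      rw [h2n]
      have : Real.log 2 * (p * k) ≤ Real.log 2 * (1 - (1-p)^(32*k)) := by gcongr
      nlinarith

/-- tuples -/
def tup {n : ℕ} (F : Finset (Finset (Fin n))) (t : ℕ) : Finset (Fin t → Finset (Fin n)) :=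
  Fintype.piFinset (fun _ => F)

def un {n t : ℕ} (f : Fin t → Finset (Fin n)) : Finset (Fin n) := univ.biUnion f

lemma aux_union {n : ℕ} (F : Finset (Finset (Fin n))) (t : ℕ) :
    ∑ f ∈ tup F t, ((un f).card : ℝ) =
      ∑ x, ((F.card : ℝ)^t - ((F.card : ℝ) - (F.filter (fun A => x ∈ A)).card)^t) := by
  have : ∀ f ∈ tup F t, ((un f).card : ℝ) = ∑ x, if x ∈ un f then (1:ℝ) else 0 := by
    intro f _
    simp
  rw [Finset.sum_congr rfl this, Finset.sum_comm]
  apply Finset.sum_congr rfl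
  intro x _
  rw [Finset.sum_boole]
  have h1 := Finset.card_filter_add_card_filter_not (s := tup F t) (fun f => x ∈ un f)
  have h2 : (tup F t).filter (fun f => ¬ x ∈ un f) = tup (F.filter (fun A => ¬ x ∈ A)) t := by
    ext f
    simp [tup, un, Fintype.mem_piFinset, forall_and]
  have h3 := Finset.card_filter_add_card_filter_not (s := F) (fun A => x ∈ A)
  rw [h2] at h1
  simp only [tup, Fintype.card_piFinset_const] at h1 ⊢
  have h1' := congrArg (Nat.cast : ℕ → ℝ) h1
  have h3' := congrArg (Nat.cast : ℕ → ℝ) h3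
  push_cast at h1' h3'
  rw [← h1', ← h3']
  ring

lemma aux_bad {n : ℕ} (k : ℕ) (hn : 1 ≤ n) (hk1 : 1 ≤ k) (hk : n + 1 ≤ 2^k)
    (F : Finset (Finset (Fin n))) (hF : F.Nonempty)
    (hM : Real.log 2 * (n / 2 + 3) ≤ Real.log F.card) :
    (F.card : ℝ)^(32*k) ≤ n * ((tup F (32*k)).filter (fun f => n < 2 * (un f).card)).card := by
  have hM0 : (0:ℝ) < F.card := by exact_mod_cast hF.card_pos
  have hl2 : 0 < Real.log 2 := Real.log_pos (by norm_num)
  set M : ℝ := (F.card : ℝ) with hMdef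
  set a : Fin n → ℝ := fun x => ((F.filter (fun A => x ∈ A)).card : ℝ) with ha
  have ha0 : ∀ x, 0 ≤ a x / M := fun x => by positivity
  have ha1 : ∀ x, a x / M ≤ 1 := fun x => by
    rw [div_le_one hM0]
    simp only [ha, hMdef]
    exact_mod_cast Finset.card_filter_le _ _
  choose q q0 q1 hq using fun x => aux_coord n k hn hk1 hk (a x / M) (ha0 x) (ha1 x)
  have hE := aux_entropy F hF q q0 q1
  have hU := aux_union F (32*k)
  have hn0 : (0:ℝ) < n := by exact_mod_cast hn
  have hlow : M^(32*k) * (n/2 + 1) ≤ ∑ f ∈ tup F (32*k), ((un f).card : ℝ) := by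
    rw [hU]
    have h1 : M * Real.log M ≤ M * (Real.log 2 * (∑ x, (1 - (1 - a x / M)^(32*k)) + 2)) := by
      refine hE.trans ?_
      have : M * (Real.log 2 * (∑ x, (1 - (1 - a x / M)^(32*k)) + 2)) =
          ∑ x, M * (Real.log 2 * (1 - (1 - a x / M)^(32*k) + 2 / n)) := by
        rw [← Finset.mul_sum, ← Finset.mul_sum, Finset.sum_add_distrib]
        simp
        left; left
        field_simp
      rw [this]
      apply Finset.sum_le_sum
      intro x _
      refine le_trans (le_of_eq ?_) (mul_le_mul_of_nonneg_left (hq x) hM0.le)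
      simp only [ha]
      field_simp
      rw [← hMdef]
      ring
    have h2 := le_of_mul_le_mul_left h1 hM0
    have h3 := le_of_mul_le_mul_left (hM.trans h2) hl2
    have h4 : ∑ x, (M^(32*k) - (M - a x)^(32*k)) = M^(32*k) * ∑ x, (1 - (1 - a x / M)^(32*k)) := by
      rw [Finset.mul_sum]
      apply Finset.sum_congr rfl
      intro x _
      rw [mul_sub, ← mul_pow, mul_sub, mul_div_cancel₀ _ hM0.ne', mul_one, mul_one]
    simp only [ha] at h4 h3
    rw [h4]
    gcongr
    linarith
  have hup : ∑ f ∈ tup F (32*k), ((un f).card : ℝ) ≤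
      ∑ f ∈ tup F (32*k), ((n:ℝ)/2 + if n < 2 * (un f).card then (n:ℝ) else 0) := by
    apply Finset.sum_le_sum
    intro f _
    have : ((un f).card : ℝ) ≤ n := by
      exact_mod_cast (card_le_univ (un f)).trans (by simp)
    split_ifs with hc
    · linarith
    · have : (2:ℝ) * (un f).card ≤ n := by exact_mod_cast not_lt.mp hc
      linarith
  rw [Finset.sum_add_distrib, ← Finset.sum_filter] at hup
  simp only [sum_const, nsmul_eq_mul] at hup
  have hc : ((tup F (32*k)).card : ℝ) = M^(32*k) := by
    simp [tup, Fintype.card_piFinset_const, hMdef]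
  rw [hc] at hup
  linarith

lemma aux_count {n : ℕ} (F : Finset (Finset (Fin n))) (t : ℕ) :
    ∑ B ∈ F, (((tup (F.filter (fun A => A ⊆ B)) t).filter (fun f => n < 2 * (un f).card)).card : ℝ)
      ≤ (F.card : ℝ)^t * (2:ℝ)^((n:ℝ)/2) := by
  have h1 : ∀ B ∈ F, (((tup (F.filter (fun A => A ⊆ B)) t).filter
      (fun f => n < 2 * (un f).card)).card : ℝ) =
      ∑ f ∈ (tup F t).filter (fun f => n < 2 * (un f).card), if un f ⊆ B then (1:ℝ) else 0 := by
    intro B _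
    rw [Finset.sum_boole]
    congr 2
    ext f
    simp only [mem_filter]
    simp only [tup, un, Fintype.mem_piFinset, mem_filter, forall_and, biUnion_subset, mem_univ,
      true_implies]
    tauto
  rw [Finset.sum_congr rfl h1, Finset.sum_comm]
  calc _ ≤ ∑ f ∈ (tup F t).filter (fun f => n < 2 * (un f).card), (2:ℝ)^((n:ℝ)/2) := by
        apply Finset.sum_le_sum
        intro f hf
        rw [Finset.sum_boole]
        have hf' := (Finset.mem_filter.mp hf).2
        have hun : (un f).card ≤ n := (card_le_univ (un f)).trans (by simp)
        have h3 : (F.filter (fun B => un f ⊆ B)).card ≤ 2^(n - (un f).card) := by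
          calc _ ≤ (Finset.Icc (un f) univ).card := by
                apply card_le_card
                intro B hB
                simp at hB ⊢
                exact hB.2
            _ = 2^(n - (un f).card) := by
                rw [Finset.card_Icc_finset (subset_univ _)]; simp
        calc ((F.filter (fun B => un f ⊆ B)).card : ℝ) ≤ (2:ℝ)^(n - (un f).card) := by
              exact_mod_cast h3
          _ = (2:ℝ)^(((n - (un f).card : ℕ) : ℝ)) := by rw [Real.rpow_natCast]
          _ ≤ _ := by
            apply Real.rpow_le_rpow_of_exponent_le (by norm_num)
            rw [Nat.cast_sub hun]
            have : (n:ℝ) < 2 * (un f).card := by exact_mod_cast hf'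
            linarith
    _ ≤ _ := by
        rw [sum_const, nsmul_eq_mul]
        gcongr
        have : ((tup F t).filter (fun f => n < 2 * (un f).card)).card ≤ F.card^t := by
          refine (card_filter_le _ _).trans ?_
          simp [tup, Fintype.card_piFinset_const]
        exact_mod_cast this

lemma comp_half {n : ℕ} (F : Finset (Finset (Fin n))) :
    2 * compCount F ≤ F.card^2 := by
  unfold compCount crossComp
  have h1 : ((F ×ˢ F).filter (fun p => p.1 ⊂ p.2)).card =
      ((F ×ˢ F).filter (fun p => p.2 ⊂ p.1)).card := by
    apply Finset.card_bij (fun p _ => (p.2, p.1))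
    · intro p hp; simp at hp ⊢; tauto
    · rintro ⟨a, b⟩ _ ⟨c, e⟩ _ h; simp at h ⊢; tauto
    · rintro ⟨a, b⟩ h; exact ⟨(b, a), by simp at h ⊢; tauto, rfl⟩
  have h2 : Disjoint ((F ×ˢ F).filter (fun p => p.1 ⊂ p.2))
      ((F ×ˢ F).filter (fun p => p.2 ⊂ p.1)) := by
    rw [Finset.disjoint_filter]
    intro p _ h h'
    exact lt_asymm h h'
  have h3 := Finset.card_union_of_disjoint h2
  have h4 : (((F ×ˢ F).filter (fun p => p.1 ⊂ p.2)) ∪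
      ((F ×ˢ F).filter (fun p => p.2 ⊂ p.1))).card ≤ (F ×ˢ F).card :=
    card_le_card (union_subset (filter_subset _ _) (filter_subset _ _))
  rw [card_product] at h4
  rw [sq]
  omega

lemma comp_le {n : ℕ} (F : Finset (Finset (Fin n))) :
    (compCount F : ℝ) ≤ ∑ B ∈ F, ((F.filter (fun A => A ⊆ B)).card : ℝ) := by
  have : compCount F ≤ ∑ B ∈ F, (F.filter (fun A => A ⊆ B)).card := by
    unfold compCount crossComp
    calc _ ≤ ((F ×ˢ F).filter (fun p => p.1 ⊆ p.2)).card := by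
          apply card_le_card
          intro p hp
          simp only [mem_filter] at hp ⊢
          exact ⟨hp.1, hp.2.1⟩
      _ = _ := by
          rw [Finset.card_filter, Finset.sum_product_right]
          apply Finset.sum_congr rfl
          intro B _
          rw [Finset.card_filter]
  exact_mod_cast this

theorem stmt1 (n : ℕ) (hn : 2 ≤ n) (d : ℝ) (ℱ : Finset (Finset (Fin n)))
    (h : (ℱ.card : ℝ) ^ 2 = (n : ℝ) ^ d * 2 ^ n) :
    (compCount ℱ : ℝ) ≤ (2 : ℝ) ^ (-d / 300) * (ℱ.card : ℝ) ^ 2 := by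
  rcases le_or_gt d 300 with hd | hd
  · have h1 : (2 * compCount ℱ : ℝ) ≤ (ℱ.card : ℝ)^2 := by exact_mod_cast comp_half ℱ
    have h2 : (2:ℝ)^(-1 : ℝ) ≤ (2:ℝ)^(-d/300) :=
      Real.rpow_le_rpow_of_exponent_le (by norm_num) (by linarith)
    rw [Real.rpow_neg_one] at h2
    nlinarith [sq_nonneg (ℱ.card : ℝ)]
  by_contra hcon
  push Not at hcon
  have hn2 : (2:ℝ) ≤ n := by exact_mod_cast hn
  have hn0 : (0:ℝ) < n := by linarith
  set m : ℝ := (ℱ.card : ℝ) with hm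
  have hm2 : 0 < m^2 := by rw [h]; positivity
  have hmnn : 0 ≤ m := by rw [hm]; positivity
  have hm0 : 0 < m := lt_of_le_of_ne hmnn (fun h0 => by rw [← h0] at hm2; simp at hm2)
  set ε : ℝ := (2:ℝ)^(-d/300) with hε
  have hε0 : 0 < ε := by positivity
  set lam := Real.log 2 with hlam
  have hl2 : 0 < lam := Real.log_pos (by norm_num)
  have hln : lam ≤ Real.log n := Real.log_le_log (by norm_num) hn2
  have hlogε : Real.log ε = -d/300 * lam := Real.log_rpow (by norm_num) _
  have hlogm : Real.log m = d / 2 * Real.log n + n / 2 * lam := by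
    have := congrArg Real.log h
    rw [Real.log_pow, Real.log_mul (by positivity) (by positivity), Real.log_rpow hn0,
      Real.log_pow] at this
    push_cast at this
    linarith
  set M0 : ℝ := ε * m / 2 with hM0
  have hM0p : 0 < M0 := by positivity
  have hlogM0 : Real.log M0 = -d/300 * lam + (d / 2 * Real.log n + n / 2 * lam) - lam := by
    rw [hM0, Real.log_div (by positivity) (by norm_num), Real.log_mul hε0.ne' hm0.ne', hlogε, hlogm]
  have hM0big : lam * (n/2 + 3) ≤ Real.log M0 := by
    rw [hlogM0]
    nlinarith [mul_le_mul_of_nonneg_left hln (show 0 ≤ d by linarith)]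
  set k := Nat.log 2 n + 1 with hk
  have hk1 : 1 ≤ k := by omega
  have hk2 : n + 1 ≤ 2^k := Nat.lt_pow_succ_log_self (by norm_num) n
  have hk3 : (k:ℝ) * lam ≤ 2 * Real.log n := by
    have : 2 ^ (Nat.log 2 n) ≤ n := Nat.pow_log_le_self 2 (by omega)
    have h' : (2:ℝ)^(Nat.log 2 n) ≤ n := by exact_mod_cast this
    have := Real.log_le_log (by positivity) h'
    rw [Real.log_pow] at this
    rw [hk]; push_cast
    linarith
  set S := ℱ.filter (fun B => M0 ≤ ((ℱ.filter (fun A => A ⊆ B)).card : ℝ)) with hS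
  have hSc : M0 ≤ S.card := by
    have h1 := comp_le ℱ
    have h2 : ∑ B ∈ ℱ, ((ℱ.filter (fun A => A ⊆ B)).card : ℝ) ≤
        ∑ B ∈ ℱ, (M0 + if M0 ≤ ((ℱ.filter (fun A => A ⊆ B)).card : ℝ) then m else 0) := by
      apply Finset.sum_le_sum
      intro B _
      split_ifs with hc
      · have : ((ℱ.filter (fun A => A ⊆ B)).card : ℝ) ≤ m := by
          rw [hm]; exact_mod_cast card_filter_le _ _
        linarith
      · linarith
    rw [Finset.sum_add_distrib, ← Finset.sum_filter] at h2
    simp only [sum_const, nsmul_eq_mul] at h2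
    rw [← hS, ← hm] at h2
    have h3 : m * M0 ≤ m * S.card := by
      have : ε * m^2 = 2 * (m * M0) := by rw [hM0]; ring
      linarith
    exact le_of_mul_le_mul_left h3 hm0
  have hbad : ∀ B ∈ S, M0^(32*k) / n ≤ (((tup (ℱ.filter (fun A => A ⊆ B)) (32*k)).filter
      (fun f => n < 2 * (un f).card)).card : ℝ) := by
    intro B hB
    have hB2 := (Finset.mem_filter.mp hB).2
    have hne : (ℱ.filter (fun A => A ⊆ B)).Nonempty := by
      rw [← Finset.card_pos]
      exact_mod_cast hM0p.trans_le hB2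
    have := aux_bad k (by omega) hk1 hk2 _ hne (hM0big.trans (Real.log_le_log hM0p hB2))
    rw [div_le_iff₀ hn0, mul_comm _ (n:ℝ)]
    exact (pow_le_pow_left₀ hM0p.le hB2 _).trans this
  have hsum : S.card * (M0^(32*k) / n) ≤ m^(32*k) * (2:ℝ)^((n:ℝ)/2) := by
    refine le_trans ?_ (aux_count ℱ (32*k))
    rw [← nsmul_eq_mul, ← Finset.sum_const]
    refine (Finset.sum_le_sum hbad).trans ?_
    exact Finset.sum_le_sum_of_subset_of_nonneg (filter_subset _ _) (fun _ _ _ => by positivity)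
  have hfin : M0 * (M0^(32*k) / n) ≤ m^(32*k) * (2:ℝ)^((n:ℝ)/2) :=
    (mul_le_mul_of_nonneg_right hSc (by positivity)).trans hsum
  clear_value M0
  have hL := Real.log_le_log (by positivity) hfin
  rw [Real.log_mul (by positivity) (by positivity), Real.log_div (by positivity) (by positivity),
    Real.log_mul (by positivity) (by positivity), Real.log_pow, Real.log_pow,
    Real.log_rpow (by norm_num), hlogM0, hlogm] at hL
  push_cast at hL
  rw [← hlam] at hL
  have e : (d/2 - 1) * Real.log n ≤ (32 * (k * lam) + lam) * (d/300 + 1) := by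
    linarith
  have e2 : (32 * (k * lam) + lam) * (d/300 + 1) ≤ (65 * Real.log n) * (d/300+1) := by
    apply mul_le_mul_of_nonneg_right <;> linarith
  nlinarith
end

section
/- For n ≥ 2 and d ∈ (0,1], if 𝒜 and ℬ are families of subsets of [n] satisfying c(𝒜,ℬ) ≥ 2^{−d/300}·|𝒜|·|ℬ|, then |𝒜|·|ℬ| < n^d·2^n. -/
open Finset

lemma ob_G_le (K x : ℝ) (hK : 240 ≤ K) (hx0 : 0 ≤ x) (hx1 : x ≤ 1) :
    (1-x)^(1-1/K) + x^(1-1/K) ≤ 2^(1/K) := by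
  have hK0 : 0 < K := by linarith
  have h1 : 1/K ≤ 1/240 := one_div_le_one_div_of_le (by norm_num) hK
  have h0 : 0 < 1/K := by positivity
  obtain ⟨_, hcc⟩ := Real.concaveOn_rpow (p := 1-1/K) (by linarith) (by linarith)
  have hc := @hcc (1-x) (by simp; linarith) x (by simpa using hx0) (1/2) (1/2)
    (by norm_num) (by norm_num) (by norm_num)
  simp only [smul_eq_mul] at hc
  have e : (1/2:ℝ) * (1-x) + 1/2*x = 1/2 := by ring
  rw [e] at hc
  have e2 : (2:ℝ)^(1/K) = 2 * (1/2:ℝ)^(1-1/K) := by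
    rw [one_div (2:ℝ), Real.inv_rpow (by norm_num), ← Real.rpow_neg (by norm_num)]
    nth_rw 2 [← Real.rpow_one 2]
    rw [← Real.rpow_add (by norm_num)]; congr 1; ring
  rw [e2]; linarith

lemma ob_bern (K x : ℝ) (hK : 240 ≤ K) (hx1 : x ≤ 1) :
    (1-x)^(1-1/K) ≤ 1 - (1-1/K)*x := by
  have hK0 : 0 < K := by linarith
  have h1 : 1/K ≤ 1/240 := one_div_le_one_div_of_le (by norm_num) hK
  have h0 : 0 < 1/K := by positivity
  have := rpow_one_add_le_one_add_mul_self (s := -x) (by linarith) (p := 1-1/K)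
    (by linarith) (by linarith)
  rw [← sub_eq_add_neg] at this
  linarith

lemma ob_neg (K y : ℝ) (hK : 240 ≤ K) (hy : (2:ℝ)^(-K/15) ≤ y) :
    y^(-(1/K)) ≤ 1.05 := by
  have hK0 : 0 < K := by linarith
  have hp : (0:ℝ) < (2:ℝ)^(-K/15) := by positivity
  have h1 : y^(-(1/K)) ≤ ((2:ℝ)^(-K/15))^(-(1/K)) :=
    Real.rpow_le_rpow_of_nonpos hp hy (by have : 0 < 1/K := by positivity
                                          linarith)
  have h2 : ((2:ℝ)^(-K/15))^(-(1/K)) = 2^((1:ℝ)/15) := by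
    rw [← Real.rpow_mul (by norm_num)]; congr 1; field_simp
  have h3 : (2:ℝ)^((1:ℝ)/15) ≤ 1.05 := by
    have : (2:ℝ)^((1:ℝ)/15) ≤ ((1.05:ℝ)^(15:ℝ))^((1:ℝ)/15) :=
      Real.rpow_le_rpow (by norm_num) (by norm_num) (by norm_num)
    rw [← Real.rpow_mul (by norm_num)] at this
    norm_num at this ⊢; exact this
  linarith

lemma ob_split (K y : ℝ) (hy : 0 < y) : y^(1-1/K) = y * y^(-(1/K)) := by
  rw [sub_eq_add_neg, Real.rpow_add hy, Real.rpow_one]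

lemma ob_small (K x : ℝ) (hK : 240 ≤ K) (hx : (2:ℝ)^(-K/15) ≤ x) (hx1 : x ≤ 0.06) :
    (1-x)^(1-1/K) + x^(1-1/K) ≤ 1 + 0.3/K := by
  have hK0 : 0 < K := by linarith
  have hx0 : 0 < x := lt_of_lt_of_le (by positivity) hx
  have hb := ob_bern K x hK (by linarith)
  have hn := ob_neg K x hK hx
  rw [ob_split K x hx0]
  set E := x^(-(1/K)) with hE
  have hE0 : 0 < E := by positivity
  set L := Real.log (1/x) with hL
  have hL0 : 0 ≤ L := Real.log_nonneg (by rw [le_div_iff₀ hx0]; linarith)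
  have hEe : E = Real.exp (L/K) := by
    rw [hE, Real.rpow_def_of_pos hx0, hL, one_div x, Real.log_inv]; congr 1; ring
  have h1 : E - 1 ≤ L/K * E := by
    have := Real.add_one_le_exp (-(L/K))
    have h2 : Real.exp (-(L/K)) * E = 1 := by rw [hEe, ← Real.exp_add]; simp
    nlinarith
  have hxL : x * L ≤ 0.17 := by
    have h3 : Real.exp (-3) ≤ 0.05 := by
      rw [Real.exp_neg]
      have : (20:ℝ) ≤ Real.exp 3 := by
        have h := Real.exp_one_gt_d9
        have : Real.exp 3 = Real.exp 1 ^ 3 := by rw [← Real.exp_nat_mul]; norm_num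
        rw [this]
        calc (20:ℝ) ≤ 2.718^3 := by norm_num
          _ ≤ _ := by gcongr; linarith
      rw [show (0.05:ℝ) = (20:ℝ)⁻¹ by norm_num]
      gcongr
    have h4 := Real.add_one_le_exp (L - 3)
    have h5 : x * Real.exp (L - 3) = Real.exp (-3) := by
      rw [sub_eq_add_neg, Real.exp_add, hL, Real.exp_log (by positivity)]; field_simp
    nlinarith
  have h6 : x * (E - 1) ≤ 0.1785 / K := by
    calc x * (E-1) ≤ x * (L/K*E) := by gcongr
      _ = (x*L)*E/K := by ring
      _ ≤ 0.17*1.05/K := by gcongr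
      _ = _ := by norm_num
  have h7 : 1/K * x ≤ 0.06/K := by rw [one_div_mul_eq_div]; gcongr
  have : (0.3:ℝ)/K = 0.1785/K + 0.06/K + 0.0615/K := by ring
  have : 0 < 0.0615/K := by positivity
  nlinarith

lemma ob_half (K x y : ℝ) (hK : 240 ≤ K) (hy0 : 0 ≤ y) (hyx : y ≤ x) (hx1 : x ≤ 1) :
    (1-x)^(1-1/K) * y^(1-1/K) + (1-x)^(1-1/K) * (1-y)^(1-1/K) + x^(1-1/K) * (1-y)^(1-1/K)
      ≤ 2^(1/K) + 2^(-(K-1)/15) := by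
  have hK0 : 0 < K := by linarith
  have h1 : 1/K ≤ 1/240 := one_div_le_one_div_of_le (by norm_num) hK
  have h0 : 0 < 1/K := by positivity
  have hG := ob_G_le K x hK (by linarith) hx1
  have hbx := ob_bern K x hK hx1
  have hby := ob_bern K y hK (by linarith)
  have hP : 0 ≤ (1-x)^(1-1/K) := Real.rpow_nonneg (by linarith) _
  have hQ : 0 ≤ x^(1-1/K) := Real.rpow_nonneg (by linarith) _
  have hR : 0 ≤ (1-y)^(1-1/K) := Real.rpow_nonneg (by linarith) _
  have hT : 0 ≤ y^(1-1/K) := Real.rpow_nonneg (by linarith) _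
  have hP1 : (1-x)^(1-1/K) ≤ 1 := Real.rpow_le_one (by linarith) (by linarith) (by linarith)
  have hR1 : (1-y)^(1-1/K) ≤ 1 := Real.rpow_le_one (by linarith) (by linarith) (by linarith)
  have hPl : 1-x ≤ (1-x)^(1-1/K) := Real.self_le_rpow_of_le_one (by linarith) (by linarith) (by linarith)
  have hQl : x ≤ x^(1-1/K) := Real.self_le_rpow_of_le_one (by linarith) (by linarith) (by linarith)
  have hpos : (0:ℝ) < 2^(-(K-1)/15) := by positivity
  rcases lt_or_ge y ((2:ℝ)^(-K/15)) with hy | hy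
  · have hTl : y^(1-1/K) ≤ 2^(-(K-1)/15) := by
      calc y^(1-1/K) ≤ ((2:ℝ)^(-K/15))^(1-1/K) := Real.rpow_le_rpow hy0 hy.le (by linarith)
        _ = _ := by rw [← Real.rpow_mul (by norm_num)]; congr 1; field_simp
    nlinarith
  · have hyp : 0 < y := lt_of_lt_of_le (by positivity) hy
    rcases le_or_gt x 0.06 with hx | hx
    · have a1 := ob_small K x hK (hy.trans hyx) hx
      have a2 := ob_small K y hK hy (hyx.trans hx)
      have a3 : 1 + 0.69/K ≤ (2:ℝ)^(1/K) := by
        rw [Real.rpow_def_of_pos (by norm_num)]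
        have := Real.add_one_le_exp (Real.log 2 * (1/K))
        have h2 := Real.log_two_gt_d9
        have : 0.69/K ≤ Real.log 2 * (1/K) := by
          rw [mul_one_div]; gcongr; linarith
        linarith
      have a4 : ((1-x)^(1-1/K) + x^(1-1/K)) * ((1-y)^(1-1/K) + y^(1-1/K)) ≤ (1+0.3/K)*(1+0.3/K) := by
        gcongr
      have a5 : (0.3:ℝ)/K = 0.3 * (1/K) := by ring
      have a6 : (0.69:ℝ)/K = 0.69 * (1/K) := by ring
      rw [a5] at a4
      rw [a6] at a3
      nlinarith [mul_nonneg hQ hT]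
    · have hn := ob_neg K y hK hy
      have hTy : y^(1-1/K) ≤ 1.05 * y := by
        rw [ob_split K y hyp]; nlinarith
      have hPx : (1-x)^(1-1/K) ≤ 0.942 := by nlinarith
      have b1 : (1-x)^(1-1/K) * y^(1-1/K) ≤ 0.942 * (1.05*y) := by gcongr
      have b2 : ((1-x)^(1-1/K) + x^(1-1/K)) * (1-y)^(1-1/K) ≤ ((1-x)^(1-1/K) + x^(1-1/K)) * (1 - (1-1/K)*y) := by
        gcongr
      have b3 : 1 ≤ (1-x)^(1-1/K) + x^(1-1/K) := by linarith
      have b4 : (1-1/K)*y ≤ ((1-x)^(1-1/K) + x^(1-1/K)) * ((1-1/K)*y) := by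
        have : 0 ≤ (1-1/K)*y := mul_nonneg (by linarith) hy0
        nlinarith
      nlinarith

lemma ob_main (K a b c d : ℝ) (hK : 240 ≤ K) (ha : 0 ≤ a) (hb : 0 ≤ b) (hc : 0 ≤ c) (hd : 0 ≤ d) :
    a^(1-1/K) * c^(1-1/K) + a^(1-1/K) * d^(1-1/K) + b^(1-1/K) * d^(1-1/K)
      ≤ (2^(1/K) + 2^(-(K-1)/15)) * ((a+b)^(1-1/K) * (c+d)^(1-1/K)) := by
  have hK0 : 0 < K := by linarith
  have h1 : 1/K ≤ 1/240 := one_div_le_one_div_of_le (by norm_num) hK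
  have hs : 1-1/K ≠ 0 := by linarith
  have hM : (0:ℝ) ≤ (2^(1/K) + 2^(-(K-1)/15)) := by positivity
  have hR : 0 ≤ (2^(1/K) + 2^(-(K-1)/15)) * ((a+b)^(1-1/K) * (c+d)^(1-1/K)) := by positivity
  rcases (add_nonneg ha hb).eq_or_lt with h | h
  · have ha' : a = 0 := by linarith
    have hb' : b = 0 := by linarith
    subst ha' hb'
    simp only [Real.zero_rpow hs, add_zero, zero_mul, mul_zero, le_refl]
  rcases (add_nonneg hc hd).eq_or_lt with h' | h'
  · have ha' : c = 0 := by linarith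
    have hb' : d = 0 := by linarith
    subst ha' hb'
    simp only [Real.zero_rpow hs, add_zero, zero_mul, mul_zero, le_refl]
  set x := b/(a+b) with hx
  set y := c/(c+d) with hy
  have e1 : a = (1-x)*(a+b) := by rw [hx]; field_simp; ring
  have e2 : b = x*(a+b) := by rw [hx]; field_simp
  have e3 : c = y*(c+d) := by rw [hy]; field_simp
  have e4 : d = (1-y)*(c+d) := by rw [hy]; field_simp; ring
  have hx0 : 0 ≤ x := by positivity
  have hy0 : 0 ≤ y := by positivity
  have hx1 : x ≤ 1 := by rw [hx, div_le_one h]; linarith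
  have hy1 : y ≤ 1 := by rw [hy, div_le_one h']; linarith
  have key : (1-x)^(1-1/K) * y^(1-1/K) + (1-x)^(1-1/K) * (1-y)^(1-1/K) + x^(1-1/K) * (1-y)^(1-1/K)
      ≤ 2^(1/K) + 2^(-(K-1)/15) := by
    rcases le_total y x with hh | hh
    · exact ob_half K x y hK hy0 hh hx1
    · have := ob_half K y x hK hx0 hh hy1
      linarith
  have f1 : a^(1-1/K) = (1-x)^(1-1/K) * (a+b)^(1-1/K) := by
    rw [← Real.mul_rpow (by linarith) h.le, ← e1]
  have f2 : b^(1-1/K) = x^(1-1/K) * (a+b)^(1-1/K) := by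
    rw [← Real.mul_rpow (by linarith) h.le, ← e2]
  have f3 : c^(1-1/K) = y^(1-1/K) * (c+d)^(1-1/K) := by
    rw [← Real.mul_rpow (by linarith) h'.le, ← e3]
  have f4 : d^(1-1/K) = (1-y)^(1-1/K) * (c+d)^(1-1/K) := by
    rw [← Real.mul_rpow (by linarith) h'.le, ← e4]
  rw [f1, f2, f3, f4]
  have := mul_le_mul_of_nonneg_right key (by positivity : 0 ≤ (a+b)^(1-1/K) * (c+d)^(1-1/K))
  linarith

/-- tensorization -/
lemma tens {α : Type*} [DecidableEq α] (K : ℝ) (hK : 240 ≤ K) (U : Finset α) :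
    ∀ f g : Finset α → ℝ, (∀ A, f A = 0 ∨ f A = 1) → (∀ A, g A = 0 ∨ g A = 1) →
    ∑ A ∈ U.powerset, ∑ B ∈ U.powerset, (if A ⊆ B then f A * g B else 0)
      ≤ (2^(1/K) + 2^(-(K-1)/15))^U.card *
        ((∑ A ∈ U.powerset, f A)^(1-1/K) * (∑ B ∈ U.powerset, g B)^(1-1/K)) := by
  have h1 : 1/K ≤ 1/240 := one_div_le_one_div_of_le (by norm_num) hK
  have hs : 1-1/K ≠ 0 := by linarith
  induction U using Finset.induction_on with
  | empty =>
    intro f g hf hg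
    rcases hf ∅ with h | h <;> rcases hg ∅ with h' | h' <;> simp [h, h'] <;>
      simp [Real.zero_rpow (by simpa using hs : 1 - K⁻¹ ≠ 0)]
  | insert a U ha ih =>
    intro f g hf hg
    have hfn : ∀ A, 0 ≤ f A := fun A => by rcases hf A with h | h <;> simp [h]
    have hgn : ∀ A, 0 ≤ g A := fun A => by rcases hg A with h | h <;> simp [h]
    have i1 := ih f g hf hg
    have i2 := ih f (fun B => g (insert a B)) hf (fun B => hg _)
    have i3 := ih (fun B => f (insert a B)) (fun B => g (insert a B)) (fun B => hf _) (fun B => hg _)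
    have e : ∑ A ∈ (insert a U).powerset, ∑ B ∈ (insert a U).powerset, (if A ⊆ B then f A * g B else 0)
      = ∑ A ∈ U.powerset, ∑ B ∈ U.powerset, (if A ⊆ B then f A * g B else 0)
      + ∑ A ∈ U.powerset, ∑ B ∈ U.powerset, (if A ⊆ B then f A * g (insert a B) else 0)
      + ∑ A ∈ U.powerset, ∑ B ∈ U.powerset, (if A ⊆ B then f (insert a A) * g (insert a B) else 0) := by
      rw [Finset.sum_powerset_insert ha]
      simp only [Finset.sum_powerset_insert ha, Finset.sum_add_distrib]
      have z : ∑ A ∈ U.powerset, ∑ B ∈ U.powerset, (if insert a A ⊆ B then f (insert a A) * g B else 0) = 0 := by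
        refine Finset.sum_eq_zero fun A hA => Finset.sum_eq_zero fun B hB => ?_
        rw [if_neg]
        intro h
        exact ha (Finset.mem_powerset.1 hB (h (Finset.mem_insert_self a A)))
      have z2 : ∑ A ∈ U.powerset, ∑ B ∈ U.powerset, (if A ⊆ insert a B then f A * g (insert a B) else 0)
        = ∑ A ∈ U.powerset, ∑ B ∈ U.powerset, (if A ⊆ B then f A * g (insert a B) else 0) := by
        refine Finset.sum_congr rfl fun A hA => Finset.sum_congr rfl fun B hB => ?_
        have haA : a ∉ A := fun h => ha (Finset.mem_powerset.1 hA h)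
        exact if_congr (Finset.subset_insert_iff_of_notMem haA) rfl rfl
      have z3 : ∑ A ∈ U.powerset, ∑ B ∈ U.powerset, (if insert a A ⊆ insert a B then f (insert a A) * g (insert a B) else 0)
        = ∑ A ∈ U.powerset, ∑ B ∈ U.powerset, (if A ⊆ B then f (insert a A) * g (insert a B) else 0) := by
        refine Finset.sum_congr rfl fun A hA => Finset.sum_congr rfl fun B hB => ?_
        have haA : a ∉ A := fun h => ha (Finset.mem_powerset.1 hA h)
        exact if_congr (Finset.insert_subset_insert_iff haA) rfl rfl
      rw [z, z2, z3]; ring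
    rw [e, Finset.sum_powerset_insert ha, Finset.sum_powerset_insert ha, Finset.card_insert_of_notMem ha]
    have hm := ob_main K (∑ A ∈ U.powerset, f A) (∑ A ∈ U.powerset, f (insert a A))
      (∑ A ∈ U.powerset, g A) (∑ A ∈ U.powerset, g (insert a A)) hK
      (Finset.sum_nonneg fun _ _ => hfn _) (Finset.sum_nonneg fun _ _ => hfn _)
      (Finset.sum_nonneg fun _ _ => hgn _) (Finset.sum_nonneg fun _ _ => hgn _)
    have hm' := mul_le_mul_of_nonneg_left hm
      (by positivity : (0:ℝ) ≤ (2^(1/K) + 2^(-(K-1)/15))^U.card)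
    rw [pow_succ]
    linarith
lemma cross_le (n : ℕ) (K : ℝ) (hK : 240 ≤ K) (𝒜 ℬ : Finset (Finset (Fin n))) :
    (crossComp 𝒜 ℬ : ℝ) ≤ (2^(1/K) + 2^(-(K-1)/15))^n *
      ((𝒜.card:ℝ)^(1-1/K) * (ℬ.card:ℝ)^(1-1/K)) := by
  have h := tens K hK (Finset.univ : Finset (Fin n)) (fun A => if A ∈ 𝒜 then 1 else 0)
    (fun A => if A ∈ ℬ then 1 else 0) (fun A => by by_cases h : A ∈ 𝒜 <;> simp [h])
    (fun A => by by_cases h : A ∈ ℬ <;> simp [h])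
  have e1 : ∀ 𝒞 : Finset (Finset (Fin n)),
      ∑ A ∈ (Finset.univ : Finset (Fin n)).powerset, (if A ∈ 𝒞 then (1:ℝ) else 0) = 𝒞.card := by
    intro 𝒞; simp
  rw [e1, e1, Finset.card_univ, Fintype.card_fin] at h
  refine le_trans ?_ h
  rw [crossComp, Finset.card_filter, Finset.sum_product]
  push_cast
  rw [Finset.powerset_univ]
  have e2 : ∀ (𝒞 : Finset (Finset (Fin n))) (F : Finset (Fin n) → ℝ), ∑ A ∈ 𝒞, F A = ∑ A, if A ∈ 𝒞 then F A else 0 := by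
    intro 𝒞 F; simp
  rw [e2]
  refine Finset.sum_le_sum fun A _ => ?_
  by_cases hA : A ∈ 𝒜
  · simp only [hA, if_true]
    rw [e2]
    refine Finset.sum_le_sum fun B _ => ?_
    by_cases hB : B ∈ ℬ
    · simp only [hB, if_true]
      by_cases hAB : A ⊂ B
      · simp [hAB, hAB.subset]
      · simp only [hAB, if_false]; split_ifs <;> norm_num
    · simp [hB]
  · simp [hA]

lemma large_case_s2 (n : ℕ) (hn : 2 ≤ n) (d : ℝ) (hd0 : 1/(n:ℝ) ≤ d)
    (𝒜 ℬ : Finset (Finset (Fin n)))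
    (h : (2 : ℝ) ^ (-d / 300) * ((𝒜.card : ℝ) * ℬ.card) ≤ (crossComp 𝒜 ℬ : ℝ)) :
    (𝒜.card : ℝ) * ℬ.card < (n : ℝ) ^ d * 2 ^ n := by
  have hn2 : (2:ℝ) ≤ n := by exact_mod_cast hn
  have hn0 : (0:ℝ) < n := by linarith
  have hl2 : 0 < Real.log 2 := Real.log_pos (by norm_num)
  have hln : Real.log 2 ≤ Real.log n := Real.log_le_log (by norm_num) hn2
  set P := (𝒜.card : ℝ) * ℬ.card with hP
  have hP0 : 0 ≤ P := by positivity
  rcases hP0.eq_or_lt with h0 | h0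
  · rw [← h0]; positivity
  set K : ℝ := 240 * Real.log n / Real.log 2 with hKdef
  have hK : 240 ≤ K := by rw [hKdef, le_div_iff₀ hl2]; nlinarith
  have hK0 : 0 < K := by linarith
  have hc := cross_le n K hK 𝒜 ℬ
  rw [← Real.mul_rpow (by positivity) (by positivity), ← hP] at hc
  clear_value P
  set ε : ℝ := 2^(-(K-1)/15) with hε
  have hε0 : 0 < ε := by positivity
  have hlog := Real.log_le_log (by positivity) (h.trans hc)
  rw [Real.log_mul (by positivity) h0.ne', Real.log_mul (by positivity) (by positivity),
    Real.log_rpow (by norm_num), Real.log_pow, Real.log_rpow h0] at hlog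
  have hM : Real.log (2^(1/K) + ε) ≤ Real.log 2 / K + ε := by
    have h1 : (1:ℝ) ≤ 2^(1/K) := Real.one_le_rpow (by norm_num) (by positivity)
    have h2 : (2:ℝ)^(1/K) + ε ≤ 2^(1/K) * Real.exp ε := by
      have := Real.add_one_le_exp ε
      nlinarith
    have h3 := Real.log_le_log (by positivity) h2
    rw [Real.log_mul (by positivity) (by positivity), Real.log_exp, Real.log_rpow (by norm_num)] at h3
    have e : Real.log 2 / K = 1/K * Real.log 2 := by ring
    rw [e]; exact h3
  have hεv : ε ≤ 2 / (n:ℝ)^16 := by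
    have e1 : ε = 2^((1:ℝ)/15) * 2^(-K/15) := by
      rw [hε, ← Real.rpow_add (by norm_num)]; congr 1; ring
    have e2 : (2:ℝ)^(-K/15) = ((n:ℝ)^16)⁻¹ := by
      rw [Real.rpow_def_of_pos (by norm_num), hKdef,
        show Real.log 2 * (-(240 * Real.log n / Real.log 2)/15) = -(((16:ℕ):ℝ) * Real.log n) by
          push_cast; field_simp; ring, Real.exp_neg, Real.exp_nat_mul, Real.exp_log hn0]
    have e3 : (2:ℝ)^((1:ℝ)/15) ≤ 2^(1:ℝ) := Real.rpow_le_rpow_of_exponent_le (by norm_num) (by norm_num)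
    rw [Real.rpow_one] at e3
    rw [e1, e2, div_eq_mul_inv]
    exact mul_le_mul_of_nonneg_right e3 (by positivity)
  have hmain : Real.log P ≤ K * (d/300 * Real.log 2) + n * Real.log 2 + n * K * ε := by
    have h4 : Real.log P / K ≤ d/300*Real.log 2 + n * (Real.log 2 / K + ε) := by
      have : (n:ℝ) * Real.log (2^(1/K) + ε) ≤ n * (Real.log 2 / K + ε) := by gcongr
      have : (1-1/K) * Real.log P = Real.log P - Real.log P / K := by ring
      linarith
    rw [div_le_iff₀ hK0] at h4
    have : (d/300*Real.log 2 + n * (Real.log 2 / K + ε)) * K = K * (d/300 * Real.log 2) + n * Real.log 2 + n * K * ε := by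
      field_simp; ring
    linarith
  have hKd : K * (d/300 * Real.log 2) = 0.8 * d * Real.log n := by
    rw [hKdef]; field_simp; ring
  have hKe : n * K * ε < 0.2 * d * Real.log n := by
    have hK' : K ≤ 350 * Real.log n := by
      rw [hKdef, div_le_iff₀ hl2]
      have := Real.log_two_gt_d9
      nlinarith
    have h14 : (3500:ℝ) < (n:ℝ)^14 := by
      calc (3500:ℝ) < 2^14 := by norm_num
        _ ≤ _ := by gcongr
    calc n * K * ε ≤ n * (350 * Real.log n) * (2/(n:ℝ)^16) := by gcongr
      _ = (700/(n:ℝ)^14) * (1/n) * Real.log n := by field_simp; ring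
      _ < 0.2 * (1/n) * Real.log n := by
        have : 0 < Real.log n := by linarith
        gcongr
        rw [div_lt_iff₀ (by positivity)]; linarith
      _ ≤ _ := by
        have : 0 < Real.log n := by linarith
        gcongr
  have hfin : Real.log P < Real.log ((n:ℝ)^d * 2^n) := by
    rw [Real.log_mul (by positivity) (by positivity), Real.log_rpow hn0, Real.log_pow]
    nlinarith
  exact (Real.log_lt_log_iff h0 (by positivity)).1 hfin
lemma markov_aux {β : Type*} (S T : Finset β) (hT : T ⊆ S) (w : β → ℕ) (c X : ℝ)
    (hw : ∀ x ∈ T, c ≤ w x) (hX : ∑ x ∈ S, (w x : ℝ) ≤ X) : (T.card : ℝ) * c ≤ X := by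
  calc (T.card : ℝ) * c = ∑ x ∈ T, c := by simp
    _ ≤ ∑ x ∈ T, (w x : ℝ) := Finset.sum_le_sum hw
    _ ≤ ∑ x ∈ S, (w x : ℝ) := Finset.sum_le_sum_of_subset_of_nonneg hT (fun _ _ _ => by positivity)
    _ ≤ X := hX

lemma card_split {β : Type*} (S : Finset β) (p : β → Prop) [DecidablePred p] :
    ((S.filter p).card : ℝ) + ((S.filter (fun x => ¬ p x)).card : ℝ) = S.card := by
  exact_mod_cast Finset.card_filter_add_card_filter_not (s := S) p

/-- subsets of `U` avoiding `i ∈ U` -/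
lemma card_avoid {n : ℕ} (S : Finset (Finset (Fin n))) (U : Finset (Fin n)) (i : Fin n) (hi : i ∈ U)
    (hS : ∀ A ∈ S, A ⊆ U ∧ i ∉ A) : (S.card : ℝ) ≤ 2^U.card / 2 := by
  have h1 : S ⊆ (U.erase i).powerset := fun A hA => by
    rw [Finset.mem_powerset, Finset.subset_erase]; exact hS A hA
  have h2 := Finset.card_le_card h1
  rw [Finset.card_powerset] at h2
  have h3 := Finset.card_erase_add_one hi
  have h4 : (S.card:ℝ) ≤ 2^(U.erase i).card := by exact_mod_cast h2
  rw [← h3, pow_succ]; linarith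

lemma card_sub {n : ℕ} (S : Finset (Finset (Fin n))) (U : Finset (Fin n))
    (hS : ∀ A ∈ S, A ⊆ U) : (S.card : ℝ) ≤ 2^U.card := by
  have h1 : S ⊆ U.powerset := fun A hA => by
    rw [Finset.mem_powerset]; exact hS A hA
  have h2 := Finset.card_le_card h1
  rw [Finset.card_powerset] at h2
  exact_mod_cast h2

lemma card_sup {n : ℕ} (S : Finset (Finset (Fin n))) (U : Finset (Fin n))
    (hS : ∀ A ∈ S, U ⊆ A) : (S.card : ℝ) ≤ 2^Uᶜ.card := by
  rw [← Finset.card_compls S]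
  refine card_sub _ _ fun A hA => ?_
  rw [Finset.mem_compls] at hA
  have := hS _ hA
  exact Finset.subset_compl_comm.1 this

lemma card_sup_mem {n : ℕ} (S : Finset (Finset (Fin n))) (U : Finset (Fin n)) (i : Fin n) (hi : i ∉ U)
    (hS : ∀ A ∈ S, U ⊆ A ∧ i ∈ A) : (S.card : ℝ) ≤ 2^Uᶜ.card / 2 := by
  rw [← Finset.card_compls S]
  refine card_avoid _ _ i (by simpa using hi) fun A hA => ?_
  rw [Finset.mem_compls] at hA
  have := hS _ hA
  exact ⟨Finset.subset_compl_comm.1 this.1, by simpa using this.2⟩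

lemma small_core (n : ℕ) (hn : 2 ≤ n) (δ : ℝ) (hδ : δ ≤ 1/(400*n))
    (𝒜 ℬ : Finset (Finset (Fin n)))
    (hX : ((𝒜 ×ˢ ℬ).filter (fun p => ¬ p.1 ⊆ p.2)).card ≤ δ * ((𝒜.card : ℝ) * ℬ.card))
    (hbig : (2:ℝ)^n ≤ (𝒜.card : ℝ) * ℬ.card) :
    (1 - 3*δ)^2 * ((𝒜.card : ℝ) * ℬ.card) ≤ 2^n := by
  have hn2 : (2:ℝ) ≤ n := by exact_mod_cast hn
  have hn0 : (0:ℝ) < n := by linarith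
  have hp2 : (0:ℝ) < 2^n := by positivity
  have hδn : δ * n ≤ 1/400 := by
    rw [le_div_iff₀ (by positivity)] at hδ; linarith
  set a : ℝ := (𝒜.card : ℝ) with ha
  set b : ℝ := (ℬ.card : ℝ) with hb
  have hab : 0 < a * b := by linarith
  have ha0 : 0 < a := by
    rcases (show 0 ≤ a by positivity).eq_or_lt with h | h
    · rw [← h] at hab; simp at hab
    · exact h
  have hb0 : 0 < b := by
    rcases (show 0 ≤ b by positivity).eq_or_lt with h | h
    · rw [← h] at hab; simp at hab
    · exact h
  have hδ3 : δ ≤ 1/800 := by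
    refine hδ.trans (one_div_le_one_div_of_le (by norm_num) (by linarith))
  let wA : Finset (Fin n) → ℕ := fun A => (ℬ.filter (fun B => ¬ A ⊆ B)).card
  let wB : Finset (Fin n) → ℕ := fun B => (𝒜.filter (fun A => ¬ A ⊆ B)).card
  have hXA : ∑ A ∈ 𝒜, (wA A : ℝ) ≤ δ * (a*b) := by
    refine le_trans (le_of_eq ?_) hX
    rw [Finset.card_filter, Finset.sum_product]
    simp only [wA, Finset.card_filter]
    push_cast; rfl
  have hXB : ∑ B ∈ ℬ, (wB B : ℝ) ≤ δ * (a*b) := by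
    refine le_trans (le_of_eq ?_) hX
    rw [Finset.card_filter, Finset.sum_product_right]
    simp only [wB, Finset.card_filter]
    push_cast; rfl
  -- good sets
  have sA := card_split 𝒜 (fun A => (wA A : ℝ) ≤ b/(20*n))
  set A' := 𝒜.filter (fun A => (wA A : ℝ) ≤ b/(20*n)) with hA'
  have hA'c : 0.95 * a ≤ A'.card := by
    have := markov_aux 𝒜 (𝒜.filter (fun A => ¬ (wA A : ℝ) ≤ b/(20*n))) (Finset.filter_subset _ _) wA
      (b/(20*n)) _ (fun x hx => (not_le.1 (Finset.mem_filter.1 hx).2).le) hXA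
    set r : ℝ := ((𝒜.filter (fun A => ¬ (wA A : ℝ) ≤ b/(20*n))).card : ℝ)
    have h2 : r ≤ δ * n * 20 * a := by
      rw [mul_div_assoc', div_le_iff₀ (by positivity)] at this
      have : r * b ≤ (δ * n * 20 * a) * b := by linarith
      exact le_of_mul_le_mul_right this hb0
    nlinarith
  let U : Finset (Fin n) := A'.biUnion id
  have hA'U : ∀ A ∈ A', A ⊆ U := fun A hA => Finset.subset_biUnion_of_mem id hA
  have hmiss : ∀ i ∈ U, ((ℬ.filter (fun B => i ∉ B)).card : ℝ) ≤ b/(20*n) := by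
    intro i hi
    obtain ⟨A, hA, hiA⟩ := Finset.mem_biUnion.1 hi
    have h1 := (Finset.mem_filter.1 hA).2
    refine le_trans ?_ h1
    simp only [wA]
    exact_mod_cast Finset.card_le_card (fun B hB => by
      rw [Finset.mem_filter] at hB ⊢
      exact ⟨hB.1, fun h => hB.2 (h hiA)⟩)
  have sB := card_split ℬ (fun B => U ⊆ B)
  set B' := ℬ.filter (fun B => U ⊆ B) with hB'
  have hB'c : 0.95 * b ≤ B'.card := by
    have h1 : (ℬ.filter (fun B => ¬ U ⊆ B)) ⊆ U.biUnion (fun i => ℬ.filter (fun B => i ∉ B)) := by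
      intro B hB
      rw [Finset.mem_filter] at hB
      obtain ⟨i, hi, hiB⟩ := Finset.not_subset.1 hB.2
      exact Finset.mem_biUnion.2 ⟨i, hi, Finset.mem_filter.2 ⟨hB.1, hiB⟩⟩
    have h2 : ((ℬ.filter (fun B => ¬ U ⊆ B)).card : ℝ) ≤ ∑ i ∈ U, ((ℬ.filter (fun B => i ∉ B)).card : ℝ) := by
      exact_mod_cast (Finset.card_le_card h1).trans Finset.card_biUnion_le
    have h3 := h2.trans (Finset.sum_le_sum hmiss)
    rw [Finset.sum_const, nsmul_eq_mul] at h3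
    have h4 : (U.card : ℝ) ≤ n := by
      have := Finset.card_le_univ U
      rw [Fintype.card_fin] at this
      exact_mod_cast this
    have h5 : (U.card : ℝ) * (b/(20*n)) ≤ n * (b/(20*n)) := by gcongr
    have h6 : n * (b/(20*n)) = b/20 := by field_simp
    linarith
  have hB'U : ∀ B ∈ B', U ⊆ B := fun B hB => (Finset.mem_filter.1 hB).2
  have hcA := card_sub A' U hA'U
  have hcB := card_sup B' U hB'U
  have hpow : (2:ℝ)^U.card * 2^Uᶜ.card = 2^n := by
    rw [← pow_add, Finset.card_add_card_compl, Fintype.card_fin]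
  have hu0 : (0:ℝ) < 2^U.card := by positivity
  have hv0 : (0:ℝ) < 2^Uᶜ.card := by positivity
  set u : ℝ := 2^U.card with hu
  set v : ℝ := 2^Uᶜ.card with hv
  have hprod : 0.9 * (u*v) ≤ (A'.card:ℝ) * B'.card := by
    have : (0.95*a)*(0.95*b) ≤ (A'.card:ℝ) * B'.card := by gcongr
    nlinarith
  have hA9 : 0.9 * u ≤ A'.card := by
    have : (0.9*u)*v ≤ (A'.card:ℝ) * v := by
      have : (A'.card:ℝ) * B'.card ≤ (A'.card:ℝ) * v := by gcongr
      linarith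
    exact le_of_mul_le_mul_right this hv0
  have hB9 : 0.9 * v ≤ B'.card := by
    have : (0.9*v)*u ≤ (B'.card:ℝ) * u := by
      have : (A'.card:ℝ) * B'.card ≤ u * B'.card := by gcongr
      linarith
    exact le_of_mul_le_mul_right this hu0
  -- bad B's
  have hbB : (1-3*δ) * b ≤ B'.card := by
    have h1 := markov_aux ℬ (ℬ.filter (fun B => ¬ U ⊆ B)) (Finset.filter_subset _ _) wB
      (a/3) _ (fun B hB => ?_) hXB
    · set r : ℝ := ((ℬ.filter (fun B => ¬ U ⊆ B)).card : ℝ)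
      have h2 : r ≤ 3*δ*b := by
        have : r * a ≤ (3*δ*b)*a := by linarith
        exact le_of_mul_le_mul_right this ha0
      linarith
    · obtain ⟨i, hi, hiB⟩ := Finset.not_subset.1 (Finset.mem_filter.1 hB).2
      have s1 := card_split A' (fun A => i ∉ A)
      have s2 := card_avoid (A'.filter (fun A => i ∉ A)) U i hi (fun A hA =>
        ⟨hA'U A (Finset.mem_filter.1 hA).1, (Finset.mem_filter.1 hA).2⟩)
      have s3 : ((A'.filter (fun A => ¬ i ∉ A)).card : ℝ) ≤ wB B := by
        simp only [wB]
        exact_mod_cast Finset.card_le_card (fun A hA => by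
          rw [Finset.mem_filter] at hA ⊢
          exact ⟨(Finset.mem_filter.1 hA.1).1, fun h => hiB (h (not_not.1 hA.2))⟩)
      rw [← hu] at s2
      linarith
  have sA2 := card_split 𝒜 (fun A => A ⊆ U)
  have hbA : (1-3*δ) * a ≤ (𝒜.filter (fun A => A ⊆ U)).card := by
    have h1 := markov_aux 𝒜 (𝒜.filter (fun A => ¬ A ⊆ U)) (Finset.filter_subset _ _) wA
      (b/3) _ (fun A hA => ?_) hXA
    · set r : ℝ := ((𝒜.filter (fun A => ¬ A ⊆ U)).card : ℝ)
      have h2 : r ≤ 3*δ*a := by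
        have : r * b ≤ (3*δ*a)*b := by linarith
        exact le_of_mul_le_mul_right this hb0
      linarith
    · obtain ⟨i, hiA, hi⟩ := Finset.not_subset.1 (Finset.mem_filter.1 hA).2
      have s1 := card_split B' (fun B => i ∈ B)
      have s2 := card_sup_mem (B'.filter (fun B => i ∈ B)) U i hi (fun B hB =>
        ⟨hB'U B (Finset.mem_filter.1 hB).1, (Finset.mem_filter.1 hB).2⟩)
      have s3 : ((B'.filter (fun B => ¬ i ∈ B)).card : ℝ) ≤ wA A := by
        simp only [wA]
        exact_mod_cast Finset.card_le_card (fun B hB => by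
          rw [Finset.mem_filter] at hB ⊢
          exact ⟨(Finset.mem_filter.1 hB.1).1, fun h => hB.2 (h hiA)⟩)
      rw [← hv] at s2
      linarith
  have hcA2 := card_sub (𝒜.filter (fun A => A ⊆ U)) U (fun A hA => (Finset.mem_filter.1 hA).2)
  calc (1 - 3*δ)^2 * (a*b) = ((1-3*δ)*a) * ((1-3*δ)*b) := by ring
    _ ≤ u * v := by
      have : 0 ≤ (1-3*δ)*b := mul_nonneg (by linarith) hb0.le
      exact mul_le_mul (hbA.trans hcA2) (hbB.trans hcB) this hu0.le
    _ = 2^n := hpow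

lemma small_case (n : ℕ) (hn : 2 ≤ n) (d : ℝ) (hd0 : 0 < d) (hd1 : d ≤ 1/(n:ℝ))
    (𝒜 ℬ : Finset (Finset (Fin n)))
    (h : (2 : ℝ) ^ (-d / 300) * ((𝒜.card : ℝ) * ℬ.card) ≤ (crossComp 𝒜 ℬ : ℝ)) :
    (𝒜.card : ℝ) * ℬ.card < (n : ℝ) ^ d * 2 ^ n := by
  by_contra! hcon
  have hn2 : (2:ℝ) ≤ n := by exact_mod_cast hn
  have hn0 : (0:ℝ) < n := by linarith
  have hl2 : 0 < Real.log 2 := Real.log_pos (by norm_num)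
  have hl2' := Real.log_two_lt_d9
  have hln : Real.log 2 ≤ Real.log n := Real.log_le_log (by norm_num) hn2
  set δ : ℝ := d * Real.log 2 / 300 with hδ
  have hδ0 : 0 < δ := by positivity
  have hpow : 1 - δ ≤ (2:ℝ)^(-d/300) := by
    rw [Real.rpow_def_of_pos (by norm_num)]
    have := Real.add_one_le_exp (Real.log 2 * (-d/300))
    have e : Real.log 2 * (-d/300) = -δ := by rw [hδ]; ring
    rw [e] at this ⊢; linarith
  have hnd : 1 + 300*δ ≤ (n:ℝ)^d := by
    rw [Real.rpow_def_of_pos hn0]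
    have := Real.add_one_le_exp (Real.log n * d)
    have : 300*δ = Real.log 2 * d := by rw [hδ]; ring
    nlinarith
  have hδn : δ ≤ 1/(400*n) := by
    have : δ ≤ d / 400 := by rw [hδ]; nlinarith
    have e : 1/(400*(n:ℝ)) = (1/n)/400 := by field_simp
    rw [e]; linarith
  have hδ8 : δ ≤ 1/800 := hδn.trans (one_div_le_one_div_of_le (by norm_num) (by linarith))
  have hp2 : (0:ℝ) < 2^n := by positivity
  have hX : (((𝒜 ×ˢ ℬ).filter (fun p => ¬ p.1 ⊆ p.2)).card : ℝ) ≤ δ * ((𝒜.card : ℝ) * ℬ.card) := by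
    have s := card_split (𝒜 ×ˢ ℬ) (fun p => p.1 ⊆ p.2)
    have c1 : (crossComp 𝒜 ℬ : ℝ) ≤ ((𝒜 ×ˢ ℬ).filter (fun p => p.1 ⊆ p.2)).card := by
      rw [crossComp]
      exact_mod_cast Finset.card_le_card (fun p hp => by
        rw [Finset.mem_filter] at hp ⊢
        exact ⟨hp.1, hp.2.subset⟩)
    rw [Finset.card_product] at s
    push_cast at s
    have : (1-δ) * ((𝒜.card : ℝ) * ℬ.card) ≤ (2 : ℝ) ^ (-d / 300) * ((𝒜.card : ℝ) * ℬ.card) := by gcongr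
    linarith
  have h1 : (1+300*δ) * 2^n ≤ (𝒜.card : ℝ) * ℬ.card := le_trans (by gcongr) hcon
  have h2 := small_core n hn δ hδn 𝒜 ℬ hX (by nlinarith)
  have h3 : (1-3*δ)^2 * ((1+300*δ) * 2^n) ≤ 2^n := le_trans (by gcongr) h2
  have h4 : (1-3*δ)^2 * (1+300*δ) ≤ 1 := by
    have : ((1-3*δ)^2 * (1+300*δ)) * 2^n ≤ 1 * 2^n := by linarith
    exact le_of_mul_le_mul_right this hp2
  nlinarith [sq_nonneg δ, mul_pos hδ0 hδ0, mul_pos (mul_pos hδ0 hδ0) hδ0]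

theorem stmt2 (n : ℕ) (hn : 2 ≤ n) (d : ℝ) (hd0 : 0 < d) (hd1 : d ≤ 1)
    (𝒜 ℬ : Finset (Finset (Fin n)))
    (h : (2 : ℝ) ^ (-d / 300) * ((𝒜.card : ℝ) * ℬ.card) ≤ (crossComp 𝒜 ℬ : ℝ)) :
    (𝒜.card : ℝ) * ℬ.card < (n : ℝ) ^ d * 2 ^ n := by
  rcases le_total d (1/(n:ℝ)) with hh | hh
  · exact small_case n hn d hd0 hh 𝒜 ℬ h
  · exact large_case_s2 n hn d hh 𝒜 ℬ h
end

section
/- For every positive integer k there exist positive constants β = β(k) and C = C(k) such that the following holds for every n and every real δ > 0: if ℱ is a family of m subsets of [n] with m = 2^{(1/(k+1) + δ)n}, then c(ℱ) ≤ (1 − 1/k)·binom(m,2) + C·m^{2 − βδ^{k+1}}. -/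
open Finset

section aux
open scoped Classical
variable {V : Type*} [Fintype V]

def clq (R : V → V → Prop) {r : ℕ} (f : Fin r → V) : Prop := ∀ i j, i ≠ j → R (f i) (f j)

noncomputable def cdeg (R : V → V → Prop) {r : ℕ} (T : Fin r → V) : ℝ :=
  ∑ y : V, if ∀ j, R (T j) y then (1:ℝ) else 0

noncomputable def hh (R : V → V → Prop) (r : ℕ) : ℝ :=
  ∑ f : Fin r → V, if clq R f then (1:ℝ) else 0

lemma clq_insertNth {R : V → V → Prop} (hR : ∀ a b, R a b → R b a) {r : ℕ} (i : Fin (r+1)) (x : V)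
    (T : Fin r → V) : clq R (i.insertNth (α := fun _ => V) x T) ↔ clq R T ∧ ∀ j, R (T j) x := by
  unfold clq
  simp only [Fin.forall_iff_succAbove i, Fin.insertNth_apply_same, Fin.insertNth_apply_succAbove]
  constructor
  · rintro ⟨h1, h2⟩
    refine ⟨fun a b hab => (h2 a).2 b (fun h => hab (Fin.succAbove_right_injective h)), fun j => (h2 j).1 (Fin.succAbove_ne i j)⟩
  · rintro ⟨h1, h2⟩
    refine ⟨⟨fun h => absurd rfl h, fun j _ => hR _ _ (h2 j)⟩, fun a => ⟨fun _ => h2 a, fun b hab => h1 a b (fun h => hab (by rw [h]))⟩⟩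

lemma sum_insertNth {r : ℕ} (i : Fin (r+1)) (g : (Fin (r+1) → V) → ℝ) :
    ∑ f, g f = ∑ T : Fin r → V, ∑ x : V, g (i.insertNth (α := fun _ => V) x T) := by
  rw [← (Fin.insertNthEquiv (fun _ => V) i).sum_comp, Fintype.sum_prod_type, Finset.sum_comm]
  rfl

lemma hh_succ {R : V → V → Prop} (hR : ∀ a b, R a b → R b a) (r : ℕ) :
    hh R (r+1) = ∑ T : Fin r → V, if clq R T then cdeg R T else 0 := by
  unfold hh
  rw [sum_insertNth 0]
  refine Finset.sum_congr rfl fun T _ => ?_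
  simp only [clq_insertNth hR, cdeg]
  split_ifs with h <;> simp [h]

noncomputable def SS (R : V → V → Prop) (r : ℕ) : ℝ :=
  ∑ T : Fin r → V, if clq R T then cdeg R T ^ 2 else 0

lemma SS_eq {R : V → V → Prop} (hR : ∀ a b, R a b → R b a) {r : ℕ} (i : Fin (r+1)) :
    SS R r = ∑ K : Fin (r+1) → V, ∑ y : V,
      if clq R K ∧ ∀ j, j ≠ i → R (K j) y then (1:ℝ) else 0 := by
  unfold SS
  rw [sum_insertNth i]
  refine Finset.sum_congr rfl fun T _ => ?_
  simp only [clq_insertNth hR, Fin.forall_iff_succAbove i, Fin.insertNth_apply_same,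
    Fin.insertNth_apply_succAbove, ne_eq, not_true_eq_false, false_imp_iff, true_and,
    Fin.succAbove_ne, not_false_eq_true, true_imp_iff]
  by_cases h : clq R T
  · simp only [h, true_and, if_true, cdeg, sq, Finset.sum_mul_sum]
    refine Finset.sum_congr rfl fun x _ => Finset.sum_congr rfl fun y _ => ?_
    by_cases h1 : ∀ j, R (T j) x <;> by_cases h2 : ∀ j, R (T j) y <;> simp [h1, h2]
  · simp [h]

lemma SS_le {R : V → V → Prop} (hR : ∀ a b, R a b → R b a) (r : ℕ) :
    (r+1 : ℝ) * SS R r ≤ Fintype.card V * hh R (r+1) + r * hh R (r+2) := by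
  have h1 : (r+1 : ℝ) * SS R r = ∑ i : Fin (r+1), SS R r := by simp
  rw [h1, Finset.sum_congr rfl (fun i _ => SS_eq hR i), Finset.sum_comm, hh_succ hR (r+1), hh,
    Finset.mul_sum, Finset.mul_sum, ← Finset.sum_add_distrib]
  refine Finset.sum_le_sum fun K _ => ?_
  by_cases h : clq R K
  swap
  · simp [h]
  simp only [h, true_and, if_true]
  rw [Finset.sum_comm]
  have : (Fintype.card V : ℝ) * 1 + r * cdeg R K
      = ∑ y : V, (1 + r * if ∀ j, R (K j) y then (1:ℝ) else 0) := by
    rw [Finset.sum_add_distrib, ← Finset.mul_sum]; simp [cdeg]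
  rw [this]
  refine Finset.sum_le_sum fun y _ => ?_
  by_cases hy : ∀ j, R (K j) y
  · simp [hy, add_comm]
  · simp only [hy, if_false, mul_zero, add_zero]
    rw [Finset.sum_boole]
    norm_cast
    rw [Finset.card_le_one]
    intro a ha b hb
    simp only [Finset.mem_filter, Finset.mem_univ, true_and] at ha hb
    by_contra hab
    apply hy
    intro j
    by_cases hj : j = a
    · exact hb j (by rw [hj]; exact hab)
    · exact ha j hj

lemma hh_key {R : V → V → Prop} (hR : ∀ a b, R a b → R b a) (r : ℕ) :
    (r+1 : ℝ) * hh R (r+1) ^ 2 ≤ hh R r * (Fintype.card V * hh R (r+1) + r * hh R (r+2)) := by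
  have h0 : 0 ≤ hh R r := Finset.sum_nonneg fun _ _ => by split_ifs <;> norm_num
  have cs : hh R (r+1) ^ 2 ≤ hh R r * SS R r := by
    have := Finset.sum_mul_sq_le_sq_mul_sq (Finset.univ : Finset (Fin r → V))
      (fun T => if clq R T then (1:ℝ) else 0) (fun T => if clq R T then cdeg R T else 0)
    have e1 : hh R (r+1) = ∑ T : Fin r → V, (if clq R T then (1:ℝ) else 0) * (if clq R T then cdeg R T else 0) := by
      rw [hh_succ hR]; refine Finset.sum_congr rfl fun T _ => ?_
      split_ifs <;> simp
    have e2 : hh R r = ∑ T : Fin r → V, (if clq R T then (1:ℝ) else 0)^2 := by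
      rw [hh]; refine Finset.sum_congr rfl fun T _ => ?_
      split_ifs <;> simp
    have e3 : SS R r = ∑ T : Fin r → V, (if clq R T then cdeg R T else 0)^2 := by
      rw [SS]; refine Finset.sum_congr rfl fun T _ => ?_
      split_ifs <;> simp
    rw [e1, e2, e3]; exact this
  calc _ ≤ (r+1:ℝ) * (hh R r * SS R r) := by gcongr
    _ = hh R r * ((r+1:ℝ) * SS R r) := by ring
    _ ≤ _ := by gcongr; exact SS_le hR r

lemma moon {R : V → V → Prop} (hR : ∀ a b, R a b → R b a) (k : ℕ) (hk : 0 < k) (η : ℝ) (hη : 0 < η)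
    (hV : 0 < Fintype.card V)
    (h2 : (Fintype.card V : ℝ)^2 * (1 - 1 / k + η) ≤ hh R 2) :
    η ^ k * (Fintype.card V : ℝ) ^ (k+1) ≤ hh R (k+1) := by
  set m : ℝ := (Fintype.card V : ℝ) with hm
  have hm0 : 0 < m := by rw [hm]; exact_mod_cast hV
  have hk' : (0:ℝ) < k := by exact_mod_cast hk
  have h1 : hh R 1 = m := by
    have : ∀ f : Fin 1 → V, clq R f := fun f i j h => absurd (Subsingleton.elim i j) h
    simp [hh, this, hm]
  have main : ∀ r : ℕ, r + 1 ≤ k → η ^ r * m ^ (r+1) ≤ hh R (r+1) ∧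
      m * hh R (r+1) * (1 - (r+1) * (1/k - η)) ≤ hh R (r+2) := by
    intro r
    induction r with
    | zero =>
      intro _
      refine ⟨by simp [h1], ?_⟩
      simp only [zero_add, h1]
      push_cast
      refine le_trans (le_of_eq ?_) h2
      ring
    | succ r ih =>
      intro hr
      obtain ⟨a, b⟩ := ih (by omega)
      have hr' : ((r:ℝ)+1+1) ≤ k := by exact_mod_cast hr
      have pos : 0 < hh R (r+1) := lt_of_lt_of_le (by positivity) a
      have q : η ≤ 1 - (r+1) * (1/k - η) := by
        have : ((r:ℝ)+1) * (1/k) ≤ 1 := by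
          rw [mul_one_div, div_le_one hk']; linarith
        have : 0 ≤ (r:ℝ) * η := by positivity
        nlinarith
      have pos2 : η ^ (r+1) * m ^ (r+2) ≤ hh R (r+2) := by
        calc _ = m * (η ^ r * m ^ (r+1)) * η := by ring
          _ ≤ m * hh R (r+1) * (1 - (r+1) * (1/k - η)) := by gcongr
          _ ≤ _ := b
      refine ⟨pos2, ?_⟩
      have p2 : 0 < hh R (r+2) := lt_of_lt_of_le (by positivity) pos2
      have key := hh_key hR (r+1)
      push_cast at key ⊢
      have e : ((r:ℝ)+1+1) * (m * hh R (r+1) * (1 - (r+1) * (1/k - η))) * hh R (r+2) ≤ hh R (r+1) * (m * hh R (r+2) + (r+1) * hh R (r+3)) := by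
        refine le_trans ?_ key
        calc _ ≤ ((r:ℝ)+1+1) * hh R (r+2) * hh R (r+2) := by gcongr
          _ = _ := by ring
      have e2 : (hh R (r+1) * (r+1)) * (m * hh R (r+2) * (1 - (r+1+1) * (1/k - η))) ≤ (hh R (r+1) * (r+1)) * hh R (r+3) := by
        linarith
      exact le_of_mul_le_mul_left e2 (by positivity)
  obtain ⟨k, rfl⟩ : ∃ j, k = j + 1 := ⟨k-1, by omega⟩
  obtain ⟨a, b⟩ := main k le_rfl
  refine le_trans ?_ b
  have : (1 - ((k:ℝ)+1) * (1/((k+1:ℕ):ℝ) - η)) = (k+1) * η := by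
    push_cast; field_simp; ring
  rw [this]
  calc _ = m * (η ^ k * m ^ (k+1)) * η := by ring
    _ ≤ m * hh R (k+1) * ((k+1) * η) := by
      have : η ≤ (k+1) * η := by nlinarith [show (0:ℝ) ≤ k from by positivity]
      have p : 0 < η ^ k * m ^ (k+1) := by positivity
      have p2 : 0 < hh R (k+1) := p.trans_le a
      gcongr

lemma jens {X : Type*} [Fintype X] (hX : 0 < Fintype.card X) (f : X → ℝ) (hf : ∀ x, 0 ≤ f x) (e : ℕ) :
    ((∑ x, f x) / Fintype.card X) ^ e ≤ (∑ x, f x ^ e) / Fintype.card X := by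
  have hX' : (0:ℝ) < Fintype.card X := by exact_mod_cast hX
  have := Real.pow_arith_mean_le_arith_mean_pow (Finset.univ : Finset X)
    (fun _ => 1 / (Fintype.card X : ℝ)) f (fun _ _ => by positivity)
    (by simp [hX'.ne']) (fun x _ => hf x) e
  rw [← Finset.mul_sum, ← Finset.mul_sum] at this
  rw [div_eq_mul_one_div, mul_comm, div_eq_mul_one_div (∑ x, f x ^ e), mul_comm (∑ x, f x ^ e)]
  exact this

/-- blow-up counting -/
lemma blow (t : ℕ) (hV : 0 < Fintype.card V) (d : ℕ) : ∀ (S : (Fin d → V) → Prop),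
    ((∑ f : Fin d → V, if S f then (1:ℝ) else 0) / (Fintype.card V : ℝ) ^ d) ^ (t ^ d) ≤
    (∑ F : Fin d → Fin t → V, if ∀ φ : Fin d → Fin t, S (fun i => F i (φ i)) then (1:ℝ) else 0)
      / ((Fintype.card V : ℝ) ^ t) ^ d := by
  have hV' : (0:ℝ) < Fintype.card V := by exact_mod_cast hV
  induction d with
  | zero =>
    intro S
    have : ∀ F : Fin 0 → Fin t → V, ∀ φ : Fin 0 → Fin t, (fun i => F i (φ i)) = (default : Fin 0 → V) :=
      fun F φ => Subsingleton.elim _ _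
    simp only [this]
    by_cases hS : S default <;> simp [hS, Finset.filter_singleton]
  | succ d ih =>
    intro S
    set m : ℝ := (Fintype.card V : ℝ) with hm
    obtain ⟨S', hS'⟩ : ∃ S' : (Fin t → V) → (Fin d → V) → Prop, ∀ x y, S' x y ↔ ∀ j, S (Fin.insertNth (α := fun _ => V) 0 (x j) y) := ⟨_, fun _ _ => Iff.rfl⟩
    -- rewrite RHS
    have hR : (∑ F : Fin (d+1) → Fin t → V,
        if ∀ φ : Fin (d+1) → Fin t, S (fun i => F i (φ i)) then (1:ℝ) else 0)
        = ∑ x : Fin t → V, ∑ G : Fin d → Fin t → V,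
          if ∀ ψ : Fin d → Fin t, S' x (fun i => G i (ψ i)) then (1:ℝ) else 0 := by
      rw [sum_insertNth 0, Finset.sum_comm]
      refine Finset.sum_congr rfl fun x _ => Finset.sum_congr rfl fun G _ => ?_
      congr 1
      apply propext
      have key : ∀ (j : Fin t) (ψ : Fin d → Fin t),
          (fun i => (Fin.insertNth (α := fun _ => Fin t → V) 0 x G : Fin (d+1) → Fin t → V) i
            ((Fin.insertNth (α := fun _ => Fin t) 0 j ψ : Fin (d+1) → Fin t) i))
          = Fin.insertNth (α := fun _ => V) 0 (x j) (fun i => G i (ψ i)) := by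
        intro j ψ
        funext i
        refine Fin.cases ?_ (fun i => ?_) i <;> simp
      constructor
      · intro h ψ
        rw [hS']
        intro j
        rw [← key]; exact h _
      · intro h φ
        have := (hS' _ _).1 (h (fun i => φ i.succ)) (φ 0)
        rw [← key] at this
        convert this using 3 with i
        refine Fin.cases ?_ (fun i => ?_) i <;> simp
    have hL : ((∑ f : Fin (d+1) → V, if S f then (1:ℝ) else 0) / m ^ (d+1)) ^ t
        ≤ (∑ x : Fin t → V, (∑ f : Fin d → V, if S' x f then (1:ℝ) else 0) / m ^ d) / m ^ t := by
      have := jens (X := Fin d → V) (by simp [hV]) 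
        (fun y => (∑ x : V, if S (Fin.insertNth (α := fun _ => V) 0 x y) then (1:ℝ) else 0) / m)
        (fun y => by
          apply div_nonneg _ hV'.le
          exact Finset.sum_nonneg fun _ _ => by split_ifs <;> norm_num) t
      have c : ((Fintype.card (Fin d → V) : ℕ) : ℝ) = m ^ d := by simp [hm]
      rw [c, ← Finset.sum_div, ← sum_insertNth 0 (fun f => if S f then (1:ℝ) else 0), div_div] at this
      rw [show m ^ (d+1) = m * m ^ d by ring]
      refine this.trans (le_of_eq ?_)
      simp only [div_pow, Fintype.sum_pow]
      rw [← Finset.sum_div, ← Finset.sum_div, div_div, div_div, mul_comm, Finset.sum_comm]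
      congr 1
      refine Finset.sum_congr rfl fun x _ => Finset.sum_congr rfl fun y _ => ?_
      rw [Fintype.prod_boole]
      by_cases hq : S' x y
      · rw [if_pos hq, if_pos ((hS' x y).1 hq)]
      · rw [if_neg hq, if_neg (fun h => hq ((hS' x y).2 h))]
    have hL2 := jens (X := Fin t → V) (by simp [hV]) 
        (fun x => (∑ f : Fin d → V, if S' x f then (1:ℝ) else 0) / m ^ d)
        (fun x => by
          apply div_nonneg _ (by positivity)
          exact Finset.sum_nonneg fun _ _ => by split_ifs <;> norm_num) (t ^ d)
    have c : ((Fintype.card (Fin t → V) : ℕ) : ℝ) = m ^ t := by simp [hm]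
    rw [c] at hL2
    have nn : 0 ≤ (∑ f : Fin (d+1) → V, if S f then (1:ℝ) else 0) / m ^ (d+1) := by
      apply div_nonneg _ (by positivity)
      exact Finset.sum_nonneg fun _ _ => by split_ifs <;> norm_num
    calc _ = (((∑ f : Fin (d+1) → V, if S f then (1:ℝ) else 0) / m ^ (d+1)) ^ t) ^ (t ^ d) := by
          rw [← pow_mul, pow_succ' t d]
      _ ≤ _ := by gcongr
      _ ≤ _ := hL2
      _ ≤ (∑ x : Fin t → V, (∑ G : Fin d → Fin t → V,
          if ∀ ψ : Fin d → Fin t, S' x (fun i => G i (ψ i)) then (1:ℝ) else 0) / (m^t)^d) / m ^ t := by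
          gcongr with x
          exact ih (S' x)
      _ = _ := by
          rw [hR, ← Finset.sum_div, div_div]
          congr 1

lemma sort_le {n : ℕ} (ℱ : Finset (Finset (Fin n))) (d : ℕ) :
    hh (fun a b : {A // A ∈ ℱ} => a < b ∨ b < a) d ≤
      d.factorial * ∑ f : Fin d → {A // A ∈ ℱ}, if StrictMono f then (1:ℝ) else 0 := by
  have h1 : ∀ f : Fin d → {A // A ∈ ℱ},
      (if clq (fun a b : {A // A ∈ ℱ} => a < b ∨ b < a) f then (1:ℝ) else 0) ≤
      ∑ σ : Equiv.Perm (Fin d), if StrictMono (f ∘ σ) then (1:ℝ) else 0 := by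
    intro f
    split_ifs with h
    · let σ := Tuple.sort (fun i => (f i).1.card)
      have hs : Monotone ((fun i => (f i).1.card) ∘ σ) := Tuple.monotone_sort _
      have : StrictMono (f ∘ σ) := by
        intro i j hij
        rcases h (σ i) (σ j) (fun e => hij.ne (σ.injective e)) with h | h
        · exact h
        · exfalso
          have a := hs hij.le
          have b : (f (σ j)).1.card < (f (σ i)).1.card := Finset.card_lt_card h
          simp only [Function.comp] at a
          omega
      refine le_trans ?_ (Finset.single_le_sum (f := fun σ : Equiv.Perm (Fin d) => if StrictMono (f ∘ σ) then (1:ℝ) else 0) (fun σ _ => ?_) (Finset.mem_univ σ))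
      · simp [this]
      · split_ifs <;> norm_num
    · exact Finset.sum_nonneg fun _ _ => by split_ifs <;> norm_num
  refine (Finset.sum_le_sum fun f _ => h1 f).trans ?_
  rw [Finset.sum_comm]
  have : ∀ σ : Equiv.Perm (Fin d), (∑ f : Fin d → {A // A ∈ ℱ}, if StrictMono (f ∘ σ) then (1:ℝ) else 0)
      = ∑ f : Fin d → {A // A ∈ ℱ}, if StrictMono f then (1:ℝ) else 0 := by
    intro σ
    exact (Equiv.arrowCongr σ.symm (Equiv.refl {A // A ∈ ℱ})).sum_comp
      (fun f => if StrictMono f then (1:ℝ) else 0)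
  simp [this, Fintype.card_perm]

def DD {n t : ℕ} {ℱ : Finset (Finset (Fin n))} (x : Fin t → {A // A ∈ ℱ}) : Finset (Fin n) :=
  (Finset.univ.sup fun j => (x j).1) \ (Finset.univ.inf fun j => (x j).1)

lemma B_le {n : ℕ} (t k : ℕ) (ℱ : Finset (Finset (Fin n))) :
    (Finset.univ.filter fun x : Fin t → {A // A ∈ ℱ} => (k+1) * (DD x).card ≤ n).card
      ≤ 2 ^ (n / (k+1) * t) * (2 ^ n * 2 ^ n) := by
  have hc : (Finset.univ : Finset (Finset (Fin n) × Finset (Fin n))).card = 2 ^ n * 2 ^ n := by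
    simp
  rw [← hc]
  apply Finset.card_le_mul_card_image_of_maps_to
    (f := fun x : Fin t → {A // A ∈ ℱ} => ((Finset.univ.inf fun j => (x j).1), DD x))
    (fun _ _ => Finset.mem_univ _)
  rintro ⟨I, D⟩ -
  by_cases hD : (k+1) * D.card ≤ n
  · have e : (Fintype.piFinset (fun _ : Fin t => D.powerset)).card ≤ 2 ^ (n / (k+1) * t) := by
      rw [Fintype.card_piFinset]
      simp only [Finset.card_powerset, Finset.prod_const, Finset.card_univ, Fintype.card_fin]
      rw [← pow_mul]
      apply Nat.pow_le_pow_right (by norm_num)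
      apply Nat.mul_le_mul_right
      rw [Nat.le_div_iff_mul_le (by omega)]
      linarith
    refine le_trans ?_ e
    apply Finset.card_le_card_of_injOn (fun x j => (x j).1 ∩ D)
    · intro x _
      simp
    · intro x hx y hy hxy
      simp only [Finset.coe_filter, Finset.mem_filter, Finset.mem_univ, true_and, Set.mem_ofPred_eq, Prod.mk.injEq] at hx hy
      have hrec : ∀ z : Fin t → {A // A ∈ ℱ}, (Finset.univ.inf fun j => (z j).1) = I → DD z = D →
          ∀ j, (z j).1 = I ∪ ((z j).1 ∩ D) := by
        intro z h1 h2 j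
        have a : I ⊆ (z j).1 := by rw [← h1]; exact Finset.inf_le (f := fun j => (z j).1) (Finset.mem_univ j)
        have b : (z j).1 ⊆ Finset.univ.sup fun j => (z j).1 := Finset.le_sup (f := fun j => (z j).1) (Finset.mem_univ j)
        have h3 : (Finset.univ.sup fun j => (z j).1) \ I = D := by rw [← h1]; exact h2
        ext u
        have a' := @a u
        have b' := @b u
        rw [← h3]
        simp only [Finset.mem_union, Finset.mem_inter, Finset.mem_sdiff]
        tauto
      funext j
      apply Subtype.ext
      rw [hrec x hx.2.1 hx.2.2 j, hrec y hy.2.1 hy.2.2 j]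
      have := congrFun hxy j
      simp only at this
      rw [this]
  · rw [Finset.card_eq_zero.2]
    · positivity
    · rw [Finset.filter_eq_empty_iff]
      intro x hx h
      simp only [Finset.mem_filter, Finset.mem_univ, true_and, Prod.mk.injEq] at hx h
      rw [h.2] at hx
      exact hD hx

lemma blow_le {n : ℕ} (t k : ℕ) (ℱ : Finset (Finset (Fin n))) :
    (∑ F : Fin (k+1) → Fin t → {A // A ∈ ℱ},
      if ∀ φ : Fin (k+1) → Fin t, StrictMono (fun i => F i (φ i)) then (1:ℝ) else 0)
    ≤ (k+1) * (((ℱ.card : ℝ) ^ t) ^ k * (2 ^ (n / (k+1) * t) * (2 ^ n * 2 ^ n))) := by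
  let P : (Fin t → {A // A ∈ ℱ}) → Prop := fun x => (k+1) * (DD x).card ≤ n
  have h1 : ∀ F : Fin (k+1) → Fin t → {A // A ∈ ℱ},
      (if ∀ φ : Fin (k+1) → Fin t, StrictMono (fun i => F i (φ i)) then (1:ℝ) else 0)
      ≤ ∑ i, if P (F i) then (1:ℝ) else 0 := by
    intro F
    split_ifs with h
    swap
    · exact Finset.sum_nonneg fun _ _ => by split_ifs <;> norm_num
    have lt : ∀ i i', i < i' → ∀ j j', (F i j).1 ⊆ (F i' j').1 := by
      intro i i' hi j j'
      have := h (fun a => if a = i then j else j') hi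
      simp only [if_true, hi.ne', if_false] at this
      exact (show (F i j) < (F i' j') from this).le
    have dis : ∀ i i', i < i' → Disjoint (DD (F i)) (DD (F i')) := by
      intro i i' hi
      rw [Finset.disjoint_left]
      intro a ha hb
      simp only [DD, Finset.mem_sdiff, Finset.mem_sup, Finset.mem_inf, Finset.mem_univ, true_and, true_imp_iff] at ha hb
      obtain ⟨⟨j, hj⟩, -⟩ := ha
      exact hb.2 fun j' => lt i i' hi j j' hj
    have tot : ∑ i, (DD (F i)).card ≤ n := by
      rw [← Finset.card_biUnion]
      · exact (Finset.card_le_univ _).trans (by simp)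
      · intro i _ i' _ hne
        rcases lt_or_gt_of_ne hne with h | h
        · exact dis _ _ h
        · exact (dis _ _ h).symm
    obtain ⟨i, hi⟩ : ∃ i, P (F i) := by
      by_contra hcon
      push Not at hcon
      have : ∑ i : Fin (k+1), n < ∑ i : Fin (k+1), (k+1) * (DD (F i)).card :=
        Finset.sum_lt_sum_of_nonempty Finset.univ_nonempty (fun i _ => by have := hcon i; simpa [P] using this)
      rw [← Finset.mul_sum] at this
      simp at this
      omega
    refine le_trans ?_ (Finset.single_le_sum (f := fun i => if P (F i) then (1:ℝ) else 0) (fun σ _ => ?_) (Finset.mem_univ i))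
    · simp [hi]
    · split_ifs <;> norm_num
  refine (Finset.sum_le_sum fun f _ => h1 f).trans ?_
  rw [Finset.sum_comm]
  have h2 : ∀ i : Fin (k+1), (∑ F : Fin (k+1) → Fin t → {A // A ∈ ℱ}, if P (F i) then (1:ℝ) else 0)
      ≤ (((ℱ.card : ℝ) ^ t) ^ k * (2 ^ (n / (k+1) * t) * (2 ^ n * 2 ^ n))) := by
    intro i
    rw [sum_insertNth i]
    simp only [Fin.insertNth_apply_same]
    rw [Finset.sum_const, Finset.sum_boole, nsmul_eq_mul]
    have := B_le t k ℱ
    have h3 : ((Finset.univ.filter fun x : Fin t → {A // A ∈ ℱ} => P x).card : ℝ) ≤ (2 ^ (n / (k+1) * t) * (2 ^ n * 2 ^ n)) := by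
      exact_mod_cast this
    have h4 : (((Finset.univ : Finset (Fin k → Fin t → {A // A ∈ ℱ})).card : ℕ) : ℝ) = ((ℱ.card : ℝ) ^ t) ^ k := by
      simp
    rw [h4]
    gcongr
  refine (Finset.sum_le_sum fun i _ => h2 i).trans (le_of_eq ?_)
  simp

lemma hh_two {n : ℕ} (ℱ : Finset (Finset (Fin n))) :
    2 * (compCount ℱ : ℝ) ≤ hh (fun a b : {A // A ∈ ℱ} => a < b ∨ b < a) 2 := by
  have hc : (compCount ℱ : ℝ) = ∑ a : {A // A ∈ ℱ}, ∑ b : {A // A ∈ ℱ}, if a < b then (1:ℝ) else 0 := by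
    unfold compCount crossComp
    rw [Finset.card_filter, Finset.sum_product]
    push_cast
    rw [← Finset.sum_coe_sort]
    refine Finset.sum_congr rfl fun a _ => ?_
    rw [← Finset.sum_coe_sort]
    refine Finset.sum_congr rfl fun b _ => ?_
    rfl
  have hc2 : (compCount ℱ : ℝ) = ∑ a : {A // A ∈ ℱ}, ∑ b : {A // A ∈ ℱ}, if b < a then (1:ℝ) else 0 := by
    rw [hc, Finset.sum_comm]
  rw [two_mul]
  nth_rewrite 1 [hc]
  rw [hc2, ← Finset.sum_add_distrib, hh, ← (finTwoArrowEquiv {A // A ∈ ℱ}).symm.sum_comp, Fintype.sum_prod_type]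
  refine Finset.sum_le_sum fun a _ => ?_
  rw [← Finset.sum_add_distrib]
  refine Finset.sum_le_sum fun b _ => ?_
  have : clq (fun a b : {A // A ∈ ℱ} => a < b ∨ b < a) ((finTwoArrowEquiv {A // A ∈ ℱ}).symm (a, b)) ↔ (a < b ∨ b < a) := by
    simp only [clq, finTwoArrowEquiv, Fin.forall_fin_two]
    simp
    tauto
  rw [if_congr this rfl rfl]
  by_cases h1 : a < b
  · have h2 : ¬ b < a := h1.not_gt
    simp [h1, h2]
  · simp [h1]

lemma combine {n : ℕ} (t k : ℕ) (hk : 0 < k) (ℱ : Finset (Finset (Fin n))) (hF : 0 < ℱ.card) (η : ℝ) (hη : 0 < η)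
    (h : (ℱ.card : ℝ)^2 * (1 - 1 / k + η) ≤ 2 * (compCount ℱ : ℝ)) :
    (η ^ k / (k+1).factorial) ^ (t ^ (k+1)) * (ℱ.card : ℝ) ^ t ≤
      (k+1) * (2 ^ (n / (k+1) * t) * (2 ^ n * 2 ^ n)) := by
  have hV : Fintype.card {A // A ∈ ℱ} = ℱ.card := by simp
  have h1 := moon (R := fun a b : {A // A ∈ ℱ} => a < b ∨ b < a) (fun a b h => h.symm) k hk η hη
    (by rw [hV]; exact hF) (by rw [hV]; exact h.trans (hh_two ℱ))
  have h2 := sort_le ℱ (k+1)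
  have h3 := blow t (by rw [hV]; exact hF) (k+1) (fun f : Fin (k+1) → {A // A ∈ ℱ} => StrictMono f)
  have h4 := blow_le t k ℱ
  rw [hV] at h1 h3
  set m : ℝ := (ℱ.card : ℝ)
  have hm : 0 < m := by simp only [m]; exact_mod_cast hF
  set Z := ∑ f : Fin (k+1) → {A // A ∈ ℱ}, if StrictMono f then (1:ℝ) else 0
  have h5 : η ^ k / (k+1).factorial ≤ Z / m ^ (k+1) := by
    rw [div_le_div_iff₀ (by positivity) (by positivity)]
    linarith
  have h3' : (Z / m ^ (k+1)) ^ (t ^ (k+1)) ≤ (∑ F : Fin (k+1) → Fin t → {A // A ∈ ℱ},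
      if ∀ φ : Fin (k+1) → Fin t, StrictMono (fun i => F i (φ i)) then (1:ℝ) else 0) / (m ^ t) ^ (k+1) := by
    convert h3
  have h6 := (pow_le_pow_left₀ (by positivity) h5 (t ^ (k+1))).trans h3'
  rw [le_div_iff₀ (by positivity)] at h6
  have h7 := h6.trans h4
  have : 0 < (m ^ t) ^ k := by positivity
  refine le_of_mul_le_mul_right ?_ this
  calc _ = (η ^ k / (k+1).factorial) ^ (t ^ (k+1)) * (m ^ t) ^ (k+1) := by ring
    _ ≤ _ := h7
    _ = _ := by ring
end aux

theorem stmt4 (k : ℕ) (hk : 0 < k) :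
    ∃ β C : ℝ, 0 < β ∧ 0 < C ∧
      ∀ (n : ℕ) (δ : ℝ), 0 < δ →
        ∀ ℱ : Finset (Finset (Fin n)),
          (ℱ.card : ℝ) = 2 ^ ((1 / (k + 1 : ℝ) + δ) * n) →
          (compCount ℱ : ℝ) ≤ (1 - 1 / (k : ℝ)) * (ℱ.card.choose 2 : ℝ) +
            C * (ℱ.card : ℝ) ^ (2 - β * δ ^ (k + 1)) := by
  have hk1 : (1:ℝ) ≤ k := by exact_mod_cast hk
  have hk0 : (0:ℝ) < k := by linarith
  set C : ℝ := (k+1).factorial * (k+1) with hC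
  have hfac : (1:ℝ) ≤ (k+1).factorial := by exact_mod_cast Nat.factorial_pos (k+1)
  have hC1 : 1 ≤ C := by nlinarith
  refine ⟨1 / (k * 5 ^ (k+1)), C, by positivity, by positivity, ?_⟩
  intro n δ hδ ℱ hF
  have hinv : 1 / (k:ℝ) ≤ 1 := by rw [div_le_one hk0]; exact hk1
  have hinv0 : 0 < 1 / (k:ℝ) := by positivity
  rcases Nat.eq_zero_or_pos n with hn | hn
  · have h1 : (ℱ.card : ℝ) = 1 := by rw [hF, hn]; simp
    have h2 : compCount ℱ ≤ ℱ.card * ℱ.card := by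
      unfold compCount crossComp
      exact (Finset.card_filter_le _ _).trans (by rw [Finset.card_product])
    have h3 : (compCount ℱ : ℝ) ≤ ℱ.card * ℱ.card := by exact_mod_cast h2
    rw [h1] at h3 ⊢
    have : 0 ≤ (1 - 1 / (k : ℝ)) * (ℱ.card.choose 2 : ℝ) := mul_nonneg (by linarith) (by positivity)
    simp only [Real.one_rpow]
    linarith
  have hn0 : (0:ℝ) < n := by exact_mod_cast hn
  by_contra hcon
  push Not at hcon
  set ε : ℝ := 1 / (k * 5 ^ (k+1)) * δ ^ (k+1) with hε
  have hM2 : (ℱ.card : ℝ) ≤ 2 ^ (n:ℝ) := by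
    rw [Real.rpow_natCast]
    have := Finset.card_le_univ ℱ
    simp only [Fintype.card_finset, Fintype.card_fin] at this
    exact_mod_cast this
  have hδ1 : δ ≤ 1 := by
    rw [hF, Real.rpow_le_rpow_left_iff (by norm_num)] at hM2
    have : 1 / (k + 1 : ℝ) + δ ≤ 1 := by
      by_contra h
      push Not at h
      nlinarith
    have : 0 < 1 / (k + 1 : ℝ) := by positivity
    linarith
  have hM1 : (1:ℝ) ≤ ℱ.card := by
    rw [hF]; exact Real.one_le_rpow (by norm_num) (by positivity)
  have hch : (ℱ.card.choose 2 : ℝ) = ℱ.card * (ℱ.card - 1) / 2 := Nat.cast_choose_two ℝ _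
  have hcard : 0 < ℱ.card := by
    have : (0:ℝ) < ℱ.card := by linarith
    exact_mod_cast this
  rw [hch] at hcon
  set M : ℝ := (ℱ.card : ℝ) with hM
  have hM0 : 0 < M := by linarith
  have hε0 : 0 < ε := by positivity
  have hε1 : ε ≤ 1 := by
    have a : δ ^ (k+1) ≤ 1 := pow_le_one₀ hδ.le hδ1
    have b : (1:ℝ) ≤ k * 5 ^ (k+1) := by
      have : (1:ℝ) ≤ 5 ^ (k+1) := one_le_pow₀ (by norm_num)
      nlinarith
    have c : 1 / (k * 5 ^ (k+1) : ℝ) ≤ 1 := by rw [div_le_one (by linarith)]; exact b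
    rw [hε]
    exact mul_le_one₀ c (by positivity) a
  set x : ℝ := M ^ (-ε) with hx
  have hx0 : 0 < x := by positivity
  have hMx : 1 ≤ M * x := by
    have : M * x = M ^ (1 - ε) := by
      rw [hx, sub_eq_add_neg, Real.rpow_add hM0, Real.rpow_one]
    rw [this]
    exact Real.one_le_rpow hM1 (by linarith)
  have hpow : M ^ (2 - ε) = M ^ 2 * x := by
    rw [hx, sub_eq_add_neg, Real.rpow_add hM0]
    norm_num
  rw [hpow] at hcon
  have hin : M ^ 2 * (1 - 1 / k + C * x) ≤ 2 * (compCount ℱ : ℝ) := by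
    have e1 : C * M ≤ C * (M * (M * x)) := by
      have : M ≤ M * (M * x) := le_mul_of_one_le_right hM0.le hMx
      gcongr
    have e2 : (1 - 1 / (k:ℝ)) * M ≤ C * M := by gcongr; linarith
    nlinarith
  set t : ℕ := ⌈4 / δ⌉₊ with ht
  have ht1 : 4 / δ ≤ t := Nat.le_ceil _
  have ht2 : (t:ℝ) ≤ 5 / δ := by
    have a : (t:ℝ) < 4 / δ + 1 := Nat.ceil_lt_add_one (by positivity)
    have b : 1 ≤ 1 / δ := by rw [le_div_iff₀ hδ]; linarith
    have c : 5 / δ = 4 / δ + 1 / δ := by ring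
    linarith
  have key := combine t k hk ℱ hcard (C * x) (by positivity) hin
  have htpos : 0 < t := by
    have : (0:ℝ) < t := lt_of_lt_of_le (by positivity) ht1
    exact_mod_cast this
  have hT1 : t ^ (k+1) ≠ 0 := by positivity
  have hp : (k+1 : ℝ) * x ^ k ≤ (C * x) ^ k / (k+1).factorial := by
    rw [le_div_iff₀ (by positivity), mul_pow]
    calc (k+1 : ℝ) * x ^ k * (k+1).factorial = C * x ^ k := by rw [hC]; ring
      _ ≤ C ^ k * x ^ k := by
        gcongr
        exact le_self_pow₀ hC1 hk.ne'
  have hxk : (2:ℝ) ^ (-(n:ℝ)) ≤ (x ^ k) ^ (t ^ (k+1)) := by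
    have e : (x ^ k) ^ (t ^ (k+1)) = M ^ (-(ε * k * (t:ℝ) ^ (k+1))) := by
      rw [← pow_mul, hx, ← Real.rpow_natCast, ← Real.rpow_mul hM0.le]
      push_cast
      congr 1
      ring
    have b : ε * k * (t:ℝ) ^ (k+1) ≤ 1 := by
      calc ε * k * (t:ℝ) ^ (k+1) ≤ ε * k * (5 / δ) ^ (k+1) := by gcongr
        _ = 1 := by rw [hε, div_pow]; field_simp
    rw [e, Real.rpow_neg (by norm_num), Real.rpow_neg hM0.le]
    have c : M ^ (ε * k * (t:ℝ) ^ (k+1)) ≤ 2 ^ (n:ℝ) := by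
      calc _ ≤ M ^ (1:ℝ) := Real.rpow_le_rpow_of_exponent_le hM1 b
        _ = M := Real.rpow_one M
        _ ≤ _ := hM2
    gcongr
  have hpT : (k+1 : ℝ) * 2 ^ (-(n:ℝ)) ≤ ((C * x) ^ k / (k+1).factorial) ^ (t ^ (k+1)) := by
    calc _ ≤ (k+1 : ℝ) ^ (t ^ (k+1)) * (x ^ k) ^ (t ^ (k+1)) := by
          gcongr
          exact le_self_pow₀ (by linarith) hT1
      _ = ((k+1 : ℝ) * x ^ k) ^ (t ^ (k+1)) := by rw [mul_pow]
      _ ≤ _ := by gcongr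
  have hMt : (2:ℝ) ^ (n / (k+1) * t) * 2 ^ (4 * n : ℝ) ≤ M ^ t := by
    have e : M ^ t = 2 ^ ((1 / (k + 1 : ℝ) + δ) * n * t) := by
      rw [hF, ← Real.rpow_natCast, ← Real.rpow_mul (by norm_num)]
    rw [e, ← Real.rpow_natCast, ← Real.rpow_add (by norm_num)]
    apply Real.rpow_le_rpow_of_exponent_le (by norm_num)
    push_cast
    have a : ((n / (k+1) : ℕ) : ℝ) ≤ n / (k+1) := by
      have := @Nat.cast_div_le ℝ _ _ _ n (k+1)
      push_cast at this
      exact this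
    have b : 4 ≤ δ * t := by rw [div_le_iff₀ hδ] at ht1; linarith
    calc ((n / (k+1) : ℕ) : ℝ) * t + 4 * n ≤ (n / (k+1)) * t + (δ * t) * n := by gcongr
      _ = _ := by ring
  have h1 : (k+1 : ℝ) * 2 ^ (-(n:ℝ)) * ((2:ℝ) ^ (n / (k+1) * t) * 2 ^ (4 * n : ℝ)) ≤
      (k+1) * (2 ^ (n / (k+1) * t) * (2 ^ n * 2 ^ n)) := by
    refine le_trans ?_ key
    gcongr
  have h2 : (2:ℝ) ^ (-(n:ℝ)) * 2 ^ (4 * n : ℝ) ≤ 2 ^ n * 2 ^ n := by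
    have p : (0:ℝ) < (k+1) * 2 ^ (n / (k+1) * t) := by positivity
    refine le_of_mul_le_mul_left ?_ p
    linarith
  rw [← Real.rpow_natCast, ← Real.rpow_add (by norm_num), ← Real.rpow_add (by norm_num),
    Real.rpow_le_rpow_left_iff (by norm_num)] at h2
  linarith
end

section
/- For every ε > 0 and every integer k ≥ 2, there is an η > 0 such that for all sufficiently large n divisible by k the following holds: if ℱ is a family of subsets of [n] of size m = |ℱ| ≥ (1 − η)·k·2^{n/k} with c(ℱ) ≥ (1 − (1+η)/k)·binom(m,2), then there exists a tower of k cubes of dimension n/k containing all but at most εm of the sets of ℱ. -/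
open Finset

/-- `IsTower n k 𝒯` says that `𝒯` is a tower of `k` cubes of dimension `n/k` over `[n]`:
there is a chain `∅ = X₀ ⊆ X₁ ⊆ ⋯ ⊆ X_k = [n]` with `|X_i| = i·(n/k)` such that
`𝒯 = ⋃_{i=1}^{k} {F : X_{i-1} ⊆ F ⊆ X_i}`. -/
def IsTower (n k : ℕ) (𝒯 : Finset (Finset (Fin n))) : Prop :=
  ∃ X : ℕ → Finset (Fin n),
    X 0 = ∅ ∧ X k = Finset.univ ∧
    (∀ i ≤ k, (X i).card = i * (n / k)) ∧
    (∀ i < k, X i ⊆ X (i + 1)) ∧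
    𝒯 = Finset.univ.filter (fun F => ∃ i ∈ Finset.Icc 1 k, X (i - 1) ⊆ F ∧ F ⊆ X i)


noncomputable def lev {n : ℕ} (F : Finset (Finset (Fin n))) (c : ℝ) : ℕ → Finset (Finset (Fin n))
  | 0 => F
  | (i+1) => F.filter (fun B => c ≤ (((lev F c i).filter (fun A => A ⊂ B)).card : ℝ))

lemma lev_anti {n : ℕ} (F : Finset (Finset (Fin n))) (c : ℝ) (i : ℕ) : lev F c (i+1) ⊆ lev F c i := by
  induction i with
  | zero => exact filter_subset _ _
  | succ i ih =>
    intro B hB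
    rw [lev, mem_filter] at hB ⊢
    refine ⟨hB.1, hB.2.trans ?_⟩
    exact_mod_cast card_le_card (filter_subset_filter _ ih)

lemma lev_sub {n : ℕ} (F : Finset (Finset (Fin n))) (c : ℝ) (i : ℕ) : lev F c i ⊆ F := by
  cases i with
  | zero => exact subset_rfl
  | succ i => exact filter_subset _ _

lemma tuple_count {n t : ℕ} (𝒜 : Finset (Finset (Fin n))) (U : Finset (Fin n)) :
    ((Fintype.piFinset (fun _ : Fin t => 𝒜)).filter (fun p => univ.biUnion p ⊆ U)).card
      = ((𝒜.filter (fun A => A ⊆ U)).card) ^ t := by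
  have : (Fintype.piFinset (fun _ : Fin t => 𝒜)).filter (fun p => univ.biUnion p ⊆ U)
      = Fintype.piFinset (fun _ : Fin t => 𝒜.filter (fun A => A ⊆ U)) := by
    ext p
    simp [Fintype.mem_piFinset, forall_and]
  rw [this, Fintype.card_piFinset]
  simp

lemma step {n t : ℕ} (F 𝒜 𝒮 : Finset (Finset (Fin n))) (c α : ℝ) (hc : 0 < c) (hα0 : 0 ≤ α)
    (h𝒜 : 𝒜 ⊆ F) (hS : ∀ B ∈ 𝒮, c ≤ ((𝒜.filter (fun A => A ⊂ B)).card : ℝ))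
    (hα : 2 ^ n * α ^ t * 4 ≤ c ^ t) (hne : 0 < 𝒮.card) :
    ∃ U : Finset (Fin n), α ≤ ((𝒜.filter (fun A => A ⊆ U)).card : ℝ) ∧
      (𝒮.card : ℝ) * c ^ t ≤ 2 * (F.card : ℝ) ^ t * ((𝒮.filter (fun B => U ⊆ B)).card : ℝ) := by
  classical
  by_contra! hcon
  set Q := Fintype.piFinset (fun _ : Fin t => 𝒜) with hQ
  have hdc : ∑ p ∈ Q, (𝒮.filter (fun B => univ.biUnion p ⊆ B)).card
      = ∑ B ∈ 𝒮, (Q.filter (fun p => univ.biUnion p ⊆ B)).card := by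
    simp only [card_filter]
    exact sum_comm
  have h1 : (𝒮.card : ℝ) * c ^ t ≤ ∑ p ∈ Q, ((𝒮.filter (fun B => univ.biUnion p ⊆ B)).card : ℝ) := by
    have : ∑ p ∈ Q, ((𝒮.filter (fun B => univ.biUnion p ⊆ B)).card : ℝ)
      = ∑ B ∈ 𝒮, ((Q.filter (fun p => univ.biUnion p ⊆ B)).card : ℝ) := by exact_mod_cast hdc
    rw [this, ← nsmul_eq_mul]
    apply card_nsmul_le_sum
    intro B hB
    rw [hQ, tuple_count]
    push_cast
    apply pow_le_pow_left₀ hc.le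
    refine (hS B hB).trans ?_
    have : 𝒜.filter (fun A => A ⊂ B) ⊆ 𝒜.filter (fun A => A ⊆ B) := by
      intro A h
      rw [mem_filter] at h ⊢
      exact ⟨h.1, h.2.subset⟩
    exact_mod_cast card_le_card this
  set bad := fun p : Fin t → Finset (Fin n) =>
    ((𝒜.filter (fun A => A ⊆ univ.biUnion p)).card : ℝ) < α with hbad
  have h2 : ((Q.filter bad).card : ℝ) ≤ 2 ^ n * α ^ t := by
    have hfib := card_eq_sum_card_fiberwise (s := Q.filter bad)
      (f := fun p => univ.biUnion p) (t := (univ : Finset (Finset (Fin n)))) (fun _ _ => by simp)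
    rw [hfib]
    push_cast
    have : ∀ U ∈ (univ : Finset (Finset (Fin n))),
        ((((Q.filter bad).filter (fun p => univ.biUnion p = U)).card : ℕ) : ℝ) ≤ α ^ t := by
      intro U _
      by_cases hU : ((𝒜.filter (fun A => A ⊆ U)).card : ℝ) < α
      · have : ((Q.filter bad).filter (fun p => univ.biUnion p = U)).card
            ≤ (Q.filter (fun p => univ.biUnion p ⊆ U)).card := by
          apply card_le_card
          intro p hp
          simp only [mem_filter] at hp ⊢
          exact ⟨hp.1.1, hp.2.subset⟩
        rw [hQ, tuple_count] at this
        calc _ ≤ (((𝒜.filter (fun A => A ⊆ U)).card ^ t : ℕ) : ℝ) := by exact_mod_cast this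
          _ ≤ α ^ t := by
            push_cast
            exact pow_le_pow_left₀ (by positivity) hU.le _
      · have : (Q.filter bad).filter (fun p => univ.biUnion p = U) = ∅ := by
          apply filter_eq_empty_iff.2
          intro p hp h
          rw [mem_filter] at hp
          apply hU
          rw [← h]
          exact hp.2
        rw [this]
        simp only [card_empty, Nat.cast_zero]
        positivity
    refine (sum_le_card_nsmul _ _ _ this).trans ?_
    simp
  have hFt : (0:ℝ) ≤ (F.card : ℝ) ^ t := by positivity
  have hQF : (Q.card : ℝ) ≤ (F.card : ℝ) ^ t := by
    rw [hQ, Fintype.card_piFinset]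
    simp only [prod_const, card_univ, Fintype.card_fin]
    push_cast
    exact pow_le_pow_left₀ (by positivity) (by exact_mod_cast card_le_card h𝒜) _
  have hSpos : (0:ℝ) < 𝒮.card := by exact_mod_cast hne
  have hX : (0:ℝ) < (𝒮.card : ℝ) * c ^ t := by positivity
  have hF0 : (0:ℝ) < (F.card : ℝ) ^ t := by
    rcases hFt.lt_or_eq with h | h
    · exact h
    · exfalso
      rw [← h] at hQF
      have : Q = ∅ := by
        rw [← card_eq_zero]; exact_mod_cast le_antisymm hQF (by positivity)
      rw [this] at h1
      simp only [sum_empty] at h1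
      linarith
  have h3 : ∑ p ∈ Q, ((𝒮.filter (fun B => univ.biUnion p ⊆ B)).card : ℝ)
      ≤ (2 ^ n * α ^ t) * 𝒮.card + (𝒮.card : ℝ) * c ^ t / 2 := by
    rw [← sum_filter_add_sum_filter_not Q bad]
    apply add_le_add
    · calc _ ≤ (Q.filter bad).card • (𝒮.card : ℝ) := by
            apply sum_le_card_nsmul
            intro p _
            exact_mod_cast card_filter_le _ _
        _ ≤ _ := by
            rw [nsmul_eq_mul]
            gcongr
    · calc _ ≤ (Q.filter (fun p => ¬ bad p)).card • ((𝒮.card : ℝ) * c ^ t / (2 * (F.card : ℝ) ^ t)) := by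
            apply sum_le_card_nsmul
            intro p hp
            rw [mem_filter] at hp
            have := hcon (univ.biUnion p) (not_lt.1 hp.2)
            rw [le_div_iff₀ (by positivity)]
            linarith
        _ ≤ (F.card : ℝ) ^ t * ((𝒮.card : ℝ) * c ^ t / (2 * (F.card : ℝ) ^ t)) := by
            rw [nsmul_eq_mul]
            gcongr
            refine le_trans ?_ hQF
            exact_mod_cast card_filter_le _ _
        _ = _ := by field_simp
  nlinarith

lemma chain {n t : ℕ} (F : Finset (Finset (Fin n))) (c α M : ℝ) (hc : 0 < c) (hα0 : 0 < α)
    (hα : 2 ^ n * α ^ t * 4 ≤ c ^ t) (hM0 : 0 ≤ M) (hMα : M ≤ α)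
    (hM : M * (2 * (F.card : ℝ) ^ t) ≤ α * c ^ t) (hF : 0 < F.card) (i : ℕ) :
    ∀ (W : Finset (Fin n)) (𝒮 : Finset (Finset (Fin n))), 𝒮 ⊆ lev F c i → (∀ S ∈ 𝒮, S ⊆ W) →
      α ≤ 𝒮.card → M ^ (i+1) ≤ 2 ^ W.card := by
  induction i with
  | zero =>
    intro W 𝒮 _ hW h
    have : 𝒮.card ≤ 2 ^ W.card := by
      rw [← card_powerset]
      apply card_le_card
      intro S hS
      exact mem_powerset.2 (hW S hS)
    have h' : (𝒮.card : ℝ) ≤ 2 ^ W.card := by exact_mod_cast this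
    simp only [zero_add, pow_one]
    linarith
  | succ i ih =>
    intro W 𝒮 h𝒮 hW h
    have hpos : (0:ℝ) < 𝒮.card := by linarith
    obtain ⟨U, hU1, hU2⟩ := step (t := t) F (lev F c i) 𝒮 c α hc hα0.le (lev_sub _ _ _)
      (fun B hB => (mem_filter.1 (h𝒮 hB)).2) hα (by exact_mod_cast hpos)
    have h1 := ih U ((lev F c i).filter (fun A => A ⊆ U)) (filter_subset _ _)
      (fun S hS => (mem_filter.1 hS).2) hU1
    have hFt : (0:ℝ) < 2 * (F.card : ℝ) ^ t := by
      have : (0:ℝ) < F.card := by exact_mod_cast hF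
      positivity
    have hMx : M ≤ ((𝒮.filter (fun B => U ⊆ B)).card : ℝ) := by
      have : α * c ^ t ≤ 𝒮.card * c ^ t := by gcongr
      have h5 : M * (2 * (F.card : ℝ) ^ t) ≤ ((𝒮.filter (fun B => U ⊆ B)).card : ℝ) * (2 * (F.card : ℝ) ^ t) := by
        linarith
      exact le_of_mul_le_mul_right h5 hFt
    have hne : (𝒮.filter (fun B => U ⊆ B)).Nonempty := by
      rw [← card_pos]
      have : (0:ℝ) < 2 * (F.card : ℝ) ^ t * ((𝒮.filter (fun B => U ⊆ B)).card : ℝ) :=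
        lt_of_lt_of_le (by positivity) hU2
      have := pos_of_mul_pos_right this hFt.le
      exact_mod_cast this
    obtain ⟨B, hB⟩ := hne
    rw [mem_filter] at hB
    have hUW : U ⊆ W := hB.2.trans (hW B hB.1)
    have hcard : (𝒮.filter (fun B => U ⊆ B)).card ≤ 2 ^ (W.card - U.card) := by
      rw [← card_Icc_finset hUW]
      apply card_le_card
      intro S hS
      rw [mem_filter] at hS
      exact mem_Icc.2 ⟨hS.2, hW S hS.1⟩
    have hcard' : ((𝒮.filter (fun B => U ⊆ B)).card : ℝ) ≤ 2 ^ (W.card - U.card) := by exact_mod_cast hcard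
    calc M ^ (i+1+1) = M ^ (i+1) * M := pow_succ _ _
      _ ≤ 2 ^ U.card * 2 ^ (W.card - U.card) := by
        apply mul_le_mul h1 (hMx.trans hcard') hM0 (by positivity)
      _ = 2 ^ W.card := by
        rw [← pow_add, Nat.add_sub_cancel' (card_le_card hUW)]

lemma lev_small (γ : ℝ) (hγ : 0 < γ) (k : ℕ) (hk : 1 ≤ k) : ∃ l₀ : ℕ, ∀ l ≥ l₀,
    ∀ F : Finset (Finset (Fin (k * l))), (2:ℝ) ^ l ≤ F.card →
      ((lev F (γ * F.card) k).card : ℝ) < γ * F.card := by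
  set t := 2 * k * (k+1) with ht
  set C : ℝ := (min γ 1 ^ (t+1) / 4) ^ (k+1) with hC
  have hg : 0 < min γ 1 := lt_min hγ one_pos
  have hC0 : 0 < C := by positivity
  obtain ⟨l₀, hl₀⟩ := pow_unbounded_of_one_lt ((1 / C)^2) (one_lt_two : (1:ℝ) < 2)
  refine ⟨l₀, fun l hl F hF => ?_⟩
  by_contra! hcon
  set m : ℝ := (F.card : ℝ) with hm
  set g := min γ 1 with hgdef
  have hg1 : g ≤ 1 := min_le_right _ _
  have hgg : g ≤ γ := min_le_left _ _
  set y : ℝ := (2:ℝ) ^ ((l:ℝ) / (2 * (k+1))) with hy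
  have hy0 : 0 < y := by positivity
  have hy1 : 1 ≤ y := Real.one_le_rpow (by norm_num) (by positivity)
  have hyl : y ^ (2 * (k+1)) = 2 ^ l := by
    rw [hy, ← Real.rpow_natCast, ← Real.rpow_mul (by norm_num), ← Real.rpow_natCast]
    congr 1
    push_cast
    field_simp
  have hm0 : 0 < m := lt_of_lt_of_le (by positivity) hF
  have hα : (2:ℝ) ^ (k * l) * (γ * m / (2 * y)) ^ t * 4 ≤ (γ * m) ^ t := by
    have e1 : y ^ t = 2 ^ (k * l) := by
      rw [ht, show 2 * k * (k+1) = (2 * (k+1)) * k by ring, pow_mul, hyl, ← pow_mul, mul_comm]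
    rw [div_pow, mul_pow 2 y, e1]
    have h4 : (4:ℝ) ≤ 2 ^ t := by
      calc (4:ℝ) = 2 ^ 2 := by norm_num
        _ ≤ 2 ^ t := pow_le_pow_right₀ (by norm_num) (by nlinarith)
    have : (2:ℝ) ^ (k * l) * ((γ * m) ^ t / (2 ^ t * 2 ^ (k*l))) * 4 = (γ * m) ^ t * (4 / 2 ^ t) := by
      field_simp
    rw [this]
    have h5 : (4:ℝ) / 2 ^ t ≤ 1 := by rw [div_le_one (by positivity)]; exact h4
    have : 0 ≤ (γ * m) ^ t := by positivity
    nlinarith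
  have hgt : g ^ t ≤ 1 := pow_le_one₀ hg.le hg1
  have hmain := chain (t := t) F (γ * m) (γ * m / (2 * y)) (g ^ (t+1) * m / (4 * y)) (by positivity)
    (by positivity) hα (by positivity)
    (by
      rw [div_le_div_iff₀ (by positivity) (by positivity), pow_succ]
      have : g ^ t * g ≤ γ := by nlinarith
      have h2 : g ^ t * g * (m * y * 2) ≤ γ * (m * y * 4) := by
        apply mul_le_mul this _ (by positivity) hγ.le
        nlinarith [mul_pos hm0 hy0]
      linarith)
    (by
      have h1 : g ^ t ≤ γ ^ t := pow_le_pow_left₀ hg.le hgg _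
      have h2 : g ^ t * g ≤ γ ^ t * γ := mul_le_mul h1 hgg hg.le (by positivity)
      have : g ^ (t+1) * m / (4 * y) * (2 * m ^ t) = g ^ t * g * (m * m ^ t / (2 * y)) := by
        field_simp; ring
      rw [this]
      have : γ * m / (2 * y) * (γ * m) ^ t = γ ^ t * γ * (m * m ^ t / (2 * y)) := by
        rw [mul_pow]; field_simp
      rw [this]
      gcongr)
    (Nat.cast_pos.1 hm0) k univ (lev F (γ * m) k) subset_rfl (fun _ _ => subset_univ _)
    (le_trans (by
      rw [div_le_iff₀ (by positivity)]
      nlinarith [mul_pos hγ hm0]) hcon)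
  simp only [card_univ, Fintype.card_fin] at hmain
  set z := y ^ (k+1) with hz
  have hz2 : z ^ 2 = 2 ^ l := by rw [hz, ← pow_mul, mul_comm (k+1) 2, hyl]
  have hz0 : 0 < z := by positivity
  have e : (g ^ (t+1) * m / (4 * y)) ^ (k+1) = C * m ^ (k+1) / z := by
    rw [hC, hz, ← mul_pow, ← div_pow]
    congr 1
    field_simp
  rw [e, div_le_iff₀ hz0] at hmain
  have h6 : (2:ℝ) ^ (k * l) * z ^ 2 ≤ m ^ (k+1) := by
    rw [hz2, ← pow_add, show k * l + l = l * (k+1) by ring, pow_mul]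
    exact pow_le_pow_left₀ (by positivity) hF _
  have h7 : C * (2 ^ (k * l) * z ^ 2) ≤ 2 ^ (k * l) * z :=
    (mul_le_mul_of_nonneg_left h6 hC0.le).trans hmain
  have h8 : C * z ≤ 1 := by
    have : (2 ^ (k * l) * z) * (C * z) ≤ (2 ^ (k * l) * z) * 1 := by linarith
    exact le_of_mul_le_mul_left this (by positivity)
  have h9 : (1 / C) ^ 2 < z ^ 2 := by
    rw [hz2]
    exact hl₀.trans_le (pow_le_pow_right₀ (by norm_num) hl)
  have h10 : 1 / C < z := lt_of_pow_lt_pow_left₀ 2 hz0.le h9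
  rw [div_lt_iff₀ hC0] at h10
  linarith

lemma weighted {n : ℕ} (𝒱 : Finset (Finset (Fin n))) (T P G : Finset (Fin n)) (hGT : G ⊆ T)
    (hout : ∀ A ∈ 𝒱, ∀ x, x ∉ T → (x ∈ A ↔ x ∈ P))
    (hG : ∀ x ∈ G, ((𝒱.filter (fun A => ¬ (x ∈ A ↔ x ∈ P))).card : ℝ) ≤ 1 / 50 * 𝒱.card) :
    (𝒱.card : ℝ) ≤ ∏ x : Fin n, (if x ∈ G then (6/5 : ℝ) else if x ∈ T then 2 else 1) := by
  classical
  set D : Finset (Fin n) → Finset (Fin n) := fun A => univ.filter (fun x => ¬ (x ∈ A ↔ x ∈ P)) with hD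
  have hDT : ∀ A ∈ 𝒱, D A ⊆ T := by
    intro A hA x hx
    by_contra h
    exact (mem_filter.1 hx).2 (hout A hA x h)
  have hDinj : Set.InjOn D 𝒱 := by
    intro A _ B _ h
    ext x
    have : x ∈ D A ↔ x ∈ D B := by rw [h]
    simp only [hD, mem_filter, mem_univ, true_and] at this
    tauto
  set w : ℝ := Real.exp (-2) with hw
  set f : Fin n → ℝ := fun x => if x ∈ G then w else 1 with hf
  have hw0 : 0 < w := Real.exp_pos _
  have hf0 : ∀ x, 0 < f x := by
    intro x; simp only [hf]; split_ifs <;> positivity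
  have h1 : ∑ A ∈ 𝒱, ∏ x ∈ D A, f x ≤ ∏ x ∈ T, (1 + f x) := by
    rw [prod_one_add, ← sum_image (f := fun S => ∏ x ∈ S, f x) hDinj]
    apply sum_le_sum_of_subset_of_nonneg
    · intro S hS
      obtain ⟨A, hA, rfl⟩ := mem_image.1 hS
      exact mem_powerset.2 (hDT A hA)
    · intro S _ _
      exact prod_nonneg (fun x _ => (hf0 x).le)
  have h2 : ∀ A, ∏ x ∈ D A, f x = Real.exp (-2 * ((D A).filter (fun x => x ∈ G)).card) := by
    intro A
    rw [hf, ← prod_filter, prod_const, hw, ← Real.exp_nat_mul]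
    congr 1; ring
  have h3 : (∑ A ∈ 𝒱, (((D A).filter (fun x => x ∈ G)).card : ℝ)) ≤ G.card * (1/50 * 𝒱.card) := by
    have : ∑ A ∈ 𝒱, ((D A).filter (fun x => x ∈ G)).card
        = ∑ x ∈ G, (𝒱.filter (fun A => ¬ (x ∈ A ↔ x ∈ P))).card := by
      have e : ∀ A, (D A).filter (fun x => x ∈ G) = G.filter (fun x => ¬ (x ∈ A ↔ x ∈ P)) := by
        intro A; ext x; simp only [hD, mem_filter, mem_univ, true_and]; tauto
      simp only [e, card_filter]
      exact sum_comm
    have h' : (∑ A ∈ 𝒱, (((D A).filter (fun x => x ∈ G)).card : ℝ))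
        = ∑ x ∈ G, ((𝒱.filter (fun A => ¬ (x ∈ A ↔ x ∈ P))).card : ℝ) := by exact_mod_cast this
    rw [h', ← nsmul_eq_mul]
    exact sum_le_card_nsmul _ _ _ hG
  set c : ℝ := G.card / 50 with hc
  have h4 : Real.exp (-2 * c) * 𝒱.card ≤ ∑ A ∈ 𝒱, ∏ x ∈ D A, f x := by
    have : ∀ A ∈ 𝒱, Real.exp (-2 * c) * (1 + 2 * c - 2 * (((D A).filter (fun x => x ∈ G)).card : ℝ)) ≤ ∏ x ∈ D A, f x := by
      intro A _
      rw [h2]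
      have e1 := Real.add_one_le_exp (2 * c - 2 * (((D A).filter (fun x => x ∈ G)).card : ℝ))
      calc _ ≤ Real.exp (-2 * c) * Real.exp (2 * c - 2 * (((D A).filter (fun x => x ∈ G)).card : ℝ)) := by
            apply mul_le_mul_of_nonneg_left _ (Real.exp_pos _).le
            linarith
        _ = _ := by
            rw [← Real.exp_add]; congr 1; ring
    refine le_trans ?_ (sum_le_sum this)
    rw [← mul_sum]
    apply mul_le_mul_of_nonneg_left _ (Real.exp_pos _).le
    rw [sum_sub_distrib, ← mul_sum, sum_const, nsmul_eq_mul]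
    rw [hc]
    nlinarith
  have h5 : (𝒱.card : ℝ) ≤ Real.exp (2 * c) * ∏ x ∈ T, (1 + f x) := by
    have h6 := mul_le_mul_of_nonneg_left (h4.trans h1) (Real.exp_pos (2 * c)).le
    rw [← mul_assoc, ← Real.exp_add] at h6
    have : 2 * c + -2 * c = 0 := by ring
    rw [this, Real.exp_zero, one_mul] at h6
    exact h6
  refine h5.trans ?_
  have h7 : Real.exp (2 * c) = ∏ x ∈ T, (if x ∈ G then Real.exp (1/25) else 1) := by
    rw [← prod_filter, prod_const, ← Real.exp_nat_mul]
    have : T.filter (fun x => x ∈ G) = G := by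
      ext x; simp only [mem_filter]; exact ⟨fun h => h.2, fun h => ⟨hGT h, h⟩⟩
    rw [this, hc]; congr 1; ring
  have h8 : ∏ x : Fin n, (if x ∈ G then (6/5 : ℝ) else if x ∈ T then 2 else 1)
      = ∏ x ∈ T, (if x ∈ G then (6/5 : ℝ) else 2) := by
    rw [← prod_subset (subset_univ T)]
    · apply prod_congr rfl
      intro x hx
      simp [hx]
    · intro x _ hx
      have : x ∉ G := fun h => hx (hGT h)
      simp [hx, this]
  rw [h7, h8, ← prod_mul_distrib]
  have hnum : Real.exp (1/25) * (1 + w) ≤ 6/5 := by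
    have a1 : Real.exp (1/25) ≤ 25/24 := by
      have := Real.add_one_le_exp (-(1/25) : ℝ)
      rw [Real.exp_neg] at this
      have h0 := Real.exp_pos (1/25 : ℝ)
      have h9 : (24/25 : ℝ) ≤ (Real.exp (1/25))⁻¹ := by linarith
      rw [le_inv_comm₀ (by norm_num) h0] at h9
      linarith
    have a2 : w ≤ 1/7 := by
      have := Real.exp_one_gt_d9
      have e2 : Real.exp 2 = Real.exp 1 * Real.exp 1 := by rw [← Real.exp_add]; norm_num
      rw [hw, Real.exp_neg, inv_le_comm₀ (Real.exp_pos _) (by norm_num), e2]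
      nlinarith
    have := Real.exp_pos (1/25 : ℝ)
    nlinarith
  apply prod_le_prod
  · intro x _
    have := hf0 x
    split_ifs <;> positivity
  · intro x _
    simp only [hf]
    split_ifs
    · exact hnum
    · norm_num

lemma cubes {k l : ℕ} (V V' : ℕ → Finset (Finset (Fin (k * l)))) (κ : ℝ) (hκ : κ * k ≤ 1/4)
    (hk : 2 ≤ k)
    (hκ0 : 0 ≤ κ) (hsub : ∀ i < k, V' i ⊆ V i) (h2 : ∀ i < k, ((V i).card : ℝ) ≤ 2 * (V' i).card)
    (hlow : ∀ i < k, ∀ A ∈ V' i, ∀ j < i,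
      (((V j).filter (fun B => ¬ B ⊂ A)).card : ℝ) < 1/100 * (V j).card)
    (hupp : ∀ i < k, ∀ A ∈ V' i, ∀ j < k, i < j →
      (((V j).filter (fun B => ¬ A ⊂ B)).card : ℝ) < 1/100 * (V j).card)
    (hcard : ∀ i < k, (1 - κ) * 2 ^ l ≤ ((V' i).card : ℝ)) :
    ∃ 𝒯, IsTower (k * l) k 𝒯 ∧ ∀ i < k, V' i ⊆ 𝒯 := by
  classical
  set deg : ℕ → Fin (k * l) → ℝ := fun j x => ((V j).filter (fun B => x ∈ B)).card with hdeg
  set cod : ℕ → Fin (k * l) → ℝ := fun j x => ((V j).filter (fun B => x ∉ B)).card with hcod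
  set q : ℕ → ℝ := fun j => 1/100 * (V j).card with hq
  have hsum : ∀ j x, deg j x + cod j x = (V j).card := by
    intro j x
    simp only [hdeg, hcod]
    exact_mod_cast card_filter_add_card_filter_not (s := V j) (fun B => x ∈ B)
  have hκ1 : κ ≤ 1/8 := by
    have : (2:ℝ) ≤ k := by exact_mod_cast hk
    nlinarith
  have hV'pos : ∀ i < k, (0:ℝ) < (V' i).card := by
    intro i hi
    refine lt_of_lt_of_le ?_ (hcard i hi)
    have : (0:ℝ) < 2 ^ l := by positivity
    nlinarith
  have hVpos : ∀ i < k, (0:ℝ) < (V i).card := by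
    intro i hi
    refine lt_of_lt_of_le (hV'pos i hi) ?_
    exact_mod_cast card_le_card (hsub i hi)
  -- degree cannot be both small
  have hboth : ∀ i < k, ∀ x, deg i x < q i → cod i x < q i → False := by
    intro i hi x h1 h2
    have := hsum i x
    have := hVpos i hi
    simp only [hq] at h1 h2
    linarith
  set T : ℕ → Finset (Fin (k * l)) := fun i => univ.filter (fun x =>
    (∀ j < i, deg j x < q j) ∧ ∀ j < k, i < j → cod j x < q j) with hT
  have memT : ∀ i x, x ∈ T i ↔ ((∀ j < i, deg j x < q j) ∧ ∀ j < k, i < j → cod j x < q j) := by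
    intro i x; simp [hT]
  have fact1 : ∀ i < k, ∀ A ∈ V' i, ∀ x, ∀ j < i, q j ≤ deg j x → x ∈ A := by
    intro i hi A hA x j hj h
    by_contra hx
    have h1 := hlow i hi A hA j hj
    have : (V j).filter (fun B => x ∈ B) ⊆ (V j).filter (fun B => ¬ B ⊂ A) := by
      intro B hB
      rw [mem_filter] at hB ⊢
      exact ⟨hB.1, fun h => hx (h.subset hB.2)⟩
    have : deg j x ≤ (((V j).filter (fun B => ¬ B ⊂ A)).card : ℝ) :=
      Nat.cast_le.2 (card_le_card this)
    simp only [hq] at h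
    linarith
  have fact2 : ∀ i < k, ∀ A ∈ V' i, ∀ x, ∀ j < k, i < j → q j ≤ cod j x → x ∉ A := by
    intro i hi A hA x j hjk hj h hx
    have h1 := hupp i hi A hA j hjk hj
    have : (V j).filter (fun B => x ∉ B) ⊆ (V j).filter (fun B => ¬ A ⊂ B) := by
      intro B hB
      rw [mem_filter] at hB ⊢
      exact ⟨hB.1, fun h => hB.2 (h.subset hx)⟩
    have : cod j x ≤ (((V j).filter (fun B => ¬ A ⊂ B)).card : ℝ) :=
      Nat.cast_le.2 (card_le_card this)
    simp only [hq] at h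
    linarith
  set G : ℕ → Finset (Fin (k * l)) := fun i =>
    (T i).filter (fun x => deg i x < q i ∨ cod i x < q i) with hG
  have hGT : ∀ i, G i ⊆ T i := fun i => filter_subset _ _
  set P : ℕ → Finset (Fin (k * l)) := fun i =>
    univ.filter (fun x => (x ∉ T i ∧ ∃ j < i, q j ≤ deg j x) ∨ (x ∈ T i ∧ cod i x < q i)) with hP
  set W : ℕ → Fin (k * l) → ℝ := fun i x => if x ∈ G i then (6/5 : ℝ) else if x ∈ T i then 2 else 1 with hW
  have hW1 : ∀ i x, 1 ≤ W i x := by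
    intro i x; simp only [hW]; split_ifs <;> norm_num
  have hbound : ∀ i < k, ((V' i).card : ℝ) ≤ ∏ x, W i x := by
    intro i hi
    apply weighted (V' i) (T i) (P i) (G i) (hGT i)
    · intro A hA x hx
      have hx' := hx
      rw [memT] at hx'
      by_cases h : ∃ j < i, q j ≤ deg j x
      · obtain ⟨j, hj, hj2⟩ := h
        have h1 := fact1 i hi A hA x j hj hj2
        have h2 : x ∈ P i := by
          simp only [hP, mem_filter, mem_univ, true_and]
          exact Or.inl ⟨hx, j, hj, hj2⟩
        exact ⟨fun _ => h2, fun _ => h1⟩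
      · have h2 : x ∉ P i := by
          simp only [hP, mem_filter, mem_univ, true_and]
          rintro (h' | h')
          · exact h h'.2
          · exact hx h'.1
        have h1 : x ∉ A := by
          push Not at h
          have : ¬ ∀ j < k, i < j → cod j x < q j := fun h' => hx' ⟨h, h'⟩
          push Not at this
          obtain ⟨j, hj, hij, hj2⟩ := this
          exact fact2 i hi A hA x j hj hij hj2
        exact ⟨fun h => absurd h h1, fun h => absurd h h2⟩
    · intro x hx
      have hxT := hGT i hx
      have hx2 := (mem_filter.1 hx).2
      have hq2 : q i ≤ 1/50 * (V' i).card := by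
        have := h2 i hi
        simp only [hq]; linarith
      by_cases hc : cod i x < q i
      · have hxP : x ∈ P i := by
          simp only [hP, mem_filter, mem_univ, true_and]
          exact Or.inr ⟨hxT, hc⟩
        have : (V' i).filter (fun A => ¬ (x ∈ A ↔ x ∈ P i)) ⊆ (V i).filter (fun B => x ∉ B) := by
          intro A hA
          rw [mem_filter] at hA ⊢
          exact ⟨hsub i hi hA.1, by tauto⟩
        have : (((V' i).filter (fun A => ¬ (x ∈ A ↔ x ∈ P i))).card : ℝ) ≤ cod i x :=
          Nat.cast_le.2 (card_le_card this)
        linarith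
      · have hd : deg i x < q i := by tauto
        have hxP : x ∉ P i := by
          simp only [hP, mem_filter, mem_univ, true_and]
          tauto
        have : (V' i).filter (fun A => ¬ (x ∈ A ↔ x ∈ P i)) ⊆ (V i).filter (fun B => x ∈ B) := by
          intro A hA
          rw [mem_filter] at hA ⊢
          exact ⟨hsub i hi hA.1, by tauto⟩
        have : (((V' i).filter (fun A => ¬ (x ∈ A ↔ x ∈ P i))).card : ℝ) ≤ deg i x :=
          Nat.cast_le.2 (card_le_card this)
        linarith
  have hW2 : ∀ i x, W i x ≤ 2 := by
    intro i x; simp only [hW]; split_ifs <;> norm_num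
  have hWout : ∀ i x, x ∉ T i → W i x = 1 := by
    intro i x h
    have : x ∉ G i := fun h' => h (hGT i h')
    simp [hW, h, this]
  -- product facts
  have hnotwo : ∀ i j x, i < j → j < k → x ∈ T i → x ∈ T j →
      ∏ i ∈ range k, W i x ≤ 36/25 := by
    intro i j x hij hjk hi hj
    have hi' := (memT i x).1 hi
    have hj' := (memT j x).1 hj
    have hGi : x ∈ G i := mem_filter.2 ⟨hi, Or.inl (hj'.1 i hij)⟩
    have hGj : x ∈ G j := mem_filter.2 ⟨hj, Or.inr (hi'.2 j hjk hij)⟩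
    have : ∏ i ∈ range k, W i x = ∏ i ∈ ({i, j} : Finset ℕ), W i x := by
      symm
      apply prod_subset
      · intro a ha
        simp only [mem_insert, mem_singleton] at ha
        rw [mem_range]; omega
      · intro a ha hna
        rw [mem_range] at ha
        simp only [mem_insert, mem_singleton, not_or] at hna
        apply hWout
        intro hTa
        have ha' := (memT a x).1 hTa
        rcases lt_trichotomy a i with h | h | h
        · exact hboth i (by omega) x (hj'.1 i hij) (ha'.2 i (by omega) h)
        · exact hna.1 h
        · rcases lt_trichotomy a j with h3 | h3 | h3
          · exact hboth a ha x (hj'.1 a h3) (hi'.2 a ha h)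
          · exact hna.2 h3
          · exact hboth j hjk x (ha'.1 j h3) (hi'.2 j hjk hij)
    rw [this, prod_pair hij.ne]
    simp only [hW, hGi, hGj, if_true]
    norm_num
  have hprod : ∀ x, ∏ i ∈ range k, W i x ≤ 36/25 ∨
      ((∃ i < k, x ∈ T i) ∧ (∀ i < k, ∀ j < k, x ∈ T i → x ∈ T j → i = j) ∧ ∏ i ∈ range k, W i x ≤ 2) := by
    intro x
    by_cases h1 : ∃ i < k, x ∈ T i
    · by_cases h2 : ∀ i < k, ∀ j < k, x ∈ T i → x ∈ T j → i = j
      · right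
        refine ⟨h1, h2, ?_⟩
        obtain ⟨i, hi, hxi⟩ := h1
        rw [prod_eq_single_of_mem i (mem_range.2 hi)]
        · exact hW2 i x
        · intro j hj hji
          apply hWout
          intro h
          exact hji (h2 j (mem_range.1 hj) i hi h hxi)
      · left
        push Not at h2
        obtain ⟨i, hi, j, hj, hxi, hxj, hij⟩ := h2
        rcases lt_or_gt_of_ne hij with h | h
        · exact hnotwo i j x h hj hxi hxj
        · exact hnotwo j i x h hi hxj hxi
    · left
      push Not at h1
      rw [prod_eq_one]
      · norm_num
      · intro i hi
        exact hWout i x (h1 i (mem_range.1 hi))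
  have hle2 : ∀ x, ∏ i ∈ range k, W i x ≤ 2 := by
    intro x
    rcases hprod x with h | h
    · linarith
    · exact h.2.2
  have hpos : ∀ x, 0 ≤ ∏ i ∈ range k, W i x := fun x =>
    prod_nonneg (fun i _ => by linarith [hW1 i x])
  have htotal : (3/4 : ℝ) * 2 ^ (k * l) ≤ ∏ x, ∏ i ∈ range k, W i x := by
    rw [prod_comm]
    have : ∏ i ∈ range k, ((1 - κ) * 2 ^ l) ≤ ∏ i ∈ range k, ∏ x, W i x := by
      apply prod_le_prod
      · intro i _
        have : (0:ℝ) < 2 ^ l := by positivity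
        nlinarith
      · intro i hi
        exact (hcard i (mem_range.1 hi)).trans (hbound i (mem_range.1 hi))
    refine le_trans ?_ this
    rw [prod_const, card_range, mul_pow, ← pow_mul, mul_comm l k]
    gcongr
    have := one_add_mul_le_pow (a := -κ) (by linarith) k
    have e : (1 - κ) = 1 + -κ := by ring
    rw [e]
    linarith
  have huniq : ∀ x, (∃ i < k, x ∈ T i) ∧ (∀ i < k, ∀ j < k, x ∈ T i → x ∈ T j → i = j) := by
    intro x
    rcases hprod x with h | h
    · exfalso
      have hkl : 0 < k * l := x.pos
      have : ∏ x, ∏ i ∈ range k, W i x ≤ 36/25 * 2 ^ (k * l - 1) := by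
        rw [← mul_prod_erase univ _ (mem_univ x)]
        apply mul_le_mul h _ (prod_nonneg (fun y _ => hpos y)) (by norm_num)
        refine (prod_le_prod (fun y _ => hpos y) (fun y _ => hle2 y)).trans ?_
        rw [prod_const, card_erase_of_mem (mem_univ x), card_univ, Fintype.card_fin]
      have e : (2:ℝ) ^ (k * l) = 2 * 2 ^ (k * l - 1) := by
        rw [← pow_succ']; congr 1; omega
      have : (0:ℝ) < 2 ^ (k * l - 1) := by positivity
      rw [e] at htotal
      linarith
    · exact ⟨h.1, h.2.1⟩
  have hTcard : ∀ i < k, l ≤ (T i).card := by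
    intro i hi
    have h1 : ∏ x, W i x ≤ 2 ^ (T i).card := by
      have : ∏ x, W i x ≤ ∏ x, (if x ∈ T i then (2:ℝ) else 1) := by
        apply prod_le_prod
        · intro x _; linarith [hW1 i x]
        · intro x _
          split_ifs with h
          · exact hW2 i x
          · exact (hWout i x h).le
      refine this.trans ?_
      rw [← prod_filter, prod_const]
      simp
    have h3 := (hcard i hi).trans ((hbound i hi).trans h1)
    by_contra! hlt
    have h4 : (2:ℝ) ^ ((T i).card + 1) ≤ 2 ^ l := pow_le_pow_right₀ (by norm_num) hlt
    rw [pow_succ] at h4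
    have : (0:ℝ) < 2 ^ (T i).card := by positivity
    nlinarith
  set X : ℕ → Finset (Fin (k * l)) := fun i => (range i).biUnion T with hX
  have hXcard : ∀ i ≤ k, (X i).card = ∑ j ∈ range i, (T j).card := by
    intro i hi
    apply card_biUnion
    intro a ha b hb hab
    change Disjoint (T a) (T b)
    rw [disjoint_left]
    intro x hxa hxb
    rw [mem_coe, mem_range] at ha hb
    exact hab ((huniq x).2 a (by omega) b (by omega) hxa hxb)
  have hXk : X k = univ := by
    ext x
    simp only [hX, mem_biUnion, mem_range, mem_univ, iff_true]
    exact (huniq x).1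
  have hTl : ∀ i < k, (T i).card = l := by
    have h1 := hXcard k le_rfl
    rw [hXk, card_univ, Fintype.card_fin] at h1
    have h5 : ∑ j ∈ range k, l = ∑ j ∈ range k, (T j).card := by
      rw [← h1]; simp
    have := (sum_eq_sum_iff_of_le (fun i hi => hTcard i (mem_range.1 hi))).1 h5
    intro i hi
    exact (this i (mem_range.2 hi)).symm
  refine ⟨_, ⟨X, by simp [hX], hXk, ?_, ?_, rfl⟩, ?_⟩
  · intro i hi
    rw [hXcard i hi, Nat.mul_div_cancel_left _ (by omega)]
    rw [sum_congr rfl (fun j hj => hTl j (by rw [mem_range] at hj; omega))]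
    simp
  · intro i _
    apply biUnion_subset_biUnion_of_subset_left
    exact range_subset_range.2 (by omega)
  · intro i hi A hA
    simp only [mem_filter, mem_univ, true_and]
    refine ⟨i+1, by rw [mem_Icc]; omega, ?_, ?_⟩
    · intro x hx
      simp only [hX, mem_biUnion, mem_range, Nat.add_sub_cancel] at hx
      obtain ⟨j, hj, hxj⟩ := hx
      have hxi : x ∉ T i := fun h => absurd ((huniq x).2 j (by omega) i hi hxj h) (by omega)
      by_cases h : ∃ a < i, q a ≤ deg a x
      · obtain ⟨a, ha, ha2⟩ := h
        exact fact1 i hi A hA x a ha ha2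
      · exfalso
        push Not at h
        apply hxi
        rw [memT]
        exact ⟨h, fun a ha hia => ((memT j x).1 hxj).2 a ha (by omega)⟩
    · intro x hx
      simp only [hX, mem_biUnion, mem_range]
      obtain ⟨j, hj, hxj⟩ := (huniq x).1
      by_cases hji : j < i + 1
      · exact ⟨j, hji, hxj⟩
      · exfalso
        have hxi : x ∉ T i := fun h => absurd ((huniq x).2 j (by omega) i hi hxj h) (by omega)
        apply hxi
        rw [memT]
        refine ⟨fun a ha => ((memT j x).1 hxj).1 a (by omega), ?_⟩
        intro a ha hia
        by_contra! h
        exact fact2 i hi A hA x a ha hia h hx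

lemma tele {α : Type*} [DecidableEq α] (L : ℕ → Finset α) (hL : ∀ i, L (i+1) ⊆ L i) (f : α → ℝ) (k : ℕ) :
    ∑ B ∈ L 0, f B = ∑ B ∈ L k, f B + ∑ i ∈ range k, ∑ B ∈ L i \ L (i+1), f B := by
  induction k with
  | zero => simp
  | succ k ih =>
    rw [ih, sum_range_succ, ← sum_sdiff (hL k) (f := f)]
    ring

lemma sq_sum_range (v : ℕ → ℝ) (k : ℕ) :
    (∑ i ∈ range k, v i) ^ 2 = ∑ i ∈ range k, v i ^ 2 + 2 * ∑ i ∈ range k, ∑ j ∈ range i, v j * v i := by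
  induction k with
  | zero => simp
  | succ k ih =>
    rw [sum_range_succ, sum_range_succ, sum_range_succ, add_sq, ih, ← sum_mul]
    ring

lemma alg (γ η δ m r Q N p : ℝ) (hη : 0 ≤ η) (hδ : 3 * γ + η ≤ δ) (hm0 : 0 ≤ m) (hm : 1 ≤ γ * m)
    (hr0 : 0 ≤ r) (hr1 : r ≤ 1) (hp : p ≤ m ^ 2)
    (h1 : (1 - (1 + η) * r) * (m * (m - 1) / 2) ≤ 2 * γ * m ^ 2 + ((p - Q) / 2 - N)) :
    N + (Q - p * r) / 2 ≤ δ * m ^ 2 := by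
  have h2 : p * (1 - r) ≤ m ^ 2 * (1 - r) := mul_le_mul_of_nonneg_right hp (by linarith)
  have h3 : 1 * m ≤ γ * m * m := mul_le_mul_of_nonneg_right hm hm0
  have h4 : η * r * m ^ 2 ≤ η * 1 * m ^ 2 := by gcongr
  have h5 : 0 ≤ η * r * m := by positivity
  have h6 : 0 ≤ r * m := by positivity
  have h7 : (3 * γ + η) * m ^ 2 ≤ δ * m ^ 2 := mul_le_mul_of_nonneg_right hδ (by positivity)
  have h8 : 0 ≤ η * m ^ 2 := by positivity
  linarith

lemma counting {n k : ℕ} (hk : 1 ≤ k) (F : Finset (Finset (Fin n))) (γ η δ : ℝ) (hγ : 0 < γ) (hη : 0 ≤ η)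
    (hδ : 3 * γ + η ≤ δ) (hm : 1 ≤ γ * F.card)
    (V : ℕ → Finset (Finset (Fin n)))
    (hV : V = fun i => lev F (γ * F.card) i \ lev F (γ * F.card) (i+1))
    (hR : ((lev F (γ * F.card) k).card : ℝ) < γ * F.card)
    (hc : (1 - (1 + η) / k) * (F.card.choose 2 : ℝ) ≤ (compCount F : ℝ)) :
    (∀ i < k, ∀ j < i, ∑ B ∈ V i, (((V j).filter (fun A => ¬ A ⊂ B)).card : ℝ) ≤ δ * (F.card:ℝ) ^ 2) ∧
    (∀ i < k, (((V i).card : ℝ) - ((F.card : ℝ) - (lev F (γ * F.card) k).card) / k) ^ 2 ≤ 2 * δ * (F.card:ℝ) ^ 2) := by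
  classical
  set m : ℝ := (F.card : ℝ) with hmdef
  set L := lev F (γ * m) with hL
  have hLa : ∀ i, L (i+1) ⊆ L i := lev_anti F _
  have hL0 : L 0 = F := rfl
  set v : ℕ → ℝ := fun i => ((V i).card : ℝ) with hv
  set mis : ℕ → ℕ → ℝ := fun j i => ∑ B ∈ V i, (((V j).filter (fun A => ¬ A ⊂ B)).card : ℝ) with hmis
  set e : ℕ → ℕ → ℝ := fun j i => ∑ B ∈ V i, (((V j).filter (fun A => A ⊂ B)).card : ℝ) with he
  have hmis0 : ∀ j i, 0 ≤ mis j i := fun j i => sum_nonneg (fun _ _ => by positivity)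
  have hem : ∀ j i, e j i = v j * v i - mis j i := by
    intro j i
    rw [eq_sub_iff_add_eq, he, hmis]
    simp only
    rw [← sum_add_distrib]
    have : ∀ B ∈ V i, (((V j).filter (fun A => A ⊂ B)).card : ℝ) + (((V j).filter (fun A => ¬ A ⊂ B)).card : ℝ) = v j := by
      intro B _
      have := card_filter_add_card_filter_not (s := V j) (fun A => A ⊂ B)
      simp only [hv]
      exact_mod_cast this
    rw [sum_congr rfl this, sum_const, nsmul_eq_mul, mul_comm]
  have hvsum : ∑ i ∈ range k, v i = m - (L k).card := by
    have := tele L hLa (fun _ => (1:ℝ)) k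
    simp only [sum_const, nsmul_eq_mul, mul_one] at this
    have h2 : ∑ i ∈ range k, v i = ∑ x ∈ range k, ((L x \ L (x+1)).card : ℝ) := by
      simp only [hv, hV]
    rw [h2]
    rw [hL0] at this
    linarith
  set f : Finset (Fin n) → ℝ := fun B => ((F.filter (fun A => A ⊂ B)).card : ℝ) with hf
  have hcf : (compCount F : ℝ) = ∑ B ∈ F, f B := by
    have : compCount F = ∑ B ∈ F, (F.filter (fun A => A ⊂ B)).card := by
      unfold compCount crossComp
      simp only [card_filter, sum_product]
      exact sum_comm
    rw [this]; push_cast; rfl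
  have hfm : ∀ B, f B ≤ m := by
    intro B
    exact Nat.cast_le.2 (card_filter_le _ _)
  have hm0 : 0 ≤ m := by positivity
  have hmpos : 0 < m := by
    rcases hm0.lt_or_eq with h | h
    · exact h
    · rw [← h] at hm; linarith
  have hfV : ∀ i, ∀ B ∈ V i, f B ≤ γ * m + ∑ j ∈ range i, (((V j).filter (fun A => A ⊂ B)).card : ℝ) := by
    intro i B hB
    have h1 := tele L hLa (fun A => if A ⊂ B then (1:ℝ) else 0) i
    have e1 : ∀ S : Finset (Finset (Fin n)), ∑ A ∈ S, (if A ⊂ B then (1:ℝ) else 0) = ((S.filter (fun A => A ⊂ B)).card : ℝ) := by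
      intro S; rw [card_filter]; push_cast; rfl
    simp only [e1] at h1
    rw [hL0] at h1
    have h2 : f B = (((L i).filter (fun A => A ⊂ B)).card : ℝ) + ∑ j ∈ range i, (((V j).filter (fun A => A ⊂ B)).card : ℝ) := by
      simp only [hf, hV]; exact h1
    rw [h2]
    have h3 : (((L i).filter (fun A => A ⊂ B)).card : ℝ) < γ * m := by
      rw [hV] at hB
      simp only [mem_sdiff] at hB
      by_contra! hcon
      apply hB.2
      exact mem_filter.2 ⟨lev_sub _ _ _ hB.1, hcon⟩
    linarith
  have hup : (compCount F : ℝ) ≤ 2 * γ * m ^ 2 + ∑ i ∈ range k, ∑ j ∈ range i, e j i := by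
    have h1 := tele L hLa f k
    rw [hL0, ← hcf] at h1
    rw [h1]
    have h2 : ∑ B ∈ L k, f B ≤ γ * m ^ 2 := by
      calc _ ≤ (L k).card • m := sum_le_card_nsmul _ _ _ (fun B _ => hfm B)
        _ ≤ γ * m ^ 2 := by rw [nsmul_eq_mul]; nlinarith
    have h3 : ∑ i ∈ range k, ∑ B ∈ L i \ L (i+1), f B ≤ ∑ i ∈ range k, (v i * (γ * m) + ∑ j ∈ range i, e j i) := by
      apply sum_le_sum
      intro i _
      have : L i \ L (i+1) = V i := by rw [hV]
      rw [this]
      refine (sum_le_sum (hfV i)).trans ?_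
      rw [sum_add_distrib, sum_const, nsmul_eq_mul, sum_comm]
    rw [sum_add_distrib, ← sum_mul, hvsum] at h3
    have h4 : (0:ℝ) ≤ (L k).card := by positivity
    have h5 : 0 ≤ γ * m := by positivity
    nlinarith
  set P := ∑ i ∈ range k, ∑ j ∈ range i, v j * v i with hP
  set N := ∑ i ∈ range k, ∑ j ∈ range i, mis j i with hN
  have hE : ∑ i ∈ range k, ∑ j ∈ range i, e j i = P - N := by
    simp only [hem, sum_sub_distrib, hP, hN]
  set Q := ∑ i ∈ range k, v i ^ 2 with hQ
  set m' := m - ((L k).card : ℝ) with hm'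
  have hsq : m' ^ 2 = Q + 2 * P := by rw [← hvsum]; exact sq_sum_range v k
  have hkpos : (0:ℝ) < k := by exact_mod_cast hk
  have hvar : ∑ i ∈ range k, (v i - m' / k) ^ 2 = Q - m' ^ 2 / k := by
    have : ∀ i ∈ range k, (v i - m' / k) ^ 2 = v i ^ 2 - 2 * (m' / k) * v i + (m' / k) ^ 2 := by
      intro i _; ring
    rw [sum_congr rfl this, sum_add_distrib, sum_sub_distrib, ← mul_sum, hvsum, sum_const, card_range, nsmul_eq_mul]
    field_simp; ring
  have hchoose : (F.card.choose 2 : ℝ) = m * (m - 1) / 2 := by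
    rw [Nat.cast_choose_two]
  have hm'0 : 0 ≤ m' := by
    rw [← hvsum]; exact sum_nonneg (fun _ _ => by positivity)
  have hm'm : m' ≤ m := by
    have : (0:ℝ) ≤ (L k).card := by positivity
    rw [hm']; linarith
  have hmain : N + (Q - m' ^ 2 / k) / 2 ≤ δ * m ^ 2 := by
    rw [hchoose] at hc
    rw [hE] at hup
    have h1 := hc.trans hup
    have hP2 : P = (m' ^ 2 - Q) / 2 := by linarith
    rw [hP2] at h1
    have hr1 : 1 / (k:ℝ) ≤ 1 := by
      rw [div_le_one hkpos]; exact_mod_cast hk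
    have e1 : (1 + η) / k = (1 + η) * (1 / k) := by ring
    have e2 : m' ^ 2 / k = m' ^ 2 * (1 / k) := by ring
    rw [e1] at h1
    rw [e2]
    exact alg γ η δ m (1 / k) Q N (m' ^ 2) hη hδ hm0 hm (by positivity) hr1
      (pow_le_pow_left₀ hm'0 hm'm _) h1
  have hvar0 : 0 ≤ Q - m' ^ 2 / k := by
    rw [← hvar]; exact sum_nonneg (fun _ _ => sq_nonneg _)
  have hN0 : 0 ≤ N := sum_nonneg (fun _ _ => sum_nonneg (fun _ _ => hmis0 _ _))
  constructor
  · intro i hi j hj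
    have h1 : mis j i ≤ ∑ j ∈ range i, mis j i :=
      single_le_sum (f := fun j => mis j i) (fun _ _ => hmis0 _ _) (mem_range.2 hj)
    have h2 : ∑ j ∈ range i, mis j i ≤ N :=
      single_le_sum (f := fun i => ∑ j ∈ range i, mis j i)
        (fun _ _ => sum_nonneg (fun _ _ => hmis0 _ _)) (mem_range.2 hi)
    change mis j i ≤ _
    linarith
  · intro i hi
    have h1 : (v i - m' / k) ^ 2 ≤ ∑ i ∈ range k, (v i - m' / k) ^ 2 :=
      single_le_sum (f := fun i => (v i - m' / k) ^ 2) (fun _ _ => sq_nonneg _) (mem_range.2 hi)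
    rw [hvar] at h1
    change (v i - m' / k) ^ 2 ≤ _
    linarith

lemma main_aux {k l : ℕ} (hk : 2 ≤ k) (F : Finset (Finset (Fin (k * l)))) (V : ℕ → Finset (Finset (Fin (k * l))))
    (κ δ m : ℝ) (hm : m = F.card) (hmpos : 0 < m) (hVF : ∀ i, V i ⊆ F)
    (hdisj : ∀ i j, i < j → Disjoint (V i) (V j))
    (hκ0 : 0 < κ) (hκ : κ * (12 * k) ≤ 1) (hδ : δ * (200 * k ^ 3) ≤ κ) (hml : (1 - κ) * k * 2 ^ l ≤ m)
    (hv : ∀ i < k, (1 - κ) * m / k ≤ ((V i).card : ℝ))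
    (hmis : ∀ i < k, ∀ j < i, ∑ B ∈ V i, (((V j).filter (fun A => ¬ A ⊂ B)).card : ℝ) ≤ δ * m ^ 2) :
    ∃ 𝒯, IsTower (k * l) k 𝒯 ∧ ((F \ 𝒯).card : ℝ) ≤ 2 * κ * F.card := by
  classical
  have hkpos : (0:ℝ) < k := by exact_mod_cast (by omega : 0 < k)
  have hk2 : (2:ℝ) ≤ k := by exact_mod_cast hk
  have hκ1 : κ ≤ 1/24 := by nlinarith
  set D : ℕ → ℕ → Finset (Fin (k * l)) → ℝ := fun i j A =>
    if j < i then (((V j).filter (fun B => ¬ B ⊂ A)).card : ℝ)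
    else (((V j).filter (fun B => ¬ A ⊂ B)).card : ℝ) with hD
  have hDlt : ∀ i j A, j < i → D i j A = (((V j).filter (fun B => ¬ B ⊂ A)).card : ℝ) := by
    intro i j A hji
    exact if_pos hji
  have hDge : ∀ i j A, ¬ j < i → D i j A = (((V j).filter (fun B => ¬ A ⊂ B)).card : ℝ) := by
    intro i j A hji
    exact if_neg hji
  have hDsum : ∀ i < k, ∀ j < k, j ≠ i → ∑ A ∈ V i, D i j A ≤ δ * m ^ 2 := by
    intro i hi j hj hji
    by_cases h : j < i
    · rw [sum_congr rfl (fun A _ => hDlt i j A h)]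
      exact hmis i hi j h
    · rw [sum_congr rfl (fun A _ => hDge i j A h)]
      have h1 := hmis j hj i (by omega)
      refine le_trans (le_of_eq ?_) h1
      have : ∑ A ∈ V i, ((V j).filter (fun B => ¬ A ⊂ B)).card
        = ∑ B ∈ V j, ((V i).filter (fun A => ¬ A ⊂ B)).card := by
        simp only [card_filter]
        exact sum_comm
      exact_mod_cast this
  set V' : ℕ → Finset (Finset (Fin (k * l))) := fun i =>
    (V i).filter (fun A => ∀ j < k, j ≠ i → D i j A < 1/100 * (V j).card) with hV'
  have hD0 : ∀ i j A, 0 ≤ D i j A := by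
    intro i j A; simp only [hD]; split_ifs <;> positivity
  have hbad : ∀ i < k, ∀ j < k, j ≠ i →
      (((V i).filter (fun A => 1/100 * ((V j).card : ℝ) ≤ D i j A)).card : ℝ) ≤ 200 * k * δ * m := by
    intro i hi j hj hji
    set b := (V i).filter (fun A => 1/100 * ((V j).card : ℝ) ≤ D i j A) with hb
    have h1 : b.card • (1/100 * ((V j).card : ℝ)) ≤ ∑ A ∈ b, D i j A :=
      card_nsmul_le_sum _ _ _ (fun A hA => (mem_filter.1 hA).2)
    have h2 : ∑ A ∈ b, D i j A ≤ ∑ A ∈ V i, D i j A :=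
      sum_le_sum_of_subset_of_nonneg (filter_subset _ _) (fun A _ _ => hD0 i j A)
    have h3 := h1.trans (h2.trans (hDsum i hi j hj hji))
    rw [nsmul_eq_mul] at h3
    have h4 : m / (2 * k) ≤ ((V j).card : ℝ) := by
      refine le_trans ?_ (hv j hj)
      rw [div_le_div_iff₀ (by positivity) hkpos]
      nlinarith [mul_pos hmpos hkpos]
    have hb0 : (0:ℝ) ≤ (b.card : ℝ) := Nat.cast_nonneg _
    generalize (b.card : ℝ) = β at h3 hb0 ⊢
    have h5 : β * (1/100 * (m / (2 * k))) ≤ δ * m ^ 2 :=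
      (mul_le_mul_of_nonneg_left (mul_le_mul_of_nonneg_left h4 (by norm_num)) hb0).trans h3
    have h6 : β * (1/100 * (m / (2 * k))) = β * m / (200 * k) := by
      rw [show (200:ℝ) * k = 100 * (2 * k) by ring, ← div_div]
      ring
    have hk200 : (0:ℝ) < 200 * k := by linarith
    rw [h6, div_le_iff₀ hk200] at h5
    have h7 : β * m ≤ (200 * k * δ * m) * m := by linarith
    exact le_of_mul_le_mul_right h7 hmpos
  have hδ0 : 0 ≤ δ := by
    have h0 := hmis 1 (by omega) 0 (by omega)
    have h1 : (0:ℝ) ≤ ∑ B ∈ V 1, (((V 0).filter (fun A => ¬ A ⊂ B)).card : ℝ) :=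
      sum_nonneg (fun _ _ => by positivity)
    by_contra! hneg
    have : 0 < m ^ 2 := by positivity
    nlinarith
  have hdiff : ∀ i < k, ((V i).card : ℝ) - (V' i).card ≤ κ * m / k := by
    intro i hi
    have h1 : V i \ V' i ⊆ ((range k).filter (fun j => j ≠ i)).biUnion
        (fun j => (V i).filter (fun A => 1/100 * ((V j).card : ℝ) ≤ D i j A)) := by
      intro A hA
      simp only [hV', mem_sdiff, mem_filter, not_and, not_forall, not_lt] at hA
      obtain ⟨hA1, hA2⟩ := hA
      obtain ⟨j, hj, hji, hj2⟩ := hA2 hA1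
      simp only [mem_biUnion, mem_filter, mem_range]
      exact ⟨j, ⟨hj, hji⟩, hA1, hj2⟩
    have h2 := (card_le_card h1).trans card_biUnion_le
    have h3 : ((V i \ V' i).card : ℝ) ≤ ∑ j ∈ (range k).filter (fun j => j ≠ i),
        (((V i).filter (fun A => 1/100 * ((V j).card : ℝ) ≤ D i j A)).card : ℝ) := by
      exact_mod_cast h2
    have h4 : ∑ j ∈ (range k).filter (fun j => j ≠ i),
        (((V i).filter (fun A => 1/100 * ((V j).card : ℝ) ≤ D i j A)).card : ℝ)
        ≤ ((range k).filter (fun j => j ≠ i)).card • (200 * k * δ * m) := by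
      apply sum_le_card_nsmul
      intro j hj
      rw [mem_filter, mem_range] at hj
      exact hbad i hi j hj.1 hj.2
    have h5 : (((range k).filter (fun j => j ≠ i)).card : ℝ) ≤ k := by
      have := card_filter_le (range k) (fun j => j ≠ i)
      rw [card_range] at this
      exact_mod_cast this
    rw [nsmul_eq_mul] at h4
    have h6 : (((range k).filter (fun j => j ≠ i)).card : ℝ) * (200 * k * δ * m) ≤ k * (200 * k * δ * m) := by
      gcongr
    have h7 : (k:ℝ) * (200 * k * δ * m) ≤ κ * m / k := by
      rw [le_div_iff₀ hkpos]
      have := mul_le_mul_of_nonneg_right hδ hmpos.le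
      linarith
    have h8 : ((V i \ V' i).card : ℝ) = (V i).card - (V' i).card := by
      rw [card_sdiff_of_subset (filter_subset _ _), Nat.cast_sub (card_le_card (filter_subset _ _))]
    linarith
  have hV'low : ∀ i < k, (1 - 2 * κ) * m / k ≤ ((V' i).card : ℝ) := by
    intro i hi
    have h1 := hv i hi
    have h2 := hdiff i hi
    have : (1 - 2 * κ) * m / k = (1 - κ) * m / k - κ * m / k := by ring
    linarith
  obtain ⟨𝒯, hT, hVT⟩ := cubes V V' (3 * κ) (by linarith) hk (by linarith) (fun i _ => filter_subset _ _)
    (by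
      intro i hi
      have h1 := hV'low i hi
      have h2 := hdiff i hi
      have : κ * m / k ≤ (1 - 2 * κ) * m / k := by
        gcongr; linarith
      linarith)
    (by
      intro i hi A hA j hj
      have := (mem_filter.1 hA).2 j (by omega) (by omega)
      rwa [hDlt i j A hj] at this)
    (by
      intro i hi A hA j hj hij
      have := (mem_filter.1 hA).2 j (by omega) (by omega)
      rwa [hDge i j A (by omega)] at this)
    (by
      intro i hi
      refine le_trans ?_ (hV'low i hi)
      rw [le_div_iff₀ hkpos]
      have h1 : (1 - 2 * κ) * ((1 - κ) * k * 2 ^ l) ≤ (1 - 2 * κ) * m :=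
        mul_le_mul_of_nonneg_left hml (by linarith)
      have h2 : (0:ℝ) ≤ κ ^ 2 * (k * 2 ^ l) := by positivity
      nlinarith)
  refine ⟨𝒯, hT, ?_⟩
  have hU : ((range k).biUnion V').card = ∑ i ∈ range k, (V' i).card := by
    apply card_biUnion
    intro a _ b _ hab
    change Disjoint (V' a) (V' b)
    have : Disjoint (V a) (V b) := by
      rcases lt_or_gt_of_ne hab with h | h
      · exact hdisj a b h
      · exact (hdisj b a h).symm
    exact this.mono (filter_subset _ _) (filter_subset _ _)
  have hUF : (range k).biUnion V' ⊆ F := by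
    rw [biUnion_subset]
    intro i _
    exact (filter_subset _ _).trans (hVF i)
  have h1 : F \ 𝒯 ⊆ F \ (range k).biUnion V' := by
    apply sdiff_subset_sdiff subset_rfl
    rw [biUnion_subset]
    intro i hi
    exact hVT i (mem_range.1 hi)
  have h2 : ((F \ 𝒯).card : ℝ) ≤ F.card - ((range k).biUnion V').card := by
    rw [← Nat.cast_sub (card_le_card hUF), ← card_sdiff_of_subset hUF]
    exact_mod_cast card_le_card h1
  have h3 : (1 - 2 * κ) * m ≤ (((range k).biUnion V').card : ℝ) := by
    rw [hU]
    push_cast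
    have : (range k).card • ((1 - 2 * κ) * m / k) ≤ ∑ i ∈ range k, ((V' i).card : ℝ) :=
      card_nsmul_le_sum _ _ _ (fun i hi => hV'low i (mem_range.1 hi))
    rw [card_range, nsmul_eq_mul, mul_div_cancel₀ _ hkpos.ne'] at this
    exact this
  rw [← hm] at h2 ⊢
  linarith

theorem stmt5 (ε : ℝ) (hε : 0 < ε) (k : ℕ) (hk : 2 ≤ k) :
    ∃ η : ℝ, 0 < η ∧ ∃ n₀ : ℕ, ∀ n ≥ n₀, k ∣ n →
      ∀ ℱ : Finset (Finset (Fin n)),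
        (1 - η) * k * 2 ^ (n / k) ≤ (ℱ.card : ℝ) →
        (1 - (1 + η) / k) * (ℱ.card.choose 2 : ℝ) ≤ (compCount ℱ : ℝ) →
        ∃ 𝒯 : Finset (Finset (Fin n)), IsTower n k 𝒯 ∧
          ((ℱ \ 𝒯).card : ℝ) ≤ ε * ℱ.card := by
  have hk2 : (2:ℝ) ≤ k := by exact_mod_cast hk
  have hkpos : (0:ℝ) < k := by linarith
  set κ : ℝ := min ε 1 / (12 * k) with hκdef
  have hmin : 0 < min ε 1 := lt_min hε one_pos
  have hκ0 : 0 < κ := by positivity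
  have hκk : κ * (12 * k) = min ε 1 := by
    rw [hκdef]; field_simp
  have hκ12 : κ * (12 * k) ≤ 1 := by rw [hκk]; exact min_le_right _ _
  have hκε : 2 * κ ≤ ε := by
    have : κ * (12 * k) ≤ ε := by rw [hκk]; exact min_le_left _ _
    nlinarith
  have hκ1 : κ ≤ 1/24 := by nlinarith
  set δ : ℝ := κ ^ 2 / (800 * k ^ 3) with hδdef
  have hδ0 : 0 < δ := by positivity
  have hδk : δ * (800 * k ^ 3) = κ ^ 2 := by rw [hδdef]; field_simp
  have hδ1 : δ * (200 * k ^ 3) ≤ κ := by nlinarith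
  have hk3 : (1:ℝ) ≤ k ^ 3 := one_le_pow₀ (by linarith)
  have hδκ : δ ≤ κ := by nlinarith
  have hk32 : (k:ℝ) ^ 2 ≤ k ^ 3 := pow_le_pow_right₀ (by linarith) (by norm_num)
  have hδ2 : 2 * δ ≤ (κ / (2 * k)) ^ 2 := by
    rw [div_pow, le_div_iff₀ (by positivity), mul_pow]
    nlinarith
  obtain ⟨l₀, hl₀⟩ := lev_small (δ / 5) (by positivity) k (by omega)
  obtain ⟨l₁, hl₁⟩ := pow_unbounded_of_one_lt (1 / (δ / 5)) (one_lt_two : (1:ℝ) < 2)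
  refine ⟨δ / 5, by positivity, k * max l₀ l₁, ?_⟩
  rintro n hn ⟨l, rfl⟩ F hF hc
  rw [Nat.mul_div_cancel_left _ (by omega)] at hF
  have hl : max l₀ l₁ ≤ l := Nat.le_of_mul_le_mul_left hn (by omega)
  have hl0 : l₀ ≤ l := (le_max_left _ _).trans hl
  have hl1 : l₁ ≤ l := (le_max_right _ _).trans hl
  have hpow : (0:ℝ) < 2 ^ l := by positivity
  have hF2 : (2:ℝ) ^ l ≤ F.card := by
    refine le_trans ?_ hF
    have : 1 ≤ (1 - δ / 5) * k := by nlinarith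
    nlinarith
  have hmpos : (0:ℝ) < F.card := lt_of_lt_of_le hpow hF2
  have hm1 : 1 ≤ δ / 5 * F.card := by
    have h1 : 1 / (δ / 5) < 2 ^ l := hl₁.trans_le (pow_le_pow_right₀ (by norm_num) hl1)
    rw [div_lt_iff₀ (by positivity)] at h1
    nlinarith
  have hR := hl₀ l hl0 F hF2
  obtain ⟨hA, hB⟩ := counting (by omega) F (δ / 5) (δ / 5) δ (by positivity) (by positivity)
    (by linarith) hm1 _ rfl hR hc
  have hanti : Antitone (lev F (δ / 5 * F.card)) := antitone_nat_of_succ_le (lev_anti F _)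
  obtain ⟨𝒯, hT, hT2⟩ := main_aux hk F
    (fun i => lev F (δ / 5 * F.card) i \ lev F (δ / 5 * F.card) (i+1)) κ δ F.card rfl hmpos
    (fun i => sdiff_subset.trans (lev_sub _ _ _))
    (by
      intro i j hij
      rw [disjoint_left]
      intro A hA hA'
      rw [mem_sdiff] at hA hA'
      exact hA.2 (hanti hij hA'.1))
    hκ0 hκ12 hδ1
    (by
      refine le_trans ?_ hF
      gcongr
      linarith)
    (by
      intro i hi
      have h1 := hB i hi
      set R : ℝ := ((lev F (δ / 5 * F.card) k).card : ℝ)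
      set m : ℝ := (F.card : ℝ)
      have h2 : 2 * δ * m ^ 2 ≤ (κ / (2 * k) * m) ^ 2 := by
        rw [mul_pow]; gcongr
      have h3 := abs_le_of_sq_le_sq' (h1.trans h2) (by positivity)
      have h4 : (1 - κ) * m / k ≤ (m - R) / k - κ / (2 * k) * m := by
        have : (m - R) / k - κ / (2 * k) * m = ((m - R) - κ / 2 * m) / k := by field_simp
        rw [this]
        gcongr
        nlinarith
      linarith [h3.1])
    hA
  refine ⟨𝒯, hT, hT2.trans ?_⟩
  gcongr
end
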